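/- arXiv:1604.04798 — 2 statements merged into one kernel-verified Lean document; each statement's English description precedes it below -/
import Mathlib

section
/- Given positive numbers T, R, λ, α with 0 < α ≤ 1 and λ < R, let β ∈ [0,1] and γ ∈ (0,α). Then there exist constants C ∈ (0, 1/(4R)) and K = K(R,λ,α,T) > 0 such that for all v, v̄ ∈ B(R,λ,α) and all x, y, ξ ∈ ℝ, 0 ≤ τ < t ≤ T: (i) |φ_{[v]}(x,t,ξ,τ) − φ_{[v̄]}(x,t,ξ,τ)| ≤ K ‖v − v̄‖_{α,α/2} (t−τ)^{−(3−α)/2} exp(−C(x−ξ)²/(t−τ)); and (ii) |(φ_{[v]}(x,t,ξ,τ) − φ_{[v̄]}(x,t,ξ,τ)) − (φ_{[v]}(y,t,ξ,τ) − φ_{[v̄]}(y,t,ξ,τ))| ≤ K ‖v − v̄‖_{α,α/2}^β |x−y|^{γ(1−β)} (t−τ)^{−(3−(α−γ(1−β)))/2} (exp(−C(x−ξ)²/(t−τ)) + exp(−C(y−ξ)²/(t−τ))). -/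
/-!
The kernels `t₊ ^ (s - 1) / Γ(s)` times the heat kernel form a convolution semigroup in `s`:
Gaussians convolve in space, Beta densities integrate to one in time. Hence a space-time kernel
`κ` dominated by `M` times the member of index `α / 2` has its `m`-th iterate dominated by
`M ^ (m + 1)` times the member of index `(m + 1) α / 2`. Telescoping costs a further factor
`(m + 1) d` for the difference of the iterates of two kernels at relative distance `d`, and a
modulus of continuity of `κ` in its first variable passes to every iterate. The factor `1 / Γ`
makes the Levi series converge to a multiple of its first term.

The kernel `(LZ)₁` satisfies these hypotheses: in the variable `u = (x - ξ) / √(t - τ)` it is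
`(t - τ) ^ ((α - 3) / 2)` times a combination of derivatives of the unit heat kernel, whose weights
grow at most quadratically in `u` because `a` is Hölder continuous.

Estimate (ii) is the geometric mean, with weights `β` and `1 - β`, of estimate (i) at `x` and `y`
and of the Hölder bounds in `x` for the two functions `φ`.
-/

open MeasureTheory Filter

noncomputable section

/-- The parametrix: fundamental solution of the frozen-coefficient heat equation,
`Z(x,t,ξ,τ) = (4π a(ξ,τ)(t-τ))^{-1/2} exp(-(x-ξ)²/(4 a(ξ,τ)(t-τ)))`. -/
def Zf (a : ℝ → ℝ → ℝ) (x t ξ τ : ℝ) : ℝ :=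
  (Real.sqrt (4 * Real.pi * a ξ τ * (t - τ)))⁻¹ *
    Real.exp (-(x - ξ) ^ 2 / (4 * a ξ τ * (t - τ)))

/-- `(LZ)₁ = (a(ξ,τ) - a(x,t)) ∂ₓₓZ + b ∂ₓZ + c Z`. -/
def LZ1 (a b c : ℝ → ℝ → ℝ) (x t ξ τ : ℝ) : ℝ :=
  (a ξ τ - a x t) * iteratedDeriv 2 (fun y => Zf a y t ξ τ) x +
    b x t * deriv (fun y => Zf a y t ξ τ) x + c x t * Zf a x t ξ τ

/-- `LZm a b c m = (LZ)_{m+1}`, defined recursively by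
`(LZ)_{m+1}(x,t,ξ,τ) = ∫_τ^t ∫_ℝ (LZ)₁(x,t,y,σ)(LZ)_m(y,σ,ξ,τ) dy dσ`. -/
def LZm (a b c : ℝ → ℝ → ℝ) : ℕ → ℝ → ℝ → ℝ → ℝ → ℝ
  | 0 => LZ1 a b c
  | m + 1 => fun x t ξ τ => ∫ σ in τ..t, ∫ y : ℝ, LZ1 a b c x t y σ * LZm a b c m y σ ξ τ

/-- `φ(x,t,ξ,τ) = Σ_{m=1}^∞ (-1)^m (LZ)_m(x,t,ξ,τ)`. -/
def phiP (a b c : ℝ → ℝ → ℝ) (x t ξ τ : ℝ) : ℝ :=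
  ∑' m : ℕ, (-1 : ℝ) ^ (m + 1) * LZm a b c m x t ξ τ

/-- The parametrix-constructed fundamental solution
`Γ = Z + ∫_τ^t ∫_ℝ Z(x,t,y,σ) φ(y,σ,ξ,τ) dy dσ`. -/
def GammaP (a b c : ℝ → ℝ → ℝ) (x t ξ τ : ℝ) : ℝ :=
  Zf a x t ξ τ + ∫ σ in τ..t, ∫ y : ℝ, Zf a x t y σ * phiP a b c y σ ξ τ

/-- The sup norm of `u` on `ℝ × [0,T]`. -/
def supN (T : ℝ) (u : ℝ → ℝ → ℝ) : ℝ :=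
  sSup {r : ℝ | ∃ x t, 0 ≤ t ∧ t ≤ T ∧ r = |u x t|}

/-- The Hölder seminorm of exponents `(α, α/2)` of `u` on `ℝ × [0,T]`. -/
def holS (T α : ℝ) (u : ℝ → ℝ → ℝ) : ℝ :=
  sSup {r : ℝ | ∃ x t x' t', 0 ≤ t ∧ t ≤ T ∧ 0 ≤ t' ∧ t' ≤ T ∧ ¬(x = x' ∧ t = t') ∧
    r = |u x t - u x' t'| / (|x - x'| ^ α + |t - t'| ^ (α / 2))}

/-- The norm `‖u‖_{α,α/2}` on `ℝ × [0,T]`. -/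
def holN (T α : ℝ) (u : ℝ → ℝ → ℝ) : ℝ := supN T u + holS T α u

/-- `u` lies in `C^{α,α/2}(ℝ×[0,T])` with sup bound `C1` and Hölder constant `C2`. -/
def inC (T α C1 C2 : ℝ) (u : ℝ → ℝ → ℝ) : Prop :=
  (∀ x t, 0 ≤ t → t ≤ T → |u x t| ≤ C1) ∧
  ∀ x t x' t', 0 ≤ t → t ≤ T → 0 ≤ t' → t' ≤ T →
    |u x t - u x' t'| ≤ C2 * (|x - x'| ^ α + |t - t'| ^ (α / 2))

/-- `v = (a,b,c) ∈ B(R,λ,α)`: `a ≥ λ` and the `C^{α,α/2}` norms of `a`, `b`, `c`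
are `< R`. -/
def memB (T R lam α : ℝ) (a b c : ℝ → ℝ → ℝ) : Prop :=
  (∀ x t, 0 ≤ t → t ≤ T → lam ≤ a x t) ∧
  (∃ C1 C2 : ℝ, 0 ≤ C1 ∧ 0 ≤ C2 ∧ C1 + C2 < R ∧ inC T α C1 C2 a) ∧
  (∃ C1 C2 : ℝ, 0 ≤ C1 ∧ 0 ≤ C2 ∧ C1 + C2 < R ∧ inC T α C1 C2 b) ∧
  (∃ C1 C2 : ℝ, 0 ≤ C1 ∧ 0 ≤ C2 ∧ C1 + C2 < R ∧ inC T α C1 C2 c)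

/-- The distance `‖v - v̄‖_{α,α/2}` between two coefficient triples. -/
def vDist (T α : ℝ) (a b c abar bbar cbar : ℝ → ℝ → ℝ) : ℝ :=
  max (holN T α (fun x t => a x t - abar x t))
    (max (holN T α (fun x t => b x t - bbar x t))
      (holN T α (fun x t => c x t - cbar x t)))

end

noncomputable section

section ConvolutionSemigroup

open Real ProbabilityTheory

variable {C s r t τ : ℝ}

lemma integral_betaPDFReal (hs : 0 < s) (hr : 0 < r) : ∫ u, betaPDFReal s r u = 1 := by
  have nonneg : 0 ≤ᵐ[volume] betaPDFReal s r := Eventually.of_forall fun u => by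
    by_cases hu : 0 < u ∧ u < 1
    · exact (betaPDFReal_pos hu.1 hu.2 hs hr).le
    · simp [betaPDFReal, hu]
  rw [integral_eq_lintegral_of_nonneg_ae nonneg
    (stronglyMeasurable_betaPDFReal s r).aestronglyMeasurable]
  exact (congrArg ENNReal.toReal (lintegral_betaPDF_eq_one hs hr)).trans ENNReal.toReal_one

/-- The Riemann–Liouville kernel `t₊ ^ (s - 1) / Γ(s)` of fractional integration of order `s`. -/
def rlKernel (s t : ℝ) : ℝ :=
  if 0 < t then t ^ (s - 1) / Gamma s else 0

lemma rlKernel_of_pos (ht : 0 < t) : rlKernel s t = t ^ (s - 1) / Gamma s := if_pos ht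

lemma rlKernel_of_nonpos (ht : t ≤ 0) : rlKernel s t = 0 := if_neg ht.not_gt

lemma rlKernel_nonneg (hs : 0 < s) (t : ℝ) : 0 ≤ rlKernel s t := by
  have := Gamma_pos_of_pos hs
  unfold rlKernel
  split_ifs <;> positivity

lemma measurable_rlKernel (s : ℝ) : Measurable (rlKernel s) :=
  Measurable.ite measurableSet_Ioi (by fun_prop) measurable_const

lemma rlKernel_mul_rlKernel_eq_zero {σ : ℝ} (hσ : ¬(τ < σ ∧ σ < t)) :
    rlKernel s (t - σ) * rlKernel r (σ - τ) = 0 := by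
  rcases not_and_or.mp hσ with h | h
  · rw [rlKernel_of_nonpos (t := σ - τ) (by linarith), mul_zero]
  · rw [rlKernel_of_nonpos (t := t - σ) (by linarith), zero_mul]

lemma rlKernel_mul_rlKernel (hs : 0 < s) (hr : 0 < r) (h : τ < t) (σ : ℝ) :
    rlKernel s (t - σ) * rlKernel r (σ - τ) =
      rlKernel (s + r) (t - τ) * (t - τ)⁻¹ * betaPDFReal r s ((σ - τ) / (t - τ)) := by
  have hδ : 0 < t - τ := sub_pos.mpr h
  have mem_iff : (0 < (σ - τ) / (t - τ) ∧ (σ - τ) / (t - τ) < 1) ↔ (τ < σ ∧ σ < t) := by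
    rw [div_pos_iff_of_pos_right hδ, div_lt_one hδ, sub_pos, sub_lt_sub_iff_right]
  by_cases hσ : τ < σ ∧ σ < t
  · have hθ : 0 < σ - τ := sub_pos.mpr hσ.1
    have hρ : 0 < t - σ := sub_pos.mpr hσ.2
    have one_sub : 1 - (σ - τ) / (t - τ) = (t - σ) / (t - τ) := by field_simp; ring
    have hΓs := (Gamma_pos_of_pos hs).ne'
    have hΓr := (Gamma_pos_of_pos hr).ne'
    have hΓsr := (Gamma_pos_of_pos (add_pos hr hs)).ne'
    have exponents : (t - τ) ^ (r + s - 1) = (t - τ) * ((t - τ) ^ (r - 1) * (t - τ) ^ (s - 1)) := by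
      rw [mul_comm, ← rpow_add hδ, ← rpow_add_one hδ.ne']
      congr 1
      ring
    rw [rlKernel_of_pos hρ, rlKernel_of_pos hθ, rlKernel_of_pos hδ, betaPDFReal,
      if_pos (mem_iff.mpr hσ), beta, one_sub, div_rpow hθ.le hδ.le, div_rpow hρ.le hδ.le,
      add_comm s r, exponents]
    field_simp
  · rw [rlKernel_mul_rlKernel_eq_zero hσ, betaPDFReal, if_neg (mt mem_iff.mp hσ), mul_zero]

lemma integrable_rlKernel_mul (hs : 0 < s) (hr : 0 < r) (t τ : ℝ) :
    Integrable fun σ => rlKernel s (t - σ) * rlKernel r (σ - τ) := by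
  rcases le_or_gt t τ with h | h
  · refine (integrable_zero ℝ ℝ volume).congr (Eventually.of_forall fun σ => ?_)
    exact (rlKernel_mul_rlKernel_eq_zero fun hσ => by linarith).symm
  · have integrable_beta : Integrable (betaPDFReal r s) :=
      .of_integral_ne_zero (by rw [integral_betaPDFReal hr hs]; exact one_ne_zero)
    simp only [rlKernel_mul_rlKernel hs hr h]
    exact ((integrable_beta.comp_div (sub_pos.mpr h).ne').comp_sub_right τ).const_mul _

lemma integral_rlKernel_mul (hs : 0 < s) (hr : 0 < r) (t τ : ℝ) :
    ∫ σ, rlKernel s (t - σ) * rlKernel r (σ - τ) = rlKernel (s + r) (t - τ) := by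
  rcases le_or_gt t τ with h | h
  · rw [rlKernel_of_nonpos (sub_nonpos.mpr h)]
    exact integral_eq_zero_of_ae (Eventually.of_forall fun σ =>
      rlKernel_mul_rlKernel_eq_zero fun hσ => by linarith)
  · have hδ : 0 < t - τ := sub_pos.mpr h
    simp only [rlKernel_mul_rlKernel hs hr h]
    rw [integral_const_mul, integral_sub_right_eq_self fun σ => betaPDFReal r s (σ / (t - τ)),
      Measure.integral_comp_div, integral_betaPDFReal hr hs, abs_of_pos hδ, smul_eq_mul]
    field_simp

/-- The fundamental solution of `4C ∂ₜu = ∂ₓₓu`. -/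
def heatKernel (C t x : ℝ) : ℝ :=
  √(C / (π * t)) * exp (-C * x ^ 2 / t)

lemma heatKernel_nonneg (C t x : ℝ) : 0 ≤ heatKernel C t x := by
  unfold heatKernel
  positivity

lemma measurable_heatKernel (C : ℝ) : Measurable fun p : ℝ × ℝ => heatKernel C p.1 p.2 := by
  unfold heatKernel
  fun_prop

lemma integral_heatKernel (hC : 0 < C) (ht : 0 < t) : ∫ x, heatKernel C t x = 1 := by
  have gaussian : ∀ x : ℝ, exp (-C * x ^ 2 / t) = exp (-(C / t) * x ^ 2) := fun x => by
    congr 1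
    ring
  simp only [heatKernel, gaussian]
  rw [integral_const_mul, integral_gaussian, ← sqrt_mul (by positivity), sqrt_eq_one]
  field_simp

lemma integrable_heatKernel (hC : 0 < C) (ht : 0 < t) : Integrable (heatKernel C t) :=
  .of_integral_ne_zero (by rw [integral_heatKernel hC ht]; exact one_ne_zero)

lemma heatKernel_mul_heatKernel {ρ θ : ℝ} (hC : 0 < C) (hρ : 0 < ρ) (hθ : 0 < θ) (x y ξ : ℝ) :
    heatKernel C ρ (x - y) * heatKernel C θ (y - ξ) =
      heatKernel C (ρ + θ) (x - ξ) *
        heatKernel C (ρ * θ / (ρ + θ)) (y - (θ * x + ρ * ξ) / (ρ + θ)) := by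
  have completed_square : exp (-C * (x - y) ^ 2 / ρ) * exp (-C * (y - ξ) ^ 2 / θ) =
      exp (-C * (x - ξ) ^ 2 / (ρ + θ)) *
        exp (-C * (y - (θ * x + ρ * ξ) / (ρ + θ)) ^ 2 / (ρ * θ / (ρ + θ))) := by
    rw [← exp_add, ← exp_add]
    congr 1
    field_simp
    ring
  have normalization : √(C / (π * ρ)) * √(C / (π * θ)) =
      √(C / (π * (ρ + θ))) * √(C / (π * (ρ * θ / (ρ + θ)))) := by
    rw [← sqrt_mul (by positivity), ← sqrt_mul (by positivity)]
    congr 1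
    field_simp
  simp only [heatKernel]
  rw [mul_mul_mul_comm, completed_square, normalization, mul_mul_mul_comm]

lemma integrable_heatKernel_mul {ρ θ : ℝ} (hC : 0 < C) (hρ : 0 < ρ) (hθ : 0 < θ) (x ξ : ℝ) :
    Integrable fun y => heatKernel C ρ (x - y) * heatKernel C θ (y - ξ) := by
  simp only [heatKernel_mul_heatKernel hC hρ hθ]
  exact ((integrable_heatKernel hC (by positivity)).comp_sub_right _).const_mul _

lemma integral_heatKernel_mul {ρ θ : ℝ} (hC : 0 < C) (hρ : 0 < ρ) (hθ : 0 < θ) (x ξ : ℝ) :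
    ∫ y, heatKernel C ρ (x - y) * heatKernel C θ (y - ξ) = heatKernel C (ρ + θ) (x - ξ) := by
  simp only [heatKernel_mul_heatKernel hC hρ hθ]
  rw [integral_const_mul, integral_sub_right_eq_self (heatKernel C (ρ * θ / (ρ + θ))),
    integral_heatKernel hC (by positivity), mul_one]

/-- The kernel of `(∂ₜ - ∂ₓₓ / (4C))⁻ˢ`, at the point `p = (t, x)`, time coming first. -/
def spaceTimeKernel (C s : ℝ) (p : ℝ × ℝ) : ℝ :=
  rlKernel s p.1 * heatKernel C p.1 p.2

lemma spaceTimeKernel_nonneg (hs : 0 < s) (p : ℝ × ℝ) : 0 ≤ spaceTimeKernel C s p :=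
  mul_nonneg (rlKernel_nonneg hs _) (heatKernel_nonneg _ _ _)

lemma measurable_spaceTimeKernel (C s : ℝ) : Measurable (spaceTimeKernel C s) :=
  ((measurable_rlKernel s).comp measurable_fst).mul (measurable_heatKernel C)

lemma spaceTimeKernel_of_pos (ht : 0 < t) (x : ℝ) :
    spaceTimeKernel C s (t, x) =
      √(C / π) / Gamma s * (t ^ (s - 3 / 2) * exp (-C * x ^ 2 / t)) := by
  have exponents : t ^ (s - 3 / 2) * √t = t ^ (s - 1) := by
    rw [sqrt_eq_rpow, ← rpow_add ht]
    congr 1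
    ring
  simp only [spaceTimeKernel, rlKernel_of_pos ht, heatKernel]
  rw [← exponents, ← div_div, sqrt_div' _ ht.le]
  field_simp

lemma spaceTimeKernel_mul_spaceTimeKernel (t σ τ x y ξ : ℝ) :
    spaceTimeKernel C s (t - σ, x - y) * spaceTimeKernel C r (σ - τ, y - ξ) =
      rlKernel s (t - σ) * rlKernel r (σ - τ) *
        (heatKernel C (t - σ) (x - y) * heatKernel C (σ - τ) (y - ξ)) :=
  mul_mul_mul_comm _ _ _ _

lemma integrable_spaceTimeKernel_slice (hC : 0 < C) (t x τ ξ σ : ℝ) :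
    Integrable fun y =>
      spaceTimeKernel C s (t - σ, x - y) * spaceTimeKernel C r (σ - τ, y - ξ) := by
  simp only [spaceTimeKernel_mul_spaceTimeKernel]
  by_cases hσ : τ < σ ∧ σ < t
  · exact (integrable_heatKernel_mul hC (sub_pos.mpr hσ.2) (sub_pos.mpr hσ.1) x ξ).const_mul _
  · simp only [rlKernel_mul_rlKernel_eq_zero hσ, zero_mul]
    exact integrable_zero _ _ _

lemma integral_spaceTimeKernel_slice (hC : 0 < C) (t x τ ξ σ : ℝ) :
    ∫ y, spaceTimeKernel C s (t - σ, x - y) * spaceTimeKernel C r (σ - τ, y - ξ) =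
      rlKernel s (t - σ) * rlKernel r (σ - τ) * heatKernel C (t - τ) (x - ξ) := by
  simp only [spaceTimeKernel_mul_spaceTimeKernel]
  by_cases hσ : τ < σ ∧ σ < t
  · rw [integral_const_mul,
      integral_heatKernel_mul hC (sub_pos.mpr hσ.2) (sub_pos.mpr hσ.1), sub_add_sub_cancel]
  · simp only [rlKernel_mul_rlKernel_eq_zero hσ, zero_mul, integral_zero]

lemma integrable_spaceTimeKernel_mul (hC : 0 < C) (hs : 0 < s) (hr : 0 < r) (X Ξ : ℝ × ℝ) :
    Integrable fun P => spaceTimeKernel C s (X - P) * spaceTimeKernel C r (P - Ξ) := by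
  have measurable : Measurable fun P =>
      spaceTimeKernel C s (X - P) * spaceTimeKernel C r (P - Ξ) :=
    ((measurable_spaceTimeKernel C s).comp (measurable_const.sub measurable_id)).mul
      ((measurable_spaceTimeKernel C r).comp (measurable_id.sub measurable_const))
  rw [Measure.volume_eq_prod, integrable_prod_iff measurable.aestronglyMeasurable]
  refine ⟨Eventually.of_forall fun σ => integrable_spaceTimeKernel_slice hC _ _ _ _ σ, ?_⟩
  simp only [Real.norm_of_nonneg
    (mul_nonneg (spaceTimeKernel_nonneg hs _) (spaceTimeKernel_nonneg hr _))]
  exact ((integrable_rlKernel_mul hs hr X.1 Ξ.1).mul_const _).congr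
    (Eventually.of_forall fun σ => (integral_spaceTimeKernel_slice hC _ _ _ _ σ).symm)

lemma integral_spaceTimeKernel_mul (hC : 0 < C) (hs : 0 < s) (hr : 0 < r) (X Ξ : ℝ × ℝ) :
    ∫ P, spaceTimeKernel C s (X - P) * spaceTimeKernel C r (P - Ξ) =
      spaceTimeKernel C (s + r) (X - Ξ) := by
  have integrable := integrable_spaceTimeKernel_mul hC hs hr X Ξ
  rw [Measure.volume_eq_prod] at integrable ⊢
  calc _ = ∫ σ, rlKernel s (X.1 - σ) * rlKernel r (σ - Ξ.1) *
        heatKernel C (X.1 - Ξ.1) (X.2 - Ξ.2) := by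
        rw [integral_prod _ integrable]
        exact integral_congr_ae (Eventually.of_forall fun σ =>
          integral_spaceTimeKernel_slice hC _ _ _ _ σ)
    _ = spaceTimeKernel C (s + r) (X - Ξ) := by
        rw [integral_mul_const, integral_rlKernel_mul hs hr]
        rfl

end ConvolutionSemigroup

lemma norm_mul_le_of_abs_le {u v a b M N : ℝ} (hu : |u| ≤ M * a) (hv : |v| ≤ N * b) :
    ‖u * v‖ ≤ M * N * (a * b) := by
  rw [Real.norm_eq_abs, abs_mul, mul_mul_mul_comm]
  exact mul_le_mul hu hv (abs_nonneg _) ((abs_nonneg _).trans hu)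

section KernelIteration

variable {Ω : Type*} [MeasurableSpace Ω] {μ : Measure Ω} {g : ℝ → Ω → Ω → ℝ}
  {κ κ' : Ω → Ω → ℝ} {s s' r M N d H : ℝ}

/-- A one-parameter semigroup of nonnegative kernels, growing slowly enough in the parameter that
the majorants of Levi's method converge. -/
structure IsKernelSemigroup (μ : Measure Ω) (g : ℝ → Ω → Ω → ℝ) : Prop where
  nonneg : ∀ {s}, 0 < s → ∀ X Ξ, 0 ≤ g s X Ξ
  integrable_mul : ∀ {s r}, 0 < s → 0 < r → ∀ X Ξ, Integrable (fun P => g s X P * g r P Ξ) μ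
  integral_mul : ∀ {s r}, 0 < s → 0 < r → ∀ X Ξ, ∫ P, g s X P * g r P Ξ ∂μ = g (s + r) X Ξ
  summable : ∀ {s₀ s M}, 0 < s₀ → 0 < s → 0 ≤ M → ∀ X Ξ,
    Summable fun m : ℕ => (m + 1) * M ^ m * g (s₀ + m * s) X Ξ

/-- The iterated kernels `κ, κ ⋆ κ, κ ⋆ κ ⋆ κ, …`, numbered from `0`. -/
def iterKernel (μ : Measure Ω) (κ : Ω → Ω → ℝ) : ℕ → Ω → Ω → ℝ
  | 0 => κ
  | m + 1 => fun X Ξ => ∫ P, κ X P * iterKernel μ κ m P Ξ ∂μ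

/-- The Levi series `-κ + κ ⋆ κ - κ ⋆ κ ⋆ κ + ⋯`. -/
def leviSum (μ : Measure Ω) (κ : Ω → Ω → ℝ) (X Ξ : Ω) : ℝ :=
  ∑' m : ℕ, (-1 : ℝ) ^ (m + 1) * iterKernel μ κ m X Ξ

lemma measurable_iterKernel [SFinite μ] (hκ : Measurable (Function.uncurry κ)) (m : ℕ) :
    Measurable (Function.uncurry (iterKernel μ κ m)) := by
  induction m with
  | zero => exact hκ
  | succ m ih =>
    have integrand : Measurable fun q : (Ω × Ω) × Ω =>
        κ q.1.1 q.2 * iterKernel μ κ m q.2 q.1.2 :=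
      (hκ.comp ((measurable_fst.comp measurable_fst).prodMk measurable_snd)).mul
        (ih.comp (measurable_snd.prodMk (measurable_snd.comp measurable_fst)))
    exact (integrand.stronglyMeasurable.integral_prod_right' (ν := μ)).measurable

namespace IsKernelSemigroup

lemma integrable_mul_of_le (hg : IsKernelSemigroup μ g) (hs : 0 < s) (hr : 0 < r)
    {u v : Ω → ℝ} {X Ξ : Ω} (hum : Measurable u) (hvm : Measurable v)
    (hu : ∀ P, |u P| ≤ M * g s X P) (hv : ∀ P, |v P| ≤ N * g r P Ξ) :
    Integrable (fun P => u P * v P) μ :=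
  ((hg.integrable_mul hs hr X Ξ).const_mul (M * N)).mono' (hum.mul hvm).aestronglyMeasurable
    (Eventually.of_forall fun P => norm_mul_le_of_abs_le (hu P) (hv P))

lemma abs_integral_mul_le (hg : IsKernelSemigroup μ g) (hs : 0 < s) (hr : 0 < r)
    {u v : Ω → ℝ} {X Ξ : Ω} (hu : ∀ P, |u P| ≤ M * g s X P) (hv : ∀ P, |v P| ≤ N * g r P Ξ) :
    |∫ P, u P * v P ∂μ| ≤ M * N * g (s + r) X Ξ := by
  rw [← hg.integral_mul hs hr, ← integral_const_mul]
  exact norm_integral_le_of_norm_le ((hg.integrable_mul hs hr X Ξ).const_mul _)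
    (Eventually.of_forall fun P => norm_mul_le_of_abs_le (hu P) (hv P))

lemma abs_iterKernel_le (hg : IsKernelSemigroup μ g) (hs : 0 < s)
    (hκ : ∀ X Ξ, |κ X Ξ| ≤ M * g s X Ξ) (m : ℕ) (X Ξ : Ω) :
    |iterKernel μ κ m X Ξ| ≤ M ^ (m + 1) * g (s + m * s) X Ξ := by
  induction m generalizing X Ξ with
  | zero => simpa [iterKernel] using hκ X Ξ
  | succ m ih =>
    calc |iterKernel μ κ (m + 1) X Ξ|
        ≤ M * M ^ (m + 1) * g (s + (s + m * s)) X Ξ :=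
          hg.abs_integral_mul_le hs (by positivity) (hκ X) fun P => ih P Ξ
      _ = M ^ (m + 1 + 1) * g (s + (m + 1 : ℕ) * s) X Ξ := by
          push_cast
          ring_nf

lemma integrable_mul_iterKernel [SFinite μ] (hg : IsKernelSemigroup μ g) (hs : 0 < s)
    (hm : Measurable (Function.uncurry κ)) (hκ : ∀ X Ξ, |κ X Ξ| ≤ M * g s X Ξ)
    (hr : 0 < r) {u : Ω → ℝ} {X : Ω} (hum : Measurable u) (hu : ∀ P, |u P| ≤ N * g r X P)
    (m : ℕ) (Ξ : Ω) :
    Integrable (fun P => u P * iterKernel μ κ m P Ξ) μ :=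
  hg.integrable_mul_of_le hr (by positivity : 0 < s + m * s) hum
    ((measurable_iterKernel hm m).of_uncurry_right) hu fun P => hg.abs_iterKernel_le hs hκ m P Ξ

lemma abs_iterKernel_sub_le [SFinite μ] (hg : IsKernelSemigroup μ g) (hs : 0 < s)
    (hm : Measurable (Function.uncurry κ)) (hm' : Measurable (Function.uncurry κ'))
    (hκ : ∀ X Ξ, |κ X Ξ| ≤ M * g s X Ξ) (hκ' : ∀ X Ξ, |κ' X Ξ| ≤ M * g s X Ξ)
    (hd : ∀ X Ξ, |κ X Ξ - κ' X Ξ| ≤ d * g s X Ξ) (m : ℕ) (X Ξ : Ω) :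
    |iterKernel μ κ m X Ξ - iterKernel μ κ' m X Ξ| ≤
      d * ((m + 1) * M ^ m * g (s + m * s) X Ξ) := by
  induction m generalizing X Ξ with
  | zero => simpa [iterKernel] using hd X Ξ
  | succ m ih =>
    have hms : 0 < s + m * s := by positivity
    have hmX := hm.of_uncurry_left (x := X)
    have hmX' := hm'.of_uncurry_left (x := X)
    have int := hg.integrable_mul_iterKernel hs hm hκ hs hmX (hκ X) m Ξ
    have int' := hg.integrable_mul_iterKernel hs hm' hκ' hs hmX' (hκ' X) m Ξ
    have cross := hg.integrable_mul_iterKernel hs hm hκ hs hmX' (hκ' X) m Ξ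
    have telescope : iterKernel μ κ (m + 1) X Ξ - iterKernel μ κ' (m + 1) X Ξ =
        (∫ P, (κ X P - κ' X P) * iterKernel μ κ m P Ξ ∂μ) +
          ∫ P, κ' X P * (iterKernel μ κ m P Ξ - iterKernel μ κ' m P Ξ) ∂μ := by
      simp only [sub_mul, mul_sub, integral_sub int cross, integral_sub cross int']
      exact (sub_add_sub_cancel _ _ _).symm
    calc |iterKernel μ κ (m + 1) X Ξ - iterKernel μ κ' (m + 1) X Ξ|
        ≤ d * M ^ (m + 1) * g (s + (s + m * s)) X Ξ +
            M * (d * ((m + 1) * M ^ m)) * g (s + (s + m * s)) X Ξ := by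
          rw [telescope]
          refine (abs_add_le _ _).trans (add_le_add ?_ ?_)
          · exact hg.abs_integral_mul_le hs hms (hd X) fun P => hg.abs_iterKernel_le hs hκ m P Ξ
          · exact hg.abs_integral_mul_le hs hms (hκ' X) fun P =>
              (ih P Ξ).trans_eq (mul_assoc _ _ _).symm
      _ = d * (((m + 1 : ℕ) + 1) * M ^ (m + 1) * g (s + (m + 1 : ℕ) * s) X Ξ) := by
          push_cast
          ring_nf

lemma abs_iterKernel_sub_left_le [SFinite μ] (hg : IsKernelSemigroup μ g) (hs : 0 < s)
    (hs' : 0 < s') (hm : Measurable (Function.uncurry κ))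
    (hκ : ∀ X Ξ, |κ X Ξ| ≤ M * g s X Ξ) {X Y : Ω}
    (hH : ∀ P, |κ X P - κ Y P| ≤ H * (g s' X P + g s' Y P)) (m : ℕ) (Ξ : Ω) :
    |iterKernel μ κ m X Ξ - iterKernel μ κ m Y Ξ| ≤
      H * M ^ m * (g (s' + m * s) X Ξ + g (s' + m * s) Y Ξ) := by
  cases m with
  | zero => simpa [iterKernel] using hH Ξ
  | succ m =>
    have hms : 0 < s + m * s := by positivity
    have intX := hg.integrable_mul hs' hms X Ξ
    have intY := hg.integrable_mul hs' hms Y Ξ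
    have difference : iterKernel μ κ (m + 1) X Ξ - iterKernel μ κ (m + 1) Y Ξ =
        ∫ P, (κ X P - κ Y P) * iterKernel μ κ m P Ξ ∂μ := by
      simp only [sub_mul]
      exact (integral_sub
        (hg.integrable_mul_iterKernel hs hm hκ hs hm.of_uncurry_left (hκ X) m Ξ)
        (hg.integrable_mul_iterKernel hs hm hκ hs hm.of_uncurry_left (hκ Y) m Ξ)).symm
    calc |iterKernel μ κ (m + 1) X Ξ - iterKernel μ κ (m + 1) Y Ξ|
        ≤ ∫ P, H * M ^ (m + 1) *
            (g s' X P * g (s + m * s) P Ξ + g s' Y P * g (s + m * s) P Ξ) ∂μ := by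
          rw [difference, ← Real.norm_eq_abs]
          refine norm_integral_le_of_norm_le ((intX.add intY).const_mul _)
            (Eventually.of_forall fun P => ?_)
          rw [← add_mul]
          exact norm_mul_le_of_abs_le (hH P) (hg.abs_iterKernel_le hs hκ m P Ξ)
      _ = H * M ^ (m + 1) * (g (s' + (m + 1 : ℕ) * s) X Ξ + g (s' + (m + 1 : ℕ) * s) Y Ξ) := by
          rw [integral_const_mul, integral_add intX intY, hg.integral_mul hs' hms,
            hg.integral_mul hs' hms]
          push_cast
          ring_nf

lemma summable_leviSum (hg : IsKernelSemigroup μ g) (hs : 0 < s) (hM : 0 ≤ M)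
    (hκ : ∀ X Ξ, |κ X Ξ| ≤ M * g s X Ξ) (X Ξ : Ω) :
    Summable fun m : ℕ => (-1 : ℝ) ^ (m + 1) * iterKernel μ κ m X Ξ := by
  refine .of_norm_bounded ((hg.summable hs hs hM X Ξ).mul_left M) fun m => ?_
  have := hg.nonneg (by positivity : 0 < s + m * s) X Ξ
  calc ‖(-1 : ℝ) ^ (m + 1) * iterKernel μ κ m X Ξ‖ = |iterKernel μ κ m X Ξ| := by
        rw [norm_mul, norm_pow, norm_neg, norm_one, one_pow, one_mul, Real.norm_eq_abs]
    _ ≤ M * (1 * M ^ m * g (s + m * s) X Ξ) :=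
        (hg.abs_iterKernel_le hs hκ m X Ξ).trans_eq (by ring)
    _ ≤ M * ((m + 1) * M ^ m * g (s + m * s) X Ξ) := by
        gcongr
        linarith [m.cast_nonneg (α := ℝ)]

lemma abs_leviSum_sub_le [SFinite μ] (hg : IsKernelSemigroup μ g) (hs : 0 < s) (hM : 0 ≤ M)
    (hm : Measurable (Function.uncurry κ)) (hm' : Measurable (Function.uncurry κ'))
    (hκ : ∀ X Ξ, |κ X Ξ| ≤ M * g s X Ξ) (hκ' : ∀ X Ξ, |κ' X Ξ| ≤ M * g s X Ξ)
    (hd : ∀ X Ξ, |κ X Ξ - κ' X Ξ| ≤ d * g s X Ξ) (X Ξ : Ω) :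
    |leviSum μ κ X Ξ - leviSum μ κ' X Ξ| ≤
      d * ∑' m : ℕ, (m + 1) * M ^ m * g (s + m * s) X Ξ := by
  rw [leviSum, leviSum, ← Real.norm_eq_abs,
    ← (hg.summable_leviSum hs hM hκ X Ξ).tsum_sub (hg.summable_leviSum hs hM hκ' X Ξ)]
  refine tsum_of_norm_bounded ((hg.summable hs hs hM X Ξ).hasSum.mul_left d) fun m => ?_
  rw [← mul_sub, norm_mul, norm_pow, norm_neg, norm_one, one_pow, one_mul]
  exact hg.abs_iterKernel_sub_le hs hm hm' hκ hκ' hd m X Ξ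

lemma abs_leviSum_sub_left_le [SFinite μ] (hg : IsKernelSemigroup μ g) (hs : 0 < s)
    (hs' : 0 < s') (hM : 0 ≤ M) (hH : 0 ≤ H) (hm : Measurable (Function.uncurry κ))
    (hκ : ∀ X Ξ, |κ X Ξ| ≤ M * g s X Ξ) {X Y : Ω}
    (hXY : ∀ P, |κ X P - κ Y P| ≤ H * (g s' X P + g s' Y P)) (Ξ : Ω) :
    |leviSum μ κ X Ξ - leviSum μ κ Y Ξ| ≤
      H * ((∑' m : ℕ, (m + 1) * M ^ m * g (s' + m * s) X Ξ) +
        ∑' m : ℕ, (m + 1) * M ^ m * g (s' + m * s) Y Ξ) := by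
  rw [leviSum, leviSum, ← Real.norm_eq_abs,
    ← (hg.summable_leviSum hs hM hκ X Ξ).tsum_sub (hg.summable_leviSum hs hM hκ Y Ξ)]
  refine tsum_of_norm_bounded (((hg.summable hs' hs hM X Ξ).hasSum.add
    (hg.summable hs' hs hM Y Ξ).hasSum).mul_left H) fun m => ?_
  have hX := hg.nonneg (by positivity : 0 < s' + m * s) X Ξ
  have hY := hg.nonneg (by positivity : 0 < s' + m * s) Y Ξ
  rw [← mul_sub, norm_mul, norm_pow, norm_neg, norm_one, one_pow, one_mul, ← mul_add]
  calc |iterKernel μ κ m X Ξ - iterKernel μ κ m Y Ξ|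
      ≤ H * (1 * M ^ m * (g (s' + m * s) X Ξ + g (s' + m * s) Y Ξ)) :=
        (hg.abs_iterKernel_sub_left_le hs hs' hm hκ hXY m Ξ).trans_eq (by ring)
    _ ≤ H * ((m + 1) * M ^ m * (g (s' + m * s) X Ξ + g (s' + m * s) Y Ξ)) := by
        gcongr
        linarith [m.cast_nonneg (α := ℝ)]

end IsKernelSemigroup

end KernelIteration

section MittagLeffler

open Real

variable {A s₀ s C M T t : ℝ}

lemma rpow_mul_exp_neg_le_Gamma_add_one {z L : ℝ} (hz : 0 ≤ z) (hL : 0 ≤ L) :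
    L ^ z * exp (-L) ≤ Gamma (z + 1) := by
  have tail_integrable : IntegrableOn (fun u => L ^ z * exp (-u)) (Set.Ioi L) :=
    (integrableOn_exp_neg_Ioi L).const_mul _
  have euler_integrable : IntegrableOn (fun u => exp (-u) * u ^ z) (Set.Ioi 0) := by
    simpa only [add_sub_cancel_right] using GammaIntegral_convergent (by linarith : 0 < z + 1)
  calc L ^ z * exp (-L) = ∫ u in Set.Ioi L, L ^ z * exp (-u) := by
        rw [integral_const_mul, integral_exp_neg_Ioi]
    _ ≤ ∫ u in Set.Ioi L, exp (-u) * u ^ z := by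
        refine setIntegral_mono_on tail_integrable
          (euler_integrable.mono_set (Set.Ioi_subset_Ioi hL)) measurableSet_Ioi fun u hu => ?_
        rw [mul_comm]
        gcongr
        exact hu.le
    _ ≤ ∫ u in Set.Ioi 0, exp (-u) * u ^ z :=
        setIntegral_mono_set euler_integrable
          (ae_restrict_of_forall_mem measurableSet_Ioi fun u hu =>
            mul_nonneg (exp_pos _).le (rpow_nonneg (Set.mem_Ioi.mp hu).le _))
          (Set.Ioi_subset_Ioi hL).eventuallyLE
    _ = Gamma (z + 1) := by rw [Gamma_eq_integral (by linarith), add_sub_cancel_right]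

lemma mittagLeffler_term_nonneg (hs₀ : 0 < s₀) (hs : 0 ≤ s) (hA : 0 ≤ A) (m : ℕ) :
    0 ≤ (m + 1) * A ^ m / Gamma (s₀ + m * s) := by
  have := Gamma_pos_of_pos (by positivity : 0 < s₀ + m * s)
  positivity

lemma summable_mittagLeffler (hs₀ : 0 < s₀) (hs : 0 < s) (hA : 0 ≤ A) :
    Summable fun m : ℕ => (m + 1) * A ^ m / Gamma (s₀ + m * s) := by
  obtain ⟨L, hL, hLs⟩ : ∃ L : ℝ, 0 < L ∧ L ^ s = 4 * A + 1 :=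
    ⟨(4 * A + 1) ^ s⁻¹, by positivity, rpow_inv_rpow (by positivity) hs.ne'⟩
  have ratio_lt_one : 4 * A / (4 * A + 1) < 1 := (div_lt_one (by positivity)).mpr (by linarith)
  refine .of_nonneg_of_le (mittagLeffler_term_nonneg hs₀ hs.le hA) (fun m => ?_)
    ((summable_geometric_of_lt_one (by positivity) ratio_lt_one).mul_left
      ((s₀ + s) * exp L / L ^ s₀))
  have hz : 0 < s₀ + m * s := by positivity
  have hΓ := Gamma_pos_of_pos hz
  have le_two_pow : (m : ℝ) + 1 ≤ 2 ^ m := by exact_mod_cast Nat.lt_two_pow_self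
  have argument_le : s₀ + m * s ≤ (s₀ + s) * 2 ^ m := by nlinarith [m.cast_nonneg (α := ℝ)]
  have Gamma_growth : L ^ s₀ * (4 * A + 1) ^ m ≤ exp L * ((s₀ + m * s) * Gamma (s₀ + m * s)) := by
    have := rpow_mul_exp_neg_le_Gamma_add_one hz.le hL.le
    rwa [Gamma_add_one hz.ne', rpow_add hL, mul_comm (m : ℝ) s, rpow_mul_natCast hL.le, hLs,
      exp_neg, ← div_eq_mul_inv, div_le_iff₀' (exp_pos L), mul_comm s] at this
  rw [div_pow, mul_pow, div_mul_div_comm, div_le_div_iff₀ hΓ (by positivity)]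
  calc ((m : ℝ) + 1) * A ^ m * (L ^ s₀ * (4 * A + 1) ^ m)
      ≤ 2 ^ m * A ^ m * (exp L * ((s₀ + s) * 2 ^ m * Gamma (s₀ + m * s))) := by
        refine mul_le_mul (by gcongr) (Gamma_growth.trans (by gcongr)) (by positivity)
          (by positivity)
    _ = (s₀ + s) * exp L * (4 ^ m * A ^ m) * Gamma (s₀ + m * s) := by
        rw [show (4 : ℝ) ^ m = 2 ^ m * 2 ^ m by rw [← mul_pow]; norm_num]
        ring

/-- A variant of the Mittag-Leffler function, the sum of the majorants of Levi's series. -/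
def mittagLeffler (s₀ s A : ℝ) : ℝ :=
  ∑' m : ℕ, (m + 1) * A ^ m / Gamma (s₀ + m * s)

lemma mittagLeffler_pos (hs₀ : 0 < s₀) (hs : 0 < s) (hA : 0 ≤ A) : 0 < mittagLeffler s₀ s A := by
  refine (summable_mittagLeffler hs₀ hs hA).tsum_pos (mittagLeffler_term_nonneg hs₀ hs.le hA) 0 ?_
  simpa using Gamma_pos_of_pos hs₀

lemma mittagLeffler_mono {B : ℝ} (hs₀ : 0 < s₀) (hs : 0 < s) (hA : 0 ≤ A) (hAB : A ≤ B) :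
    mittagLeffler s₀ s A ≤ mittagLeffler s₀ s B := by
  refine (summable_mittagLeffler hs₀ hs hA).tsum_le_tsum (fun m => ?_)
    (summable_mittagLeffler hs₀ hs (hA.trans hAB))
  have := Gamma_pos_of_pos (by positivity : 0 < s₀ + m * s)
  gcongr

lemma majorant_spaceTimeKernel (ht : 0 < t) (x : ℝ) (m : ℕ) :
    (m + 1) * M ^ m * spaceTimeKernel C (s₀ + m * s) (t, x) =
      √(C / π) * (t ^ (s₀ - 3 / 2) * exp (-C * x ^ 2 / t)) *
        ((m + 1) * (M * t ^ s) ^ m / Gamma (s₀ + m * s)) := by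
  have powers : t ^ (s₀ + m * s - 3 / 2) = t ^ (s₀ - 3 / 2) * (t ^ s) ^ m := by
    rw [← rpow_mul_natCast ht.le, ← rpow_add ht]
    ring_nf
  rw [spaceTimeKernel_of_pos ht, powers, mul_pow]
  ring

lemma isKernelSemigroup_spaceTimeKernel (hC : 0 < C) :
    IsKernelSemigroup volume fun s X Ξ => spaceTimeKernel C s (X - Ξ) where
  nonneg hs X Ξ := spaceTimeKernel_nonneg hs _
  integrable_mul := integrable_spaceTimeKernel_mul hC
  integral_mul := integral_spaceTimeKernel_mul hC
  summable {s₀ s M} hs₀ hs hM X Ξ := by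
    obtain ⟨t, x⟩ := X - Ξ
    rcases le_or_gt t 0 with ht | ht
    · simp only [spaceTimeKernel, rlKernel_of_nonpos ht, zero_mul, mul_zero, summable_zero]
    · simp only [majorant_spaceTimeKernel ht]
      exact (summable_mittagLeffler hs₀ hs (by positivity)).mul_left _

lemma tsum_majorant_spaceTimeKernel_le (hs₀ : 0 < s₀) (hs : 0 < s) (hM : 0 ≤ M)
    (ht : 0 < t) (htT : t ≤ T) (x : ℝ) :
    ∑' m : ℕ, (m + 1) * M ^ m * spaceTimeKernel C (s₀ + m * s) (t, x) ≤
      √(C / π) * mittagLeffler s₀ s (M * T ^ s) *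
        (t ^ (s₀ - 3 / 2) * exp (-C * x ^ 2 / t)) := by
  simp only [majorant_spaceTimeKernel ht]
  rw [tsum_mul_left, mul_right_comm]
  gcongr
  exact mittagLeffler_mono hs₀ hs (by positivity) (by gcongr)

end MittagLeffler

section HeatProfiles

open Real

variable {A B lam R c C N u w z : ℝ}

lemma two_add_sq_mul_gaussian_le (hCc : C < c) (u : ℝ) :
    (2 + u ^ 2) * exp (-c * u ^ 2) ≤ (2 + 1 / (c - C)) * exp (-C * u ^ 2) := by
  have hε : 0 < c - C := sub_pos.mpr hCc
  have split : exp (-C * u ^ 2) = exp ((c - C) * u ^ 2) * exp (-c * u ^ 2) := by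
    rw [← exp_add]
    ring_nf
  have one_le : 1 ≤ exp ((c - C) * u ^ 2) := one_le_exp (by positivity)
  have sq_le : u ^ 2 ≤ 1 / (c - C) * exp ((c - C) * u ^ 2) := by
    rw [div_mul_eq_mul_div, one_mul, le_div_iff₀' hε]
    linarith [add_one_le_exp ((c - C) * u ^ 2)]
  rw [split, ← mul_assoc]
  gcongr
  linarith

lemma gaussian_le_of_abs_sub_le_one (hC : 0 < C) (hCc : C < c) (h : |u - z| ≤ 1) :
    exp (-c * z ^ 2) ≤ exp (C * c / (c - C)) * exp (-C * u ^ 2) := by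
  have hε : 0 < c - C := sub_pos.mpr hCc
  have distance : (u - z) ^ 2 ≤ 1 := (sq_le_one_iff_abs_le_one _).mpr h
  have young : C * u ^ 2 ≤ c * z ^ 2 + C * c / (c - C) * (u - z) ^ 2 := by
    rw [← sub_nonneg, show c * z ^ 2 + C * c / (c - C) * (u - z) ^ 2 - C * u ^ 2 =
      (C * u - c * z) ^ 2 / (c - C) by field_simp; ring]
    positivity
  have : C * c / (c - C) * (u - z) ^ 2 ≤ C * c / (c - C) * 1 := by
    have := hC.trans hCc
    gcongr
  rw [← exp_add, exp_le_exp]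
  linarith

/-- The derivatives `∂ᵤⁿ` of the heat kernel `(4πA)^(-1/2) exp(-u² / (4A))` of diffusivity `A` at
unit time, through the Hermite recursion. -/
def heatProfile : ℕ → ℝ → ℝ → ℝ
  | 0, A, u => (√(4 * π * A))⁻¹ * exp (-u ^ 2 / (4 * A))
  | 1, A, u => -(u * heatProfile 0 A u) / (2 * A)
  | n + 2, A, u => -(u * heatProfile (n + 1) A u + (n + 1) * heatProfile n A u) / (2 * A)

lemma measurable_heatProfile (n : ℕ) : Measurable fun p : ℝ × ℝ => heatProfile n p.1 p.2 := by
  induction n using Nat.twoStepInduction with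
  | zero => simp only [heatProfile]; fun_prop
  | one => simp only [heatProfile]; fun_prop
  | more n ih ih' => simp only [heatProfile]; fun_prop

lemma hasDerivAt_heatProfile (n : ℕ) (A u : ℝ) :
    HasDerivAt (heatProfile n A) (heatProfile (n + 1) A u) u := by
  have h₀ : HasDerivAt (heatProfile 0 A) (heatProfile 1 A u) u := by
    refine ((((hasDerivAt_id u).pow 2).neg.div_const (4 * A)).exp.const_mul _).congr_deriv ?_
    simp only [heatProfile, id, Pi.neg_apply, Pi.pow_apply]
    ring
  induction n using Nat.twoStepInduction with
  | zero => exact h₀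
  | one =>
    refine (((hasDerivAt_id u).mul h₀).neg.div_const (2 * A)).congr_deriv ?_
    simp only [heatProfile, id, Nat.cast_zero]
    ring
  | more n ih ih' =>
    refine ((((hasDerivAt_id u).mul ih').add (ih.const_mul ((n : ℝ) + 1))).neg.div_const
      (2 * A)).congr_deriv ?_
    simp only [heatProfile, id, Nat.cast_add_one]
    ring

-- The heat equation `∂q/∂A = ∂²q/∂u²` commutes with `∂ᵤⁿ`.
lemma hasDerivAt_heatProfile_diffusivity (n : ℕ) (hA : 0 < A) (u : ℝ) :
    HasDerivAt (fun B => heatProfile n B u) (heatProfile (n + 2) A u) A := by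
  have h₀ : HasDerivAt (fun B => heatProfile 0 B u) (heatProfile 2 A u) A := by
    have scale : HasDerivAt (fun B => 4 * π * B) (4 * π) A := by
      simpa using (hasDerivAt_id A).const_mul (4 * π)
    have amplitude := (scale.sqrt (by positivity)).inv (by positivity)
    have exponent := ((hasDerivAt_const A (-u ^ 2)).div
      ((hasDerivAt_id A).const_mul 4) (by simpa using hA.ne')).exp
    refine (amplitude.mul exponent).congr_deriv ?_
    have hsqrt : √(4 * π * A) ≠ 0 := by positivity
    simp only [heatProfile, id, Pi.div_apply, Pi.inv_apply, Nat.cast_zero,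
      sq_sqrt (by positivity : 0 ≤ 4 * π * A)]
    field_simp
    ring
  induction n using Nat.twoStepInduction with
  | zero => exact h₀
  | one =>
    refine ((h₀.const_mul u).neg.div ((hasDerivAt_id A).const_mul 2)
      (by simpa using hA.ne')).congr_deriv ?_
    simp only [heatProfile, id, Pi.neg_apply, Nat.cast_one, Nat.cast_zero]
    field_simp
    ring
  | more n ih ih' =>
    refine (((ih'.const_mul u).add (ih.const_mul ((n : ℝ) + 1))).neg.div
      ((hasDerivAt_id A).const_mul 2) (by simpa using hA.ne')).congr_deriv ?_
    simp only [heatProfile, id, Pi.neg_apply, Pi.add_apply, Nat.cast_add_one]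
    field_simp
    ring

lemma abs_heatProfile_zero_le (hlam : 0 < lam) (hc : c < 1 / (4 * R))
    (hA : A ∈ Set.Icc lam R) (u : ℝ) :
    |heatProfile 0 A u| ≤ (√(4 * π * lam))⁻¹ * exp (-c * u ^ 2) := by
  obtain ⟨hlA, hAR⟩ := hA
  have hA : 0 < A := hlam.trans_le hlA
  have rate : c ≤ 1 / (4 * A) := hc.le.trans (by gcongr)
  rw [heatProfile, abs_of_nonneg (by positivity)]
  gcongr
  calc -u ^ 2 / (4 * A) = -(1 / (4 * A) * u ^ 2) := by ring
    _ ≤ -(c * u ^ 2) := by gcongr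
    _ = -c * u ^ 2 := by ring

lemma abs_hermite_step_le {p q k : ℝ} (hk : 0 ≤ k) (hlam : 0 < lam) (hA : lam ≤ A) (hCc : C < c)
    (hN : 0 ≤ N) (hp : |p| ≤ N * exp (-c * u ^ 2)) (hq : |q| ≤ N * exp (-c * u ^ 2)) :
    |-(u * p + k * q) / (2 * A)| ≤
      (1 + k) * N * (2 + 1 / (c - C)) / (2 * lam) * exp (-C * u ^ 2) := by
  have abs_u_le : |u| ≤ 2 + u ^ 2 := by nlinarith [sq_abs u, sq_nonneg (|u| - 1)]
  have numerator : |u * p + k * q| ≤ (1 + k) * N * (2 + 1 / (c - C)) * exp (-C * u ^ 2) :=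
    calc |u * p + k * q| ≤ |u| * |p| + k * |q| := by
          simpa only [abs_mul, abs_of_nonneg hk] using abs_add_le (u * p) (k * q)
      _ ≤ (2 + u ^ 2) * (N * exp (-c * u ^ 2)) + k * ((2 + u ^ 2) * (N * exp (-c * u ^ 2))) := by
          gcongr
          exact hq.trans (le_mul_of_one_le_left (by positivity) (by nlinarith [sq_nonneg u]))
      _ = (1 + k) * N * ((2 + u ^ 2) * exp (-c * u ^ 2)) := by ring
      _ ≤ (1 + k) * N * ((2 + 1 / (c - C)) * exp (-C * u ^ 2)) :=
          mul_le_mul_of_nonneg_left (two_add_sq_mul_gaussian_le hCc u) (by positivity)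
      _ = _ := (mul_assoc _ _ _).symm
  rw [abs_div, abs_neg, abs_of_pos (by linarith : 0 < 2 * A), div_mul_eq_mul_div]
  gcongr

-- The weight `u` of the Hermite recursion is absorbed by lowering the Gaussian rate at each step.
lemma exists_abs_heatProfile_le (hlam : 0 < lam) (n : ℕ) (hC : C < 1 / (4 * R)) :
    ∃ N, 0 < N ∧ ∀ A ∈ Set.Icc lam R, ∀ u, |heatProfile n A u| ≤ N * exp (-C * u ^ 2) := by
  induction n using Nat.twoStepInduction generalizing C with
  | zero => exact ⟨_, by positivity, fun A hA u => abs_heatProfile_zero_le hlam hC hA u⟩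
  | one =>
    obtain ⟨c, hCc, hc⟩ := exists_between hC
    have := sub_pos.mpr hCc
    refine ⟨(1 + 0) * (√(4 * π * lam))⁻¹ * (2 + 1 / (c - C)) / (2 * lam), by positivity,
      fun A hA u => ?_⟩
    have h₀ := abs_heatProfile_zero_le hlam hc hA u
    simpa only [heatProfile, zero_mul, add_zero] using
      abs_hermite_step_le le_rfl hlam hA.1 hCc (by positivity) h₀ h₀
  | more n ih ih' =>
    obtain ⟨c, hCc, hc⟩ := exists_between hC
    have := sub_pos.mpr hCc
    obtain ⟨N, -, hqN⟩ := ih hc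
    obtain ⟨M, hM, hqM⟩ := ih' hc
    refine ⟨(1 + (n + 1)) * max M N * (2 + 1 / (c - C)) / (2 * lam), by positivity,
      fun A hA u => ?_⟩
    exact abs_hermite_step_le (by positivity) hlam hA.1 hCc (by positivity)
      ((hqM A hA u).trans (by gcongr; exact le_max_left M N))
      ((hqN A hA u).trans (by gcongr; exact le_max_right M N))

/-- Weighted Gaussian bounds of rate `C` for `q A u`, its Lipschitz quotients in the parameter
`A ∈ I`, and its Lipschitz quotients in `u` at distance at most `1`. The weight `2 + u²` leaves
room for the coefficients of the parametrix error. -/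
structure GaussianProfile (I : Set ℝ) (C N : ℝ) (q : ℝ → ℝ → ℝ) : Prop where
  abs_le : ∀ A ∈ I, ∀ u, (2 + u ^ 2) * |q A u| ≤ N * exp (-C * u ^ 2)
  abs_sub_le_param : ∀ A ∈ I, ∀ B ∈ I, ∀ u,
    (2 + u ^ 2) * |q A u - q B u| ≤ N * |A - B| * exp (-C * u ^ 2)
  abs_sub_le : ∀ A ∈ I, ∀ u w, |u - w| ≤ 1 →
    (2 + u ^ 2) * |q A u - q A w| ≤ N * |u - w| * exp (-C * u ^ 2)

lemma weighted_abs_le {y : ℝ} (hN : 0 ≤ N) (hCc : C < c) (h : |y| ≤ N * exp (-c * u ^ 2)) :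
    (2 + u ^ 2) * |y| ≤ N * (2 + 1 / (c - C)) * exp (-C * u ^ 2) :=
  calc (2 + u ^ 2) * |y| ≤ (2 + u ^ 2) * (N * exp (-c * u ^ 2)) := by gcongr
    _ = N * ((2 + u ^ 2) * exp (-c * u ^ 2)) := by ring
    _ ≤ N * ((2 + 1 / (c - C)) * exp (-C * u ^ 2)) :=
        mul_le_mul_of_nonneg_left (two_add_sq_mul_gaussian_le hCc u) hN
    _ = _ := by ring

lemma abs_heatProfile_sub_diffusivity_le (hlam : 0 < lam) {n : ℕ}
    (hN : ∀ A ∈ Set.Icc lam R, ∀ u, |heatProfile (n + 2) A u| ≤ N * exp (-c * u ^ 2))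
    (hA : A ∈ Set.Icc lam R) (hB : B ∈ Set.Icc lam R) (u : ℝ) :
    |heatProfile n A u - heatProfile n B u| ≤ N * |A - B| * exp (-c * u ^ 2) := by
  rw [mul_right_comm]
  exact (convex_Icc lam R).norm_image_sub_le_of_norm_hasDerivWithin_le
    (f := fun B => heatProfile n B u)
    (fun D hD =>
      (hasDerivAt_heatProfile_diffusivity n (hlam.trans_le hD.1) u).hasDerivWithinAt)
    (fun D hD => hN D hD u) hB hA

lemma abs_heatProfile_sub_le {n : ℕ} (hC : 0 < C) (hCc : C < c) (hN₀ : 0 ≤ N)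
    (hN : ∀ u, |heatProfile (n + 1) A u| ≤ N * exp (-c * u ^ 2)) (huw : |u - w| ≤ 1) :
    |heatProfile n A u - heatProfile n A w| ≤
      N * exp (C * c / (c - C)) * |u - w| * exp (-C * u ^ 2) := by
  have mean_value := (convex_uIcc w u).norm_image_sub_le_of_norm_hasDerivWithin_le
    (C := N * (exp (C * c / (c - C)) * exp (-C * u ^ 2)))
    (fun z _ => (hasDerivAt_heatProfile n A z).hasDerivWithinAt)
    (fun z hz => (hN z).trans (by
      gcongr
      refine gaussian_le_of_abs_sub_le_one hC hCc ?_
      exact (Set.abs_sub_right_of_mem_uIcc hz).trans huw))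
    Set.left_mem_uIcc Set.right_mem_uIcc
  exact mean_value.trans_eq (by rw [Real.norm_eq_abs]; ring)

lemma exists_gaussianProfile (hlam : 0 < lam) (hC : 0 < C) (hCR : C < 1 / (4 * R)) (n : ℕ) :
    ∃ N, 0 < N ∧ GaussianProfile (Set.Icc lam R) C N (heatProfile n) := by
  obtain ⟨c, hCc, hcR⟩ := exists_between hCR
  obtain ⟨c', hcc', hc'R⟩ := exists_between hcR
  have hc : 0 < c := hC.trans hCc
  have := sub_pos.mpr hCc
  obtain ⟨N₀, hN₀, h₀⟩ := exists_abs_heatProfile_le hlam n hcR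
  obtain ⟨N₁, hN₁, h₁⟩ := exists_abs_heatProfile_le hlam (n + 1) hc'R
  obtain ⟨N₂, hN₂, h₂⟩ := exists_abs_heatProfile_le hlam (n + 2) hcR
  set E := exp (c * c' / (c' - c))
  refine ⟨max N₀ (max N₂ (N₁ * E)) * (2 + 1 / (c - C)), by positivity,
    fun A hA u => ?_, fun A hA B hB u => ?_, fun A hA u w huw => ?_⟩
  · refine (weighted_abs_le hN₀.le hCc (h₀ A hA u)).trans ?_
    gcongr
    exact le_max_left _ _
  · refine (weighted_abs_le (by positivity) hCc
      (abs_heatProfile_sub_diffusivity_le hlam h₂ hA hB u)).trans ?_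
    rw [mul_right_comm N₂]
    gcongr
    exact (le_max_left _ _).trans (le_max_right _ _)
  · refine (weighted_abs_le (by positivity) hCc
      (abs_heatProfile_sub_le hc hcc' hN₁.le (h₁ A hA) huw)).trans ?_
    rw [mul_right_comm (N₁ * E)]
    gcongr
    exact (le_max_right _ _).trans (le_max_right _ _)

end HeatProfiles

namespace GaussianProfile

open Real

variable {I : Set ℝ} {A B C N W W' d α γ u w ω ω' : ℝ} {q : ℝ → ℝ → ℝ}

lemma abs_weight_mul_le (hq : GaussianProfile I C N q) (hA : A ∈ I)
    (hω : |ω| ≤ W * (2 + u ^ 2)) : |ω * q A u| ≤ W * N * exp (-C * u ^ 2) := by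
  have hW : 0 ≤ W := nonneg_of_mul_nonneg_left ((abs_nonneg ω).trans hω) (by positivity)
  calc |ω * q A u| ≤ W * (2 + u ^ 2) * |q A u| := by rw [abs_mul]; gcongr
    _ = W * ((2 + u ^ 2) * |q A u|) := mul_assoc _ _ _
    _ ≤ W * (N * exp (-C * u ^ 2)) := mul_le_mul_of_nonneg_left (hq.abs_le A hA u) hW
    _ = W * N * exp (-C * u ^ 2) := (mul_assoc _ _ _).symm

lemma abs_weight_mul_sub_le (hq : GaussianProfile I C N q) (hN : 0 ≤ N) (hA : A ∈ I) (hB : B ∈ I)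
    (hω : |ω - ω'| ≤ W' * (2 + u ^ 2)) (hω' : |ω'| ≤ W * (2 + u ^ 2)) (hAB : |A - B| ≤ d) :
    |ω * q A u - ω' * q B u| ≤ (W' + W * d) * N * exp (-C * u ^ 2) := by
  have hW : 0 ≤ W := nonneg_of_mul_nonneg_left ((abs_nonneg ω').trans hω') (by positivity)
  have parameter : |ω' * (q A u - q B u)| ≤ W * d * N * exp (-C * u ^ 2) :=
    calc |ω' * (q A u - q B u)| ≤ W * (2 + u ^ 2) * |q A u - q B u| := by rw [abs_mul]; gcongr
      _ = W * ((2 + u ^ 2) * |q A u - q B u|) := mul_assoc _ _ _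
      _ ≤ W * (N * |A - B| * exp (-C * u ^ 2)) :=
          mul_le_mul_of_nonneg_left (hq.abs_sub_le_param A hA B hB u) hW
      _ ≤ W * (N * d * exp (-C * u ^ 2)) := by gcongr
      _ = W * d * N * exp (-C * u ^ 2) := by ring
  calc |ω * q A u - ω' * q B u| = |(ω - ω') * q A u + ω' * (q A u - q B u)| := by ring_nf
    _ ≤ W' * N * exp (-C * u ^ 2) + W * d * N * exp (-C * u ^ 2) :=
        (abs_add_le _ _).trans (add_le_add (hq.abs_weight_mul_le hA hω) parameter)
    _ = (W' + W * d) * N * exp (-C * u ^ 2) := by ring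

lemma abs_weight_mul_sub_left_le (hq : GaussianProfile I C N q) (hN : 0 ≤ N) (hA : A ∈ I)
    (hω : |ω| ≤ W * (2 + u ^ 2)) (hω' : |ω'| ≤ W * (2 + w ^ 2))
    (hωω' : |ω - ω'| ≤ W * |u - w| ^ α) (hγ : 0 ≤ γ) (hγα : γ ≤ α) (hα : α ≤ 1) :
    |ω * q A u - ω' * q A w| ≤
      W * N * |u - w| ^ γ * (exp (-C * u ^ 2) + exp (-C * w ^ 2)) := by
  have hW : 0 ≤ W := nonneg_of_mul_nonneg_left ((abs_nonneg ω).trans hω) (by positivity)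
  rcases le_or_gt |u - w| 1 with near | far
  · have weight_increment : |ω - ω'| ≤ W * |u - w| ^ γ * (2 + u ^ 2) :=
      calc |ω - ω'| ≤ W * |u - w| ^ γ :=
            hωω'.trans (mul_le_mul_of_nonneg_left
              (rpow_le_rpow_of_exponent_ge' (abs_nonneg _) near hγ hγα) hW)
        _ ≤ W * |u - w| ^ γ * (2 + u ^ 2) :=
            le_mul_of_one_le_right (by positivity) (by nlinarith [sq_nonneg u])
    have profile_increment : |ω' * (q A w - q A u)| ≤ W * N * |u - w| ^ γ * exp (-C * w ^ 2) :=
      calc |ω' * (q A w - q A u)| ≤ W * (2 + w ^ 2) * |q A w - q A u| := by rw [abs_mul]; gcongr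
        _ = W * ((2 + w ^ 2) * |q A w - q A u|) := mul_assoc _ _ _
        _ ≤ W * (N * |w - u| * exp (-C * w ^ 2)) :=
            mul_le_mul_of_nonneg_left (hq.abs_sub_le A hA w u (by rwa [abs_sub_comm])) hW
        _ ≤ W * (N * |u - w| ^ γ * exp (-C * w ^ 2)) := by
            rw [abs_sub_comm]
            gcongr
            exact self_le_rpow_of_le_one (abs_nonneg _) near (hγα.trans hα)
        _ = W * N * |u - w| ^ γ * exp (-C * w ^ 2) := by ring
    calc |ω * q A u - ω' * q A w| = |(ω - ω') * q A u - ω' * (q A w - q A u)| := by ring_nf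
      _ ≤ W * |u - w| ^ γ * N * exp (-C * u ^ 2) + W * N * |u - w| ^ γ * exp (-C * w ^ 2) :=
          (abs_sub _ _).trans
            (add_le_add (hq.abs_weight_mul_le hA weight_increment) profile_increment)
      _ = W * N * |u - w| ^ γ * (exp (-C * u ^ 2) + exp (-C * w ^ 2)) := by ring
  · calc |ω * q A u - ω' * q A w| ≤ W * N * exp (-C * u ^ 2) + W * N * exp (-C * w ^ 2) :=
          (abs_sub _ _).trans
            (add_le_add (hq.abs_weight_mul_le hA hω) (hq.abs_weight_mul_le hA hω'))
      _ = W * N * 1 * (exp (-C * u ^ 2) + exp (-C * w ^ 2)) := by ring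
      _ ≤ W * N * |u - w| ^ γ * (exp (-C * u ^ 2) + exp (-C * w ^ 2)) := by
          gcongr
          exact one_le_rpow far.le hγ

end GaussianProfile

section ParametrixError

open Real

variable {T α lam R C D d γ : ℝ} {a f g : ℝ → ℝ → ℝ} {x y t ξ τ : ℝ} {v v' : Fin 3 → ℝ → ℝ → ℝ}
  {N : Fin 3 → ℝ}

lemma Zf_eq_heatProfile (hτt : τ < t) (x : ℝ) :
    Zf a x t ξ τ = (√(t - τ))⁻¹ * heatProfile 0 (a ξ τ) ((x - ξ) / √(t - τ)) := by
  have hδ : 0 < t - τ := sub_pos.mpr hτt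
  rw [Zf, heatProfile, sqrt_mul' _ hδ.le, div_pow, sq_sqrt hδ.le, mul_inv,
    mul_comm (4 * a ξ τ), ← div_div, neg_div]
  ring

lemma iteratedDeriv_Zf (hτt : τ < t) (n : ℕ) (x : ℝ) :
    iteratedDeriv n (fun y => Zf a y t ξ τ) x =
      (√(t - τ) ^ (n + 1))⁻¹ * heatProfile n (a ξ τ) ((x - ξ) / √(t - τ)) := by
  induction n generalizing x with
  | zero => simpa using Zf_eq_heatProfile hτt x
  | succ n ih =>
    have similarity_variable : HasDerivAt (fun y => (y - ξ) / √(t - τ)) (1 / √(t - τ)) x :=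
      ((hasDerivAt_id x).sub_const ξ).div_const _
    rw [iteratedDeriv_succ, funext ih]
    refine (((hasDerivAt_heatProfile n (a ξ τ) _).comp x
      similarity_variable).const_mul _).deriv.trans ?_
    rw [pow_succ _ (n + 1), mul_inv]
    ring

/-- The coefficient of `∂ₓⁱZ` in `(LZ)₁`, where `f` is `c`, `b`, `a` for `i = 0, 1, 2`. -/
def operatorCoeff (i : Fin 3) (f : ℝ → ℝ → ℝ) (x t ξ τ : ℝ) : ℝ :=
  if i = 2 then f ξ τ - f x t else f x t

/-- The coefficient of the `i`-th profile in `(LZ)₁`, once `∂ₓⁱZ` is written in the similarity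
variable `(x - ξ) / √(t - τ)` and `(t - τ) ^ (α / 2 - 3 / 2)` is factored out. -/
def scaledCoeff (α : ℝ) (i : Fin 3) (f : ℝ → ℝ → ℝ) (x t ξ τ : ℝ) : ℝ :=
  (t - τ) ^ ((2 - (i : ℕ) - α) / 2) * operatorCoeff i f x t ξ τ

lemma LZ1_eq_sum (hτt : τ < t) (α : ℝ) :
    LZ1 (v 2) (v 1) (v 0) x t ξ τ = (t - τ) ^ (α / 2 - 3 / 2) * ∑ i : Fin 3,
      scaledCoeff α i (v i) x t ξ τ * heatProfile i (v 2 ξ τ) ((x - ξ) / √(t - τ)) := by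
  have hδ : 0 < t - τ := sub_pos.mpr hτt
  have operator_form : LZ1 (v 2) (v 1) (v 0) x t ξ τ = ∑ i : Fin 3,
      operatorCoeff i (v i) x t ξ τ * iteratedDeriv i (fun y => Zf (v 2) y t ξ τ) x := by
    simp only [LZ1, Fin.sum_univ_three, operatorCoeff, Fin.val_zero, Fin.val_one, Fin.val_two,
      iteratedDeriv_zero, iteratedDeriv_one, ↓reduceIte, Fin.reduceEq]
    ring
  rw [operator_form, Finset.mul_sum]
  refine Finset.sum_congr rfl fun i _ => ?_
  have power : (√(t - τ) ^ ((i : ℕ) + 1))⁻¹ =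
      (t - τ) ^ (α / 2 - 3 / 2) * (t - τ) ^ ((2 - (i : ℕ) - α) / 2) := by
    rw [← rpow_natCast, sqrt_eq_rpow, ← rpow_mul hδ.le, ← rpow_neg hδ.le, ← rpow_add hδ]
    push_cast
    ring_nf
  rw [iteratedDeriv_Zf hτt, scaledCoeff, power]
  ring

lemma rpow_le_one_add {δ e : ℝ} (hδ : 0 ≤ δ) (hδT : δ ≤ T) (he : 0 ≤ e) (he1 : e ≤ 1) :
    δ ^ e ≤ 1 + T :=
  calc δ ^ e ≤ (1 + T) ^ e := rpow_le_rpow hδ (by linarith) he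
    _ ≤ (1 + T) ^ (1 : ℝ) := rpow_le_rpow_of_exponent_le (by linarith) he1
    _ = 1 + T := rpow_one _

lemma abs_rpow_le_one_add_sq (u : ℝ) (hα : 0 ≤ α) (hα2 : α ≤ 2) : |u| ^ α ≤ 1 + u ^ 2 :=
  calc |u| ^ α = (u ^ 2) ^ (α / 2) := by
        rw [← sq_abs, ← rpow_natCast_mul (abs_nonneg u), Nat.cast_ofNat,
          mul_div_cancel₀ _ two_ne_zero]
    _ ≤ 1 + u ^ 2 := rpow_le_one_add (sq_nonneg u) le_rfl (by positivity) (by linarith)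

lemma abs_rpow_eq_similarity (hτt : τ < t) (z α : ℝ) :
    |z| ^ α = (t - τ) ^ (α / 2) * |z / √(t - τ)| ^ α := by
  have hδ : 0 < t - τ := sub_pos.mpr hτt
  have hroot : 0 < √(t - τ) := sqrt_pos.mpr hδ
  rw [rpow_div_two_eq_sqrt _ hδ.le, ← mul_rpow (sqrt_nonneg _) (abs_nonneg _), abs_div,
    abs_of_pos hroot, mul_div_cancel₀ _ hroot.ne']

lemma inC.nonneg (hf : inC T α D d f) (hT : 0 ≤ T) : 0 ≤ D :=
  (abs_nonneg _).trans (hf.1 0 0 le_rfl hT)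

lemma abs_operatorCoeff_two_le (hf : inC T α d D f) (hτ : 0 ≤ τ) (hτt : τ < t)
    (htT : t ≤ T) :
    |operatorCoeff 2 f x t ξ τ| ≤
      (t - τ) ^ (α / 2) * (D * (1 + |(x - ξ) / √(t - τ)| ^ α)) := by
  have hδ : 0 < t - τ := sub_pos.mpr hτt
  calc |f ξ τ - f x t| ≤ D * (|ξ - x| ^ α + |τ - t| ^ (α / 2)) :=
        hf.2 ξ τ x t hτ (hτt.le.trans htT) (hτ.trans hτt.le) htT
    _ = (t - τ) ^ (α / 2) * (D * (1 + |(x - ξ) / √(t - τ)| ^ α)) := by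
        rw [abs_sub_comm ξ, abs_sub_comm τ, abs_rpow_eq_similarity hτt, abs_of_pos hδ]
        ring

lemma abs_scaledCoeff_le (hα : 0 < α) (hα1 : α ≤ 1) (hf : inC T α D D f) (i : Fin 3)
    (hτ : 0 ≤ τ) (hτt : τ < t) (htT : t ≤ T) :
    |scaledCoeff α i f x t ξ τ| ≤ (1 + T) * D * (2 + ((x - ξ) / √(t - τ)) ^ 2) := by
  have hδ : 0 < t - τ := sub_pos.mpr hτt
  have hδT : t - τ ≤ T := by linarith
  have hT : 0 ≤ T := hδ.le.trans hδT
  have hD : 0 ≤ D := hf.nonneg hT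
  set u := (x - ξ) / √(t - τ)
  have lower_order (h : i ≠ 2) : |operatorCoeff i f x t ξ τ| ≤ D := by
    rw [operatorCoeff, if_neg h]
    exact hf.1 x t (hτ.trans hτt.le) htT
  rw [scaledCoeff, abs_mul, abs_of_pos (rpow_pos_of_pos hδ _)]
  by_cases hi : i = 2
  · subst hi
    calc (t - τ) ^ ((2 - ((2 : Fin 3) : ℕ) - α) / 2) * |operatorCoeff 2 f x t ξ τ|
      _ ≤ (t - τ) ^ ((2 - ((2 : Fin 3) : ℕ) - α) / 2) *
            ((t - τ) ^ (α / 2) * (D * (1 + |u| ^ α))) := by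
          gcongr
          exact abs_operatorCoeff_two_le hf hτ hτt htT
      _ = 1 * D * (1 + |u| ^ α) := by
          rw [← mul_assoc, ← rpow_add hδ]
          norm_num [← add_div]
      _ ≤ (1 + T) * D * (2 + u ^ 2) := by
          have weight : 1 + |u| ^ α ≤ 2 + u ^ 2 := by
            linarith [abs_rpow_le_one_add_sq u hα.le (hα1.trans one_le_two)]
          refine mul_le_mul ?_ weight (by positivity) (by positivity)
          gcongr
          linarith
  · have exponent : 0 ≤ (2 - (i : ℕ) - α) / 2 ∧ (2 - (i : ℕ) - α) / 2 ≤ 1 := by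
      have order_le : ((i : ℕ) : ℝ) ≤ 1 := by
        exact_mod_cast (show (i : ℕ) ≤ 1 by omega)
      constructor <;> linarith [Nat.cast_nonneg (α := ℝ) (i : ℕ)]
    calc (t - τ) ^ ((2 - (i : ℕ) - α) / 2) * |operatorCoeff i f x t ξ τ|
      _ ≤ (1 + T) * D := by
          gcongr
          · exact rpow_le_one_add hδ.le hδT exponent.1 exponent.2
          · exact lower_order hi
      _ ≤ (1 + T) * D * (2 + u ^ 2) :=
          le_mul_of_one_le_right (by positivity) (by nlinarith [sq_nonneg u])

lemma abs_scaledCoeff_sub_le (hα : 0 < α) (hf : inC T α d D f) (hD : 0 ≤ D) (i : Fin 3)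
    (hτ : 0 ≤ τ) (hτt : τ < t) (htT : t ≤ T) :
    |scaledCoeff α i f x t ξ τ - scaledCoeff α i f y t ξ τ| ≤
      (1 + T) * D * |(x - ξ) / √(t - τ) - (y - ξ) / √(t - τ)| ^ α := by
  have hδ : 0 < t - τ := sub_pos.mpr hτt
  have ht : 0 ≤ t := hτ.trans hτt.le
  have operator_increment :
      |operatorCoeff i f x t ξ τ - operatorCoeff i f y t ξ τ| = |f x t - f y t| := by
    unfold operatorCoeff
    split_ifs
    · rw [sub_sub_sub_cancel_left, abs_sub_comm]
    · rfl
  have holder : |f x t - f y t| ≤ D * |x - y| ^ α := by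
    simpa [zero_rpow (half_pos hα).ne'] using hf.2 x t y t ht htT ht htT
  have exponent : 0 ≤ (2 - (i : ℕ) : ℝ) / 2 ∧ (2 - (i : ℕ) : ℝ) / 2 ≤ 1 := by
    have order_le : ((i : ℕ) : ℝ) ≤ 2 := by exact_mod_cast Nat.le_of_lt_succ i.isLt
    constructor <;> linarith [Nat.cast_nonneg (α := ℝ) (i : ℕ)]
  rw [scaledCoeff, scaledCoeff, ← mul_sub, abs_mul, abs_of_pos (rpow_pos_of_pos hδ _),
    operator_increment, ← sub_div, sub_sub_sub_cancel_right]
  calc (t - τ) ^ ((2 - (i : ℕ) - α) / 2) * |f x t - f y t|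
    _ ≤ (t - τ) ^ ((2 - (i : ℕ) - α) / 2) * (D * |x - y| ^ α) := by gcongr
    _ = (t - τ) ^ ((2 - (i : ℕ) : ℝ) / 2) * D * |(x - y) / √(t - τ)| ^ α := by
        rw [abs_rpow_eq_similarity hτt,
          show (2 - (i : ℕ) : ℝ) / 2 = (2 - (i : ℕ) - α) / 2 + α / 2 by ring, rpow_add hδ]
        ring
    _ ≤ (1 + T) * D * |(x - y) / √(t - τ)| ^ α := by
        gcongr
        exact rpow_le_one_add hδ.le (by linarith) exponent.1 exponent.2

lemma scaledCoeff_sub (i : Fin 3) :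
    scaledCoeff α i f x t ξ τ - scaledCoeff α i g x t ξ τ =
      scaledCoeff α i (fun x t => f x t - g x t) x t ξ τ := by
  simp only [scaledCoeff, operatorCoeff]
  split_ifs <;> ring

/-- The consequences of `v ∈ B(R, λ, α)` used in the estimates, for the coefficients
`v = ![c, b, a]` listed by the order of the derivative that they multiply. -/
structure IsAdmissible (T α lam R : ℝ) (v : Fin 3 → ℝ → ℝ → ℝ) : Prop where
  diffusivity_ge : ∀ x t, 0 ≤ t → t ≤ T → lam ≤ v 2 x t
  inC : ∀ i, inC T α R R (v i)

lemma IsAdmissible.diffusivity_mem (hv : IsAdmissible T α lam R v) (x : ℝ) (ht : 0 ≤ t)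
    (htT : t ≤ T) : v 2 x t ∈ Set.Icc lam R :=
  ⟨hv.diffusivity_ge x t ht htT, (le_abs_self _).trans ((hv.inC 2).1 x t ht htT)⟩

lemma exp_similarity (hτt : τ < t) (C z : ℝ) :
    exp (-C * (z / √(t - τ)) ^ 2) = exp (-C * z ^ 2 / (t - τ)) := by
  rw [div_pow, sq_sqrt (sub_pos.mpr hτt).le, mul_div_assoc]

lemma abs_mul_sum_le {ι : Type*} {s : Finset ι} {p c : ℝ} {F : ι → ℝ} {N : ι → ℝ} {E : ℝ}
    (hp : 0 ≤ p) (h : ∀ i ∈ s, |F i| ≤ c * N i * E) :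
    |p * ∑ i ∈ s, F i| ≤ c * (∑ i ∈ s, N i) * (p * E) :=
  calc |p * ∑ i ∈ s, F i| ≤ p * ∑ i ∈ s, c * N i * E := by
        rw [abs_mul, abs_of_nonneg hp]
        gcongr
        exact (Finset.abs_sum_le_sum_abs _ _).trans (Finset.sum_le_sum h)
    _ = c * (∑ i ∈ s, N i) * (p * E) := by
        rw [← Finset.sum_mul, ← Finset.mul_sum]
        ring

lemma abs_LZ1_le (hα : 0 < α) (hα1 : α ≤ 1)
    (hN : ∀ i : Fin 3, GaussianProfile (Set.Icc lam R) C (N i) (heatProfile i))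
    (hv : IsAdmissible T α lam R v) (hτ : 0 ≤ τ) (hτt : τ < t) (htT : t ≤ T) :
    |LZ1 (v 2) (v 1) (v 0) x t ξ τ| ≤ (1 + T) * R * (∑ i, N i) *
      ((t - τ) ^ (α / 2 - 3 / 2) * exp (-C * (x - ξ) ^ 2 / (t - τ))) := by
  rw [LZ1_eq_sum hτt α, ← exp_similarity hτt]
  refine abs_mul_sum_le (rpow_nonneg (sub_pos.mpr hτt).le _) fun i _ => ?_
  exact (hN i).abs_weight_mul_le (hv.diffusivity_mem ξ hτ (hτt.le.trans htT))
    (abs_scaledCoeff_le hα hα1 (hv.inC i) i hτ hτt htT)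

lemma abs_LZ1_sub_le (hα : 0 < α) (hα1 : α ≤ 1)
    (hN : ∀ i : Fin 3, GaussianProfile (Set.Icc lam R) C (N i) (heatProfile i))
    (hN₀ : ∀ i, 0 ≤ N i)
    (hv : IsAdmissible T α lam R v) (hv' : IsAdmissible T α lam R v')
    (hd : ∀ i, inC T α d d fun x t => v i x t - v' i x t)
    (hτ : 0 ≤ τ) (hτt : τ < t) (htT : t ≤ T) :
    |LZ1 (v 2) (v 1) (v 0) x t ξ τ - LZ1 (v' 2) (v' 1) (v' 0) x t ξ τ| ≤
      ((1 + T) * d + (1 + T) * R * d) * (∑ i, N i) *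
        ((t - τ) ^ (α / 2 - 3 / 2) * exp (-C * (x - ξ) ^ 2 / (t - τ))) := by
  have hτT := hτt.le.trans htT
  rw [LZ1_eq_sum hτt α, LZ1_eq_sum hτt α, ← exp_similarity hτt, ← mul_sub,
    ← Finset.sum_sub_distrib]
  refine abs_mul_sum_le (rpow_nonneg (sub_pos.mpr hτt).le _) fun i _ => ?_
  refine (hN i).abs_weight_mul_sub_le (hN₀ i) (hv.diffusivity_mem ξ hτ hτT)
    (hv'.diffusivity_mem ξ hτ hτT) ?_ (abs_scaledCoeff_le hα hα1 (hv'.inC i) i hτ hτt htT)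
    ((hd 2).1 ξ τ hτ hτT)
  rw [scaledCoeff_sub]
  exact abs_scaledCoeff_le hα hα1 (hd i) i hτ hτt htT

lemma abs_LZ1_sub_left_le (hα : 0 < α) (hα1 : α ≤ 1) (hγ : 0 ≤ γ) (hγα : γ ≤ α)
    (hN : ∀ i : Fin 3, GaussianProfile (Set.Icc lam R) C (N i) (heatProfile i))
    (hN₀ : ∀ i, 0 ≤ N i) (hv : IsAdmissible T α lam R v)
    (hτ : 0 ≤ τ) (hτt : τ < t) (htT : t ≤ T) :
    |LZ1 (v 2) (v 1) (v 0) x t ξ τ - LZ1 (v 2) (v 1) (v 0) y t ξ τ| ≤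
      (1 + T) * R * (∑ i, N i) * |x - y| ^ γ * ((t - τ) ^ ((α - γ) / 2 - 3 / 2) *
        (exp (-C * (x - ξ) ^ 2 / (t - τ)) + exp (-C * (y - ξ) ^ 2 / (t - τ)))) := by
  have hδ : 0 < t - τ := sub_pos.mpr hτt
  have hR : 0 ≤ R := (hv.inC 0).nonneg (hτ.trans (hτt.le.trans htT))
  have power : (t - τ) ^ (α / 2 - 3 / 2) =
      (t - τ) ^ ((α - γ) / 2 - 3 / 2) * (t - τ) ^ (γ / 2) := by
    rw [← rpow_add hδ]
    ring_nf
  have increment : |x - y| ^ γ =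
      (t - τ) ^ (γ / 2) * |(x - ξ) / √(t - τ) - (y - ξ) / √(t - τ)| ^ γ := by
    rw [abs_rpow_eq_similarity hτt, ← sub_div, sub_sub_sub_cancel_right]
  rw [LZ1_eq_sum hτt α, LZ1_eq_sum hτt α, ← exp_similarity hτt, ← exp_similarity hτt, ← mul_sub,
    ← Finset.sum_sub_distrib]
  refine (abs_mul_sum_le
    (c := (1 + T) * R * |(x - ξ) / √(t - τ) - (y - ξ) / √(t - τ)| ^ γ) (N := N)
    (E := exp (-C * ((x - ξ) / √(t - τ)) ^ 2) + exp (-C * ((y - ξ) / √(t - τ)) ^ 2))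
    (rpow_nonneg hδ.le _) fun i _ => ?_).trans_eq (by rw [power, increment]; ring)
  rw [mul_right_comm ((1 + T) * R)]
  exact (hN i).abs_weight_mul_sub_left_le (hN₀ i) (hv.diffusivity_mem ξ hτ (hτt.le.trans htT))
    (abs_scaledCoeff_le hα hα1 (hv.inC i) i hτ hτt htT)
    (abs_scaledCoeff_le hα hα1 (hv.inC i) i hτ hτt htT)
    (abs_scaledCoeff_sub_le hα (hv.inC i) hR i hτ hτt htT) hγ hγα hα1

end ParametrixError

section LeviKernel

open Real

variable {T α lam R C D d M s γ : ℝ} {f : ℝ → ℝ → ℝ} {x t ξ τ : ℝ}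
  {v v' : Fin 3 → ℝ → ℝ → ℝ} {N : Fin 3 → ℝ}

/-- The kernel `(LZ)₁` between the space-time points `X = (t, x)` and `Ξ = (τ, ξ)`, extended by
zero outside `0 ≤ τ < t ≤ T`, for the coefficients `v = ![c, b, a]`. -/
def leviKernel (T : ℝ) (v : Fin 3 → ℝ → ℝ → ℝ) (X Ξ : ℝ × ℝ) : ℝ :=
  if 0 ≤ Ξ.1 ∧ Ξ.1 < X.1 ∧ X.1 ≤ T then LZ1 (v 2) (v 1) (v 0) X.2 X.1 Ξ.2 Ξ.1 else 0

lemma leviKernel_of_lt (hτ : 0 ≤ τ) (hτt : τ < t) (htT : t ≤ T) :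
    leviKernel T v (t, x) (τ, ξ) = LZ1 (v 2) (v 1) (v 0) x t ξ τ :=
  if_pos ⟨hτ, hτt, htT⟩

lemma leviKernel_of_le {X Ξ : ℝ × ℝ} (h : X.1 ≤ Ξ.1) : leviKernel T v X Ξ = 0 :=
  if_neg fun hX => hX.2.1.not_ge h

lemma leviKernel_congr (h : ∀ i x t, 0 ≤ t → t ≤ T → v i x t = v' i x t) :
    leviKernel T v = leviKernel T v' := by
  funext X Ξ
  unfold leviKernel
  split_ifs with hX
  · have hX₀ : 0 ≤ X.1 := hX.1.trans hX.2.1.le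
    have hΞT : Ξ.1 ≤ T := hX.2.1.le.trans hX.2.2
    simp only [LZ1, Zf, h _ _ _ hX₀ hX.2.2, h _ _ _ hX.1 hΞT]
  · rfl

lemma measurable_leviKernel_of_measurable (hv : ∀ i, Measurable fun p : ℝ × ℝ => v i p.2 p.1) :
    Measurable (Function.uncurry (leviKernel T v)) := by
  have self_similar : Function.uncurry (leviKernel T v) = fun p =>
      if 0 ≤ p.2.1 ∧ p.2.1 < p.1.1 ∧ p.1.1 ≤ T then
        (p.1.1 - p.2.1) ^ ((0 : ℝ) / 2 - 3 / 2) * ∑ i : Fin 3,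
          scaledCoeff 0 i (v i) p.1.2 p.1.1 p.2.2 p.2.1 *
            heatProfile i (v 2 p.2.2 p.2.1) ((p.1.2 - p.2.2) / √(p.1.1 - p.2.1))
      else 0 :=
    funext fun p => if_ctx_congr Iff.rfl (fun h => LZ1_eq_sum h.2.1 0) fun _ => rfl
  have left (i) : Measurable fun p : (ℝ × ℝ) × ℝ × ℝ => v i p.1.2 p.1.1 :=
    (hv i).comp measurable_fst
  have right (i) : Measurable fun p : (ℝ × ℝ) × ℝ × ℝ => v i p.2.2 p.2.1 :=
    (hv i).comp measurable_snd
  have coefficient (i) : Measurable fun p : (ℝ × ℝ) × ℝ × ℝ =>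
      scaledCoeff 0 i (v i) p.1.2 p.1.1 p.2.2 p.2.1 := by
    unfold scaledCoeff operatorCoeff
    refine .mul (by fun_prop) ?_
    split_ifs
    · exact (right i).sub (left i)
    · exact left i
  have profile (i : Fin 3) : Measurable fun p : (ℝ × ℝ) × ℝ × ℝ =>
      heatProfile i (v 2 p.2.2 p.2.1) ((p.1.2 - p.2.2) / √(p.1.1 - p.2.1)) :=
    (measurable_heatProfile i).comp ((right 2).prodMk (by fun_prop))
  rw [self_similar]
  refine Measurable.ite ?_ (.mul (by fun_prop)
    (Finset.measurable_fun_sum _ fun i _ => (coefficient i).mul (profile i))) measurable_const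
  have time : Measurable fun p : (ℝ × ℝ) × ℝ × ℝ => p.1.1 := by fun_prop
  have source_time : Measurable fun p : (ℝ × ℝ) × ℝ × ℝ => p.2.1 := by fun_prop
  exact (measurableSet_le measurable_const source_time).inter
    ((measurableSet_lt source_time time).inter (measurableSet_le time measurable_const))

lemma inC.continuousOn (hα : 0 < α) (hf : inC T α d D f) :
    ContinuousOn (fun p : ℝ × ℝ => f p.2 p.1) (Set.Icc 0 T ×ˢ Set.univ) := by
  intro p hp
  have modulus : Tendsto (fun q : ℝ × ℝ => D * (|q.2 - p.2| ^ α + |q.1 - p.1| ^ (α / 2)))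
      (nhds p) (nhds 0) := by
    have continuous : Continuous fun q : ℝ × ℝ =>
        D * (|q.2 - p.2| ^ α + |q.1 - p.1| ^ (α / 2)) := by
      have := half_pos hα
      fun_prop (disch := positivity)
    simpa [zero_rpow hα.ne', zero_rpow (half_pos hα).ne'] using continuous.tendsto p
  rw [ContinuousWithinAt, tendsto_iff_dist_tendsto_zero]
  refine squeeze_zero' (Eventually.of_forall fun _ => dist_nonneg) ?_
    (modulus.mono_left nhdsWithin_le_nhds)
  filter_upwards [self_mem_nhdsWithin] with q hq
  exact hf.2 q.2 q.1 p.2 p.1 hq.1.1 hq.1.2 hp.1.1 hp.1.2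

lemma measurable_leviKernel (hα : 0 < α) (hv : IsAdmissible T α lam R v) :
    Measurable (Function.uncurry (leviKernel T v)) := by
  set S : Set (ℝ × ℝ) := Set.Icc 0 T ×ˢ Set.univ
  have restriction : leviKernel T v =
      leviKernel T fun i x t => S.indicator (fun p => v i p.2 p.1) (t, x) :=
    leviKernel_congr fun i x t ht htT =>
      (Set.indicator_of_mem (show (t, x) ∈ S from ⟨⟨ht, htT⟩, trivial⟩)
        fun p : ℝ × ℝ => v i p.2 p.1).symm
  rw [restriction]
  refine measurable_leviKernel_of_measurable fun i => ?_
  rw [← Set.piecewise_eq_indicator]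
  exact ((hv.inC i).continuousOn hα).measurable_piecewise continuousOn_const
    (measurableSet_Icc.prod .univ)

lemma gaussian_eq_spaceTimeKernel (hC : 0 < C) (hs : 0 < s) (ht : 0 < t) (x : ℝ) :
    t ^ (s - 3 / 2) * exp (-C * x ^ 2 / t) =
      Gamma s / √(C / π) * spaceTimeKernel C s (t, x) := by
  have := Gamma_pos_of_pos hs
  rw [spaceTimeKernel_of_pos ht]
  field_simp

lemma abs_leviKernel_le (hC : 0 < C) (hT : 0 ≤ T) (hα : 0 < α) (hα1 : α ≤ 1)
    (hN : ∀ i : Fin 3, GaussianProfile (Set.Icc lam R) C (N i) (heatProfile i))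
    (hN₀ : ∀ i, 0 ≤ N i) (hv : IsAdmissible T α lam R v) (X Ξ : ℝ × ℝ) :
    |leviKernel T v X Ξ| ≤ (1 + T) * R * (∑ i, N i) * (Gamma (α / 2) / √(C / π)) *
      spaceTimeKernel C (α / 2) (X - Ξ) := by
  have hR : 0 ≤ R := (hv.inC 0).nonneg hT
  have hα2 : 0 < α / 2 := half_pos hα
  unfold leviKernel
  split_ifs with h
  · refine (abs_LZ1_le hα hα1 hN hv h.1 h.2.1 h.2.2).trans_eq ?_
    rw [gaussian_eq_spaceTimeKernel hC hα2 (sub_pos.mpr h.2.1)]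
    exact (mul_assoc _ _ _).symm
  · have := Finset.sum_nonneg fun i (_ : i ∈ Finset.univ) => hN₀ i
    have := Gamma_pos_of_pos hα2
    have := spaceTimeKernel_nonneg (C := C) hα2 (X - Ξ)
    rw [abs_zero]
    positivity

lemma abs_leviKernel_sub_le (hC : 0 < C) (hT : 0 ≤ T) (hα : 0 < α) (hα1 : α ≤ 1)
    (hN : ∀ i : Fin 3, GaussianProfile (Set.Icc lam R) C (N i) (heatProfile i))
    (hN₀ : ∀ i, 0 ≤ N i) (hv : IsAdmissible T α lam R v) (hv' : IsAdmissible T α lam R v')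
    (hd : ∀ i, inC T α d d fun x t => v i x t - v' i x t) (X Ξ : ℝ × ℝ) :
    |leviKernel T v X Ξ - leviKernel T v' X Ξ| ≤ (1 + T) * (1 + R) * (∑ i, N i) *
      (Gamma (α / 2) / √(C / π)) * d * spaceTimeKernel C (α / 2) (X - Ξ) := by
  have hR : 0 ≤ R := (hv.inC 0).nonneg hT
  have hd₀ : 0 ≤ d := (hd 0).nonneg hT
  have hα2 : 0 < α / 2 := half_pos hα
  unfold leviKernel
  split_ifs with h
  · refine (abs_LZ1_sub_le hα hα1 hN hN₀ hv hv' hd h.1 h.2.1 h.2.2).trans_eq ?_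
    rw [gaussian_eq_spaceTimeKernel hC hα2 (sub_pos.mpr h.2.1),
      show X - Ξ = (X.1 - Ξ.1, X.2 - Ξ.2) from rfl]
    ring
  · have := Finset.sum_nonneg fun i (_ : i ∈ Finset.univ) => hN₀ i
    have := Gamma_pos_of_pos hα2
    have := spaceTimeKernel_nonneg (C := C) hα2 (X - Ξ)
    rw [sub_zero, abs_zero]
    positivity

lemma abs_leviKernel_sub_left_le (hC : 0 < C) (hT : 0 ≤ T) (hα : 0 < α) (hα1 : α ≤ 1)
    (hγ : 0 ≤ γ) (hγα : γ < α)
    (hN : ∀ i : Fin 3, GaussianProfile (Set.Icc lam R) C (N i) (heatProfile i))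
    (hN₀ : ∀ i, 0 ≤ N i) (hv : IsAdmissible T α lam R v) (t x y : ℝ) (P : ℝ × ℝ) :
    |leviKernel T v (t, x) P - leviKernel T v (t, y) P| ≤
      (1 + T) * R * (∑ i, N i) * (Gamma ((α - γ) / 2) / √(C / π)) * |x - y| ^ γ *
        (spaceTimeKernel C ((α - γ) / 2) ((t, x) - P) +
          spaceTimeKernel C ((α - γ) / 2) ((t, y) - P)) := by
  have hR : 0 ≤ R := (hv.inC 0).nonneg hT
  have hαγ : 0 < (α - γ) / 2 := half_pos (sub_pos.mpr hγα)
  unfold leviKernel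
  split_ifs with h
  · refine (abs_LZ1_sub_left_le hα hα1 hγ hγα.le hN hN₀ hv h.1 h.2.1 h.2.2).trans_eq ?_
    rw [mul_add, gaussian_eq_spaceTimeKernel hC hαγ (sub_pos.mpr h.2.1),
      gaussian_eq_spaceTimeKernel hC hαγ (sub_pos.mpr h.2.1)]
    have difference (z : ℝ) : (t, z) - P = (t - P.1, z - P.2) := rfl
    rw [difference, difference]
    ring
  · have := Finset.sum_nonneg fun i (_ : i ∈ Finset.univ) => hN₀ i
    have := Gamma_pos_of_pos hαγ
    have := spaceTimeKernel_nonneg (C := C) hαγ ((t, x) - P)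
    have := spaceTimeKernel_nonneg (C := C) hαγ ((t, y) - P)
    rw [sub_zero, abs_zero]
    positivity

lemma iterKernel_leviKernel_of_le {X Ξ : ℝ × ℝ} (h : X.1 ≤ Ξ.1) (m : ℕ) :
    iterKernel volume (leviKernel T v) m X Ξ = 0 := by
  induction m generalizing X with
  | zero => exact leviKernel_of_le h
  | succ m ih =>
    refine integral_eq_zero_of_ae (Eventually.of_forall fun P => ?_)
    rcases le_total X.1 P.1 with hP | hP
    · simp only [leviKernel_of_le hP, zero_mul, Pi.zero_apply]
    · simp only [ih (hP.trans h), mul_zero, Pi.zero_apply]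

lemma LZm_eq_iterKernel (hC : 0 < C) (hs : 0 < s)
    (hm : Measurable (Function.uncurry (leviKernel T v)))
    (hκ : ∀ X Ξ, |leviKernel T v X Ξ| ≤ M * spaceTimeKernel C s (X - Ξ)) (m : ℕ)
    (hτ : 0 ≤ τ) (hτt : τ < t) (htT : t ≤ T) :
    LZm (v 2) (v 1) (v 0) m x t ξ τ = iterKernel volume (leviKernel T v) m (t, x) (τ, ξ) := by
  induction m generalizing x t with
  | zero => exact (leviKernel_of_lt hτ hτt htT).symm
  | succ m ih =>
    set κ := leviKernel T v
    have integrable : Integrable fun P => κ (t, x) P * iterKernel volume κ m P (τ, ξ) :=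
      (isKernelSemigroup_spaceTimeKernel hC).integrable_mul_iterKernel hs hm hκ hs
        hm.of_uncurry_left (hκ _) m _
    have outside (σ) (hσ : σ ∉ Set.Ioo τ t) :
        ∫ y, κ (t, x) (σ, y) * iterKernel volume κ m (σ, y) (τ, ξ) = 0 := by
      rw [Set.mem_Ioo, not_and_or, not_lt, not_lt] at hσ
      refine integral_eq_zero_of_ae (Eventually.of_forall fun y => ?_)
      rcases hσ with hσ | hσ
      · exact mul_eq_zero_of_right _ (iterKernel_leviKernel_of_le hσ m)
      · exact mul_eq_zero_of_left (leviKernel_of_le hσ) _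
    have fubini : iterKernel volume κ (m + 1) (t, x) (τ, ξ) =
        ∫ σ, ∫ y, κ (t, x) (σ, y) * iterKernel volume κ m (σ, y) (τ, ξ) :=
      integral_prod _ integrable
    change ∫ σ in τ..t, ∫ y, LZ1 (v 2) (v 1) (v 0) x t y σ * LZm (v 2) (v 1) (v 0) m y σ ξ τ = _
    rw [fubini, intervalIntegral.integral_of_le hτt.le, integral_Ioc_eq_integral_Ioo,
      ← setIntegral_eq_integral_of_forall_compl_eq_zero outside]
    refine setIntegral_congr_fun measurableSet_Ioo fun σ hσ => ?_
    simp only [ih hσ.1 (hσ.2.le.trans htT), leviKernel_of_lt (hτ.trans hσ.1.le) hσ.2 htT, κ]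

lemma phiP_eq_leviSum (hC : 0 < C) (hs : 0 < s)
    (hm : Measurable (Function.uncurry (leviKernel T v)))
    (hκ : ∀ X Ξ, |leviKernel T v X Ξ| ≤ M * spaceTimeKernel C s (X - Ξ))
    (hτ : 0 ≤ τ) (hτt : τ < t) (htT : t ≤ T) :
    phiP (v 2) (v 1) (v 0) x t ξ τ = leviSum volume (leviKernel T v) (t, x) (τ, ξ) :=
  tsum_congr fun m => by rw [LZm_eq_iterKernel hC hs hm hκ m hτ hτt htT]

end LeviKernel

section CoefficientSpace

variable {T α lam R D D' d d' : ℝ} {f g : ℝ → ℝ → ℝ} {a b c a' b' c' : ℝ → ℝ → ℝ}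
  {x x' t t' : ℝ}

lemma inC.mono (hf : inC T α D d f) (hD : D ≤ D') (hd : d ≤ d') : inC T α D' d' f :=
  ⟨fun x t ht htT => (hf.1 x t ht htT).trans hD, fun x t x' t' ht htT ht' ht'T =>
    (hf.2 x t x' t' ht htT ht' ht'T).trans (mul_le_mul_of_nonneg_right hd (by positivity))⟩

lemma inC.sub (hf : inC T α D d f) (hg : inC T α D' d' g) :
    inC T α (D + D') (d + d') fun x t => f x t - g x t := by
  refine ⟨fun x t ht htT => (abs_sub _ _).trans (add_le_add (hf.1 x t ht htT) (hg.1 x t ht htT)),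
    fun x t x' t' ht htT ht' ht'T => ?_⟩
  rw [sub_sub_sub_comm, add_mul]
  exact (abs_sub _ _).trans
    (add_le_add (hf.2 x t x' t' ht htT ht' ht'T) (hg.2 x t x' t' ht htT ht' ht'T))

lemma supN_nonneg (T : ℝ) (f : ℝ → ℝ → ℝ) : 0 ≤ supN T f := by
  refine Real.sSup_nonneg ?_
  rintro _ ⟨x, t, -, -, rfl⟩
  exact abs_nonneg _

lemma holS_nonneg (T α : ℝ) (f : ℝ → ℝ → ℝ) : 0 ≤ holS T α f := by
  refine Real.sSup_nonneg ?_
  rintro _ ⟨x, t, x', t', -, -, -, -, -, rfl⟩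
  positivity

lemma inC.abs_le_supN (hf : inC T α D d f) (ht : 0 ≤ t) (htT : t ≤ T) :
    |f x t| ≤ supN T f := by
  refine le_csSup ⟨D, ?_⟩ ⟨x, t, ht, htT, rfl⟩
  rintro _ ⟨y, s, hs, hsT, rfl⟩
  exact hf.1 y s hs hsT

lemma parabolic_modulus_pos (h : ¬(x = x' ∧ t = t')) :
    0 < |x - x'| ^ α + |t - t'| ^ (α / 2) := by
  rcases not_and_or.mp h with hx | ht
  · have := Real.rpow_pos_of_pos (abs_sub_pos.mpr hx) α
    positivity
  · have := Real.rpow_pos_of_pos (abs_sub_pos.mpr ht) (α / 2)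
    positivity

lemma inC.abs_sub_le_holS (hf : inC T α D d f) (ht : 0 ≤ t) (htT : t ≤ T) (ht' : 0 ≤ t')
    (ht'T : t' ≤ T) :
    |f x t - f x' t'| ≤ holS T α f * (|x - x'| ^ α + |t - t'| ^ (α / 2)) := by
  by_cases h : x = x' ∧ t = t'
  · rw [h.1, h.2, sub_self, abs_zero]
    exact mul_nonneg (holS_nonneg T α f) (by positivity)
  · rw [← div_le_iff₀ (parabolic_modulus_pos h)]
    refine le_csSup ⟨d, ?_⟩ ⟨x, t, x', t', ht, htT, ht', ht'T, h, rfl⟩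
    rintro _ ⟨y, s, y', s', hs, hsT, hs', hs'T, hne, rfl⟩
    exact (div_le_iff₀ (parabolic_modulus_pos hne)).mpr (hf.2 y s y' s' hs hsT hs' hs'T)

lemma inC.holN (hf : inC T α D d f) : inC T α (holN T α f) (holN T α f) f :=
  inC.mono ⟨fun _ _ => hf.abs_le_supN, fun _ _ _ _ => hf.abs_sub_le_holS⟩
    (le_add_of_nonneg_right (holS_nonneg T α f)) (le_add_of_nonneg_left (supN_nonneg T f))

lemma memB.isAdmissible (h : memB T R lam α a b c) : IsAdmissible T α lam R ![c, b, a] := by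
  obtain ⟨ha, ⟨A, A', hA, hA', hAR, haC⟩, ⟨B, B', hB, hB', hBR, hbC⟩,
    C, C', hC, hC', hCR, hcC⟩ := h
  refine ⟨ha, fun i => ?_⟩
  fin_cases i
  · exact hcC.mono (by linarith) (by linarith)
  · exact hbC.mono (by linarith) (by linarith)
  · exact haC.mono (by linarith) (by linarith)

lemma holN_sub_le_vDist (i : Fin 3) :
    holN T α (fun x t => ![c, b, a] i x t - ![c', b', a'] i x t) ≤ vDist T α a b c a' b' c' := by
  fin_cases i
  · exact (le_max_right _ _).trans (le_max_right _ _)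
  · exact (le_max_left _ _).trans (le_max_right _ _)
  · exact le_max_left _ _

lemma inC_vDist (h : IsAdmissible T α lam R ![c, b, a])
    (h' : IsAdmissible T α lam R ![c', b', a']) (i : Fin 3) :
    inC T α (vDist T α a b c a' b' c') (vDist T α a b c a' b' c')
      fun x t => ![c, b, a] i x t - ![c', b', a'] i x t :=
  ((h.inC i).sub (h'.inC i)).holN.mono (holN_sub_le_vDist i) (holN_sub_le_vDist i)

end CoefficientSpace

section LeviSeries

open Real

variable {T α lam R C γ : ℝ}

lemma exists_abs_phiP_sub_le (hT : 0 ≤ T) (hlam : 0 < lam) (hα : 0 < α) (hα1 : α ≤ 1)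
    (hC : 0 < C) (hCR : C < 1 / (4 * R)) :
    ∃ K, 0 < K ∧ ∀ v v' d, IsAdmissible T α lam R v → IsAdmissible T α lam R v' →
      (∀ i, inC T α d d fun x t => v i x t - v' i x t) →
      ∀ x ξ t τ, 0 ≤ τ → τ < t → t ≤ T →
        |phiP (v 2) (v 1) (v 0) x t ξ τ - phiP (v' 2) (v' 1) (v' 0) x t ξ τ| ≤
          K * d * (t - τ) ^ (α / 2 - 3 / 2) * exp (-C * (x - ξ) ^ 2 / (t - τ)) := by
  choose N hN₀ hN using fun i : Fin 3 => exists_gaussianProfile hlam hC hCR i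
  have hR : 0 < R := by linarith [one_div_pos.mp (hC.trans hCR)]
  have hs : 0 < α / 2 := half_pos hα
  have := Gamma_pos_of_pos hs
  have hsum : 0 < ∑ i, N i := Finset.sum_pos (fun i _ => hN₀ i) Finset.univ_nonempty
  set M := (1 + T) * R * (∑ i, N i) * (Gamma (α / 2) / √(C / π))
  have hM : 0 ≤ M := by positivity
  have hE := mittagLeffler_pos hs hs (by positivity : 0 ≤ M * T ^ (α / 2))
  refine ⟨(1 + T) * (1 + R) * (∑ i, N i) * (Gamma (α / 2) / √(C / π)) *
    (√(C / π) * mittagLeffler (α / 2) (α / 2) (M * T ^ (α / 2))), by positivity,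
    fun v v' d hv hv' hd x ξ t τ hτ hτt htT => ?_⟩
  have hd₀ : 0 ≤ d := (hd 0).nonneg hT
  have bound (w) (hw : IsAdmissible T α lam R w) := abs_leviKernel_le hC hT hα hα1 hN
    (fun i => (hN₀ i).le) hw
  have difference := abs_leviKernel_sub_le hC hT hα hα1 hN (fun i => (hN₀ i).le) hv hv' hd
  have hm := measurable_leviKernel hα hv
  have hm' := measurable_leviKernel hα hv'
  rw [phiP_eq_leviSum hC hs hm (bound v hv) hτ hτt htT,
    phiP_eq_leviSum hC hs hm' (bound v' hv') hτ hτt htT]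
  refine ((isKernelSemigroup_spaceTimeKernel hC).abs_leviSum_sub_le hs hM hm hm' (bound v hv)
    (bound v' hv') difference (t, x) (τ, ξ)).trans ?_
  refine (mul_le_mul_of_nonneg_left (tsum_majorant_spaceTimeKernel_le (T := T) hs hs hM
    (sub_pos.mpr hτt) (by linarith) (x - ξ)) (by positivity)).trans_eq ?_
  ring

lemma exists_abs_phiP_sub_left_le (hT : 0 ≤ T) (hlam : 0 < lam) (hα : 0 < α) (hα1 : α ≤ 1)
    (hγ : 0 ≤ γ) (hγα : γ < α) (hC : 0 < C) (hCR : C < 1 / (4 * R)) :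
    ∃ K, 0 < K ∧ ∀ v, IsAdmissible T α lam R v → ∀ x y ξ t τ, 0 ≤ τ → τ < t → t ≤ T →
      |phiP (v 2) (v 1) (v 0) x t ξ τ - phiP (v 2) (v 1) (v 0) y t ξ τ| ≤
        K * |x - y| ^ γ * (t - τ) ^ ((α - γ) / 2 - 3 / 2) *
          (exp (-C * (x - ξ) ^ 2 / (t - τ)) + exp (-C * (y - ξ) ^ 2 / (t - τ))) := by
  choose N hN₀ hN using fun i : Fin 3 => exists_gaussianProfile hlam hC hCR i
  have hR : 0 < R := by linarith [one_div_pos.mp (hC.trans hCR)]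
  have hs : 0 < α / 2 := half_pos hα
  have hs' : 0 < (α - γ) / 2 := half_pos (sub_pos.mpr hγα)
  have := Gamma_pos_of_pos hs
  have := Gamma_pos_of_pos hs'
  have hsum : 0 < ∑ i, N i := Finset.sum_pos (fun i _ => hN₀ i) Finset.univ_nonempty
  set M := (1 + T) * R * (∑ i, N i) * (Gamma (α / 2) / √(C / π))
  have hM : 0 ≤ M := by positivity
  have hE := mittagLeffler_pos hs' hs (by positivity : 0 ≤ M * T ^ (α / 2))
  refine ⟨(1 + T) * R * (∑ i, N i) * (Gamma ((α - γ) / 2) / √(C / π)) *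
    (√(C / π) * mittagLeffler ((α - γ) / 2) (α / 2) (M * T ^ (α / 2))), by positivity,
    fun v hv x y ξ t τ hτ hτt htT => ?_⟩
  have bound := abs_leviKernel_le hC hT hα hα1 hN (fun i => (hN₀ i).le) hv
  have difference := abs_leviKernel_sub_left_le hC hT hα hα1 hγ hγα hN (fun i => (hN₀ i).le) hv
    t x y
  have hm := measurable_leviKernel hα hv
  have majorant := tsum_majorant_spaceTimeKernel_le (C := C) hs' hs hM (sub_pos.mpr hτt)
    (show t - τ ≤ T by linarith)
  rw [phiP_eq_leviSum hC hs hm bound hτ hτt htT, phiP_eq_leviSum hC hs hm bound hτ hτt htT]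
  refine ((isKernelSemigroup_spaceTimeKernel hC).abs_leviSum_sub_left_le hs hs' hM
    (by positivity) hm bound difference (τ, ξ)).trans ?_
  refine (mul_le_mul_of_nonneg_left (add_le_add (majorant (x - ξ)) (majorant (y - ξ)))
    (by positivity)).trans_eq ?_
  ring

end LeviSeries

section Interpolation

open Real

variable {A B D K d r δ E α β γ : ℝ}

lemma le_rpow_mul_rpow_of_le (hD : 0 ≤ D) (hA : D ≤ A) (hB : D ≤ B) (hβ : 0 ≤ β) (hβ1 : β ≤ 1) :
    D ≤ A ^ β * B ^ (1 - β) := by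
  have hβ' : 0 ≤ 1 - β := sub_nonneg.mpr hβ1
  have hA₀ : 0 ≤ A := hD.trans hA
  calc D = D ^ β * D ^ (1 - β) := by
        rw [← rpow_add_of_nonneg hD hβ hβ', add_sub_cancel, rpow_one]
    _ ≤ A ^ β * B ^ (1 - β) := by gcongr

lemma rpow_mul_rpow_one_sub (hK : 0 < K) (β : ℝ) : K ^ β * K ^ (1 - β) = K := by
  rw [← rpow_add hK, add_sub_cancel, rpow_one]

lemma interpolate_parabolic_bounds (hK : 0 < K) (hd : 0 ≤ d) (hr : 0 ≤ r) (hδ : 0 < δ)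
    (hE : 0 < E) :
    (K * d * δ ^ (α / 2 - 3 / 2) * E) ^ β *
        (K * r ^ γ * δ ^ ((α - γ) / 2 - 3 / 2) * E) ^ (1 - β) =
      K * d ^ β * r ^ (γ * (1 - β)) * δ ^ (-((3 - (α - γ * (1 - β))) / 2)) * E := by
  have exponent : -((3 - (α - γ * (1 - β))) / 2) =
      (α / 2 - 3 / 2) * β + ((α - γ) / 2 - 3 / 2) * (1 - β) := by ring
  have hδ₁ := rpow_nonneg hδ.le (α / 2 - 3 / 2)
  have hδ₂ := rpow_nonneg hδ.le ((α - γ) / 2 - 3 / 2)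
  have hrγ := rpow_nonneg hr γ
  rw [mul_rpow (by positivity) hE.le, mul_rpow (by positivity) hδ₁, mul_rpow hK.le hd,
    mul_rpow (by positivity) hE.le, mul_rpow (by positivity) hδ₂, mul_rpow hK.le hrγ,
    ← rpow_mul hr, ← rpow_mul hδ.le, ← rpow_mul hδ.le, exponent, rpow_add hδ]
  conv_rhs => rw [← rpow_mul_rpow_one_sub hK β, ← rpow_mul_rpow_one_sub hE β]
  ring

end Interpolation

end

theorem phi_dependence_general
    (T R lam α : ℝ) (hT : 0 ≤ T) (hlam : 0 < lam) (hα : 0 < α) (hα1 : α ≤ 1)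
    (C γ : ℝ) (hC : 0 < C) (hCR : C < 1 / (4 * R)) (hγ0 : 0 ≤ γ) (hγα : γ < α) :
    ∃ K : ℝ, 0 < K ∧ ∀ β : ℝ, 0 ≤ β → β ≤ 1 →
      ∀ a b c abar bbar cbar : ℝ → ℝ → ℝ,
        memB T R lam α a b c → memB T R lam α abar bbar cbar →
        ∀ x y ξ t τ : ℝ, 0 ≤ τ → τ < t → t ≤ T →
          (|phiP a b c x t ξ τ - phiP abar bbar cbar x t ξ τ| ≤
            K * vDist T α a b c abar bbar cbar *
              (t - τ) ^ (-((3 - α) / 2)) * Real.exp (-C * (x - ξ) ^ 2 / (t - τ))) ∧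
          (|(phiP a b c x t ξ τ - phiP abar bbar cbar x t ξ τ) -
              (phiP a b c y t ξ τ - phiP abar bbar cbar y t ξ τ)| ≤
            K * vDist T α a b c abar bbar cbar ^ β * |x - y| ^ (γ * (1 - β)) *
              (t - τ) ^ (-((3 - (α - γ * (1 - β))) / 2)) *
              (Real.exp (-C * (x - ξ) ^ 2 / (t - τ)) +
                Real.exp (-C * (y - ξ) ^ 2 / (t - τ)))) := by
  obtain ⟨K₁, hK₁, coefficients⟩ := exists_abs_phiP_sub_le hT hlam hα hα1 hC hCR
  obtain ⟨K₂, hK₂, space⟩ := exists_abs_phiP_sub_left_le hT hlam hα hα1 hγ0 hγα hC hCR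
  refine ⟨K₁ + 2 * K₂, by positivity,
    fun β hβ hβ1 a b c a' b' c' hv hv' x y ξ t τ hτ hτt htT => ?_⟩
  have hd := inC_vDist hv.isAdmissible hv'.isAdmissible
  have hd₀ := (hd 0).nonneg hT
  set d := vDist T α a b c a' b' c'
  have hδ : 0 < t - τ := sub_pos.mpr hτt
  have lipschitz (z : ℝ) : |phiP a b c z t ξ τ - phiP a' b' c' z t ξ τ| ≤
      (K₁ + 2 * K₂) * d * (t - τ) ^ (α / 2 - 3 / 2) *
        Real.exp (-C * (z - ξ) ^ 2 / (t - τ)) := by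
    refine (coefficients _ _ d hv.isAdmissible hv'.isAdmissible hd z ξ t τ hτ hτt htT).trans ?_
    gcongr
    linarith
  refine ⟨(lipschitz x).trans_eq (by ring_nf), ?_⟩
  rw [← interpolate_parabolic_bounds (by positivity) hd₀ (abs_nonneg _) hδ (by positivity)]
  refine le_rpow_mul_rpow_of_le (abs_nonneg _) ?_ ?_ hβ hβ1
  · exact ((abs_sub _ _).trans (add_le_add (lipschitz x) (lipschitz y))).trans_eq (by ring)
  · rw [sub_sub_sub_comm]
    refine ((abs_sub _ _).trans (add_le_add (space _ hv.isAdmissible x y ξ t τ hτ hτt htT)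
      (space _ hv'.isAdmissible x y ξ t τ hτ hτt htT))).trans ?_
    rw [← add_mul, ← add_mul, ← add_mul, ← two_mul]
    gcongr
    linarith

/-- Lemma 3: continuous dependence of `φ` on the coefficients. -/
theorem phi_dependence
    (T R lam α : ℝ) (hT : 0 < T) (hR : 0 < R) (hlam : 0 < lam)
    (hα : 0 < α) (hα1 : α ≤ 1) (hlR : lam < R)
    (β γ : ℝ) (hβ0 : 0 ≤ β) (hβ1 : β ≤ 1) (hγ0 : 0 < γ) (hγα : γ < α) :
    ∃ C : ℝ, 0 < C ∧ C < 1 / (4 * R) ∧ ∃ K : ℝ, 0 < K ∧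
      ∀ a b c abar bbar cbar : ℝ → ℝ → ℝ,
        memB T R lam α a b c → memB T R lam α abar bbar cbar →
        ∀ x y ξ t τ : ℝ, 0 ≤ τ → τ < t → t ≤ T →
          (|phiP a b c x t ξ τ - phiP abar bbar cbar x t ξ τ| ≤
            K * vDist T α a b c abar bbar cbar *
              (t - τ) ^ (-((3 - α) / 2)) * Real.exp (-C * (x - ξ) ^ 2 / (t - τ))) ∧
          (|(phiP a b c x t ξ τ - phiP abar bbar cbar x t ξ τ) -
              (phiP a b c y t ξ τ - phiP abar bbar cbar y t ξ τ)| ≤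
            K * vDist T α a b c abar bbar cbar ^ β * |x - y| ^ (γ * (1 - β)) *
              (t - τ) ^ (-((3 - (α - γ * (1 - β))) / 2)) *
              (Real.exp (-C * (x - ξ) ^ 2 / (t - τ)) +
                Real.exp (-C * (y - ξ) ^ 2 / (t - τ)))) := by
  obtain ⟨C, hC, hCR⟩ := exists_between (one_div_pos.mpr (by positivity : 0 < 4 * R))
  obtain ⟨K, hK, bounds⟩ :=
    phi_dependence_general T R lam α hT.le hlam hα hα1 C γ hC hCR hγ0.le hγα
  exact ⟨C, hC, hCR, K, hK, bounds β hβ0 hβ1⟩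
end

section
/- Let v_n, v ∈ B(R,λ,α) for n = 1,2,…. If v_n(x,t) converges to v(x,t) pointwise on ℝ×[0,T] as n → ∞, then Γ_{[v_n]}(x,t,ξ,τ) converges to Γ_{[v]}(x,t,ξ,τ) for every (x,t), (ξ,τ) ∈ ℝ×[0,T] with t > τ. -/
/-!
Write `A * F` for space-time convolution, so that `Γ = Z + Z * φ` with `φ = Σ (-1)^m L * ⋯ * L` and
`L = (LZ)₁`. Hölder continuity of `a` lowers the singularity of `L` from `(t - τ)^{-1}` to
`(t - τ)^{α/2 - 1}`, and the ellipticity bounds turn this into a bound of `Z` and `L` by a multiple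
of a single Gaussian kernel times a time weight `s^{β - 1} e^{μ s}`, `s = t - τ`, `β = α / 2`, which
is uniform in the coefficients.

Gaussian kernels reproduce under convolution in space. Convolving the time weights of rates
`μ₀ < μ` gives a weight of rate `μ` again, with a factor that tends to `0` as `μ → ∞`, so for a
large rate the iterates of `L` decay geometrically. (The sharp Beta-function estimates for the
iterates are not needed.) Pointwise convergence of `Z` and `L` then passes to `Γ` by dominated
convergence in `y`, in `σ` and in the series.

The coefficients live on a time interval `[S, T]`; `Γ` at times in `[S, T]` sees only their values
there, so they may be replaced by extensions that are constant in time outside `[S, T]`.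
-/

open MeasureTheory Filter

namespace Parametrix

open ProbabilityTheory Set
open scoped NNReal Topology

/-! ### Gaussian densities -/

lemma gaussianPDFReal_comm (v : ℝ≥0) (x y : ℝ) :
    gaussianPDFReal x v y = gaussianPDFReal y v x := by
  simp only [gaussianPDFReal, ← neg_sub x y, neg_sq]

lemma gaussianPDFReal_mul_gaussianPDFReal {u w : ℝ≥0} (hu : u ≠ 0) (hw : w ≠ 0) (x y ξ : ℝ) :
    gaussianPDFReal x u y * gaussianPDFReal ξ w y =
      gaussianPDFReal ξ (u + w) x *
        gaussianPDFReal ((w * x + u * ξ) / (u + w)) (u * w / (u + w)) y := by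
  have prefactor : (√(2 * Real.pi * u))⁻¹ * (√(2 * Real.pi * w))⁻¹ =
      (√(2 * Real.pi * (u + w)))⁻¹ * (√(2 * Real.pi * (u * w / (u + w))))⁻¹ := by
    rw [← mul_inv, ← mul_inv, ← Real.sqrt_mul (by positivity), ← Real.sqrt_mul (by positivity)]
    congr 2
    field_simp
  have exponent : -(y - x) ^ 2 / (2 * u) + -(y - ξ) ^ 2 / (2 * w) =
      -(x - ξ) ^ 2 / (2 * (u + w)) +
        -(y - (w * x + u * ξ) / (u + w)) ^ 2 / (2 * (u * w / (u + w))) := by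
    field_simp
    ring
  simp only [gaussianPDFReal, NNReal.coe_add, NNReal.coe_mul, NNReal.coe_div]
  rw [mul_mul_mul_comm, prefactor, ← Real.exp_add, exponent, Real.exp_add, mul_mul_mul_comm]

lemma integrable_gaussianPDFReal_mul_gaussianPDFReal {u w : ℝ≥0} (hu : u ≠ 0) (hw : w ≠ 0)
    (x ξ : ℝ) : Integrable fun y => gaussianPDFReal x u y * gaussianPDFReal ξ w y := by
  simp only [gaussianPDFReal_mul_gaussianPDFReal hu hw]
  exact (integrable_gaussianPDFReal _ _).const_mul _

lemma integral_gaussianPDFReal_mul_gaussianPDFReal {u w : ℝ≥0} (hu : u ≠ 0) (hw : w ≠ 0)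
    (x ξ : ℝ) :
    ∫ y, gaussianPDFReal x u y * gaussianPDFReal ξ w y = gaussianPDFReal ξ (u + w) x := by
  simp only [gaussianPDFReal_mul_gaussianPDFReal hu hw]
  rw [integral_const_mul, integral_gaussianPDFReal_eq_one _ (by positivity), mul_one]

/-- Half of the exponent of the narrower Gaussian is spent on widening the variance; the other half
is kept as a factor that absorbs polynomial growth. -/
lemma gaussianPDFReal_le_mul_exp_mul {v V : ℝ≥0} (hv : v ≠ 0) (hvV : 2 * v ≤ V) (ξ x : ℝ) :
    gaussianPDFReal ξ v x ≤
      √(V / v) * Real.exp (-((x - ξ) ^ 2 / (2 * V))) * gaussianPDFReal ξ V x := by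
  have hv' : (0 : ℝ) < v := by positivity
  have hvV' : 2 * (v : ℝ) ≤ V := mod_cast hvV
  have hV' : (0 : ℝ) < V := by linarith
  have prefactor : (√(2 * Real.pi * v))⁻¹ = √(V / v) * (√(2 * Real.pi * V))⁻¹ := by
    rw [← Real.sqrt_inv, ← Real.sqrt_inv, ← Real.sqrt_mul (by positivity)]
    congr 1
    field_simp
  have exponent : -(x - ξ) ^ 2 / (2 * v) ≤ -((x - ξ) ^ 2 / (2 * V)) + -(x - ξ) ^ 2 / (2 * V) := by
    calc -(x - ξ) ^ 2 / (2 * v) = -((x - ξ) ^ 2 / (2 * v)) := neg_div _ _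
      _ ≤ -((x - ξ) ^ 2 / V) := by gcongr
      _ = _ := by ring
  calc gaussianPDFReal ξ v x = (√(2 * Real.pi * v))⁻¹ * Real.exp (-(x - ξ) ^ 2 / (2 * v)) := rfl
    _ ≤ (√(V / v) * (√(2 * Real.pi * V))⁻¹) *
        Real.exp (-((x - ξ) ^ 2 / (2 * V)) + -(x - ξ) ^ 2 / (2 * V)) := by
      rw [prefactor]
      gcongr
    _ = _ := by rw [Real.exp_add, gaussianPDFReal]; ring

/-- Both sides vanish identically when `v = 0`. -/
lemma hasDerivAt_gaussianPDFReal (ξ : ℝ) (v : ℝ≥0) (x : ℝ) :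
    HasDerivAt (gaussianPDFReal ξ v) (-((x - ξ) / v) * gaussianPDFReal ξ v x) x := by
  have exponent : HasDerivAt (fun y : ℝ => -(y - ξ) ^ 2 / (2 * v)) (-((x - ξ) / v)) x := by
    refine ((((hasDerivAt_id x).sub_const ξ).pow 2).neg.div_const (2 * (v : ℝ))).congr_deriv ?_
    simp only [id, Nat.cast_ofNat, Nat.add_one_sub_one, pow_one, mul_one]
    rw [← mul_neg, mul_div_mul_left _ _ two_ne_zero, neg_div]
  refine (exponent.exp.const_mul (√(2 * Real.pi * v))⁻¹).congr_deriv ?_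
  rw [gaussianPDFReal]
  ring

lemma iteratedDeriv_two_gaussianPDFReal (ξ : ℝ) (v : ℝ≥0) (x : ℝ) :
    iteratedDeriv 2 (gaussianPDFReal ξ v) x =
      (((x - ξ) / v) ^ 2 - (v : ℝ)⁻¹) * gaussianPDFReal ξ v x := by
  have deriv_eq : deriv (gaussianPDFReal ξ v) =
      fun y => -((y - ξ) / v) * gaussianPDFReal ξ v y :=
    funext fun y => (hasDerivAt_gaussianPDFReal ξ v y).deriv
  rw [iteratedDeriv_succ, iteratedDeriv_one, deriv_eq]
  refine ((((hasDerivAt_id x).sub_const ξ).div_const (v : ℝ)).fun_neg.mul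
    (hasDerivAt_gaussianPDFReal ξ v x)).deriv.trans ?_
  simp only [id]
  ring

lemma tendsto_gaussianPDFReal {ι : Type*} {l : Filter ι} {v : ι → ℝ≥0} {v₀ : ℝ≥0} (hv₀ : v₀ ≠ 0)
    (hv : Tendsto v l (𝓝 v₀)) (ξ x : ℝ) :
    Tendsto (fun i => gaussianPDFReal ξ (v i) x) l (𝓝 (gaussianPDFReal ξ v₀ x)) := by
  have hv' : Tendsto (fun i => (v i : ℝ)) l (𝓝 v₀) := NNReal.tendsto_coe.2 hv
  simp only [gaussianPDFReal]
  exact ((hv'.const_mul _).sqrt.inv₀ (by positivity)).mul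
    ((Real.continuous_exp.tendsto _).comp
      (tendsto_const_nhds.div (hv'.const_mul 2) (by positivity)))

/-! ### Singular time weights -/

/-- The weight `s^{β-1} e^{μs}` on `s > 0`, extended by `0` to `s ≤ 0`. -/
noncomputable def timeWeight (β μ s : ℝ) : ℝ :=
  (Ioi 0).indicator (fun s => s ^ (β - 1) * Real.exp (μ * s)) s

section TimeWeight

variable {β μ μ₁ μ₂ ν s u w : ℝ}

lemma timeWeight_of_pos (hs : 0 < s) : timeWeight β μ s = s ^ (β - 1) * Real.exp (μ * s) :=
  indicator_of_mem (mem_Ioi.2 hs) _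

lemma timeWeight_of_nonpos (hs : s ≤ 0) : timeWeight β μ s = 0 :=
  indicator_of_notMem (notMem_Ioi.2 hs) _

lemma timeWeight_nonneg (β μ s : ℝ) : 0 ≤ timeWeight β μ s :=
  indicator_nonneg (fun _ hr => mul_nonneg (Real.rpow_nonneg (le_of_lt hr) _) (Real.exp_pos _).le) _

lemma timeWeight_mono_rate (h : μ₁ ≤ μ₂) (s : ℝ) : timeWeight β μ₁ s ≤ timeWeight β μ₂ s := by
  rcases le_or_gt s 0 with hs | hs
  · simp only [timeWeight_of_nonpos hs, le_refl]
  · simp only [timeWeight_of_pos hs]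
    gcongr

lemma integrable_timeWeight (hβ : 0 < β) (hν : 0 < ν) : Integrable (timeWeight β (-ν)) := by
  refine (integrable_indicator_iff measurableSet_Ioi).2 ?_
  simpa only [Real.rpow_one] using
    integrableOn_rpow_mul_exp_neg_mul_rpow (s := β - 1) (by linarith) one_pos hν

lemma integral_timeWeight (hβ : 0 < β) (hν : 0 < ν) :
    ∫ s, timeWeight β (-ν) s = (1 / ν) ^ β * Real.Gamma β := by
  rw [← Real.integral_rpow_mul_exp_neg_mul_Ioi hβ hν]
  simp only [← neg_mul]
  exact integral_indicator measurableSet_Ioi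

lemma rpow_le_timeWeight {γ : ℝ} (hs : 0 < s) (hβγ : β - 1 ≤ γ) (hγβ : γ ≤ β) :
    s ^ γ ≤ timeWeight β 1 s := by
  have h : s ^ (γ - (β - 1)) ≤ Real.exp (1 * s) := by
    calc s ^ (γ - (β - 1)) ≤ (1 + s) ^ (γ - (β - 1)) := by gcongr; linarith
      _ ≤ (1 + s) ^ (1 : ℝ) := by gcongr <;> linarith
      _ ≤ Real.exp (1 * s) := by rw [Real.rpow_one, one_mul, add_comm]; exact Real.add_one_le_exp s
  calc s ^ γ = s ^ (β - 1) * s ^ (γ - (β - 1)) := by rw [← Real.rpow_add hs, add_sub_cancel]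
    _ ≤ s ^ (β - 1) * Real.exp (1 * s) := by gcongr
    _ = timeWeight β 1 s := (timeWeight_of_pos hs).symm

lemma max_rpow_le (hβ : β ≤ 1) (hu : 0 < u) (hw : 0 < w) :
    max u w ^ (β - 1) ≤ 2 ^ (1 - β) * (u + w) ^ (β - 1) := by
  have hmax : (u + w) / 2 ≤ max u w := by
    linarith [le_max_left u w, le_max_right u w]
  calc max u w ^ (β - 1) ≤ ((u + w) / 2) ^ (β - 1) :=
        Real.rpow_le_rpow_of_nonpos (by positivity) hmax (by linarith)
    _ = 2 ^ (1 - β) * (u + w) ^ (β - 1) := by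
        rw [Real.div_rpow (by positivity) (by positivity), div_eq_mul_inv, mul_comm,
          ← Real.rpow_neg two_pos.le, neg_sub]

lemma min_rpow_mul_exp_neg_mul_le (hν : 0 ≤ ν) (hu : 0 < u) (hw : 0 < w) :
    min u w ^ (β - 1) * Real.exp (-ν * u) ≤ timeWeight β (-ν) u + timeWeight β (-ν) w := by
  calc min u w ^ (β - 1) * Real.exp (-ν * u)
      ≤ min u w ^ (β - 1) * Real.exp (-ν * min u w) := by
        gcongr _ * Real.exp ?_
        nlinarith [min_le_left u w]
    _ = timeWeight β (-ν) (min u w) := (timeWeight_of_pos (lt_min hu hw)).symm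
    _ ≤ timeWeight β (-ν) u + timeWeight β (-ν) w := by
        rcases le_total u w with h | h
        · rw [min_eq_left h]; exact le_add_of_nonneg_right (timeWeight_nonneg _ _ _)
        · rw [min_eq_right h]; exact le_add_of_nonneg_left (timeWeight_nonneg _ _ _)

/-- The larger of `u` and `w` contributes the singularity of the result at `u + w`; what remains is
integrable in `u` and `w`, with an integral that tends to `0` as `μ₂ - μ₁ → ∞`. -/
lemma timeWeight_mul_timeWeight_le (hβ : β ≤ 1) (hμ : μ₁ ≤ μ₂) (u w : ℝ) :
    timeWeight β μ₁ u * timeWeight β μ₂ w ≤ timeWeight β μ₂ (u + w) *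
      (2 ^ (1 - β) * (timeWeight β (-(μ₂ - μ₁)) u + timeWeight β (-(μ₂ - μ₁)) w)) := by
  have rhs_nonneg : 0 ≤ timeWeight β μ₂ (u + w) *
      (2 ^ (1 - β) * (timeWeight β (-(μ₂ - μ₁)) u + timeWeight β (-(μ₂ - μ₁)) w)) :=
    mul_nonneg (timeWeight_nonneg _ _ _)
      (mul_nonneg (by positivity) (add_nonneg (timeWeight_nonneg _ _ _) (timeWeight_nonneg _ _ _)))
  rcases le_or_gt u 0 with hu | hu
  · rwa [timeWeight_of_nonpos hu, zero_mul]
  rcases le_or_gt w 0 with hw | hw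
  · rwa [timeWeight_of_nonpos hw, mul_zero]
  set ν := μ₂ - μ₁
  have powers : u ^ (β - 1) * w ^ (β - 1) = max u w ^ (β - 1) * min u w ^ (β - 1) := by
    rcases le_total u w with h | h <;> simp [h, mul_comm]
  have exponentials : Real.exp (μ₁ * u) * Real.exp (μ₂ * w) =
      Real.exp (μ₂ * (u + w)) * Real.exp (-ν * u) := by
    rw [← Real.exp_add, ← Real.exp_add]
    congr 1
    ring
  calc timeWeight β μ₁ u * timeWeight β μ₂ w
      = (u ^ (β - 1) * w ^ (β - 1)) * (Real.exp (μ₁ * u) * Real.exp (μ₂ * w)) := by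
        rw [timeWeight_of_pos hu, timeWeight_of_pos hw]; ring
    _ = Real.exp (μ₂ * (u + w)) * max u w ^ (β - 1) *
          (min u w ^ (β - 1) * Real.exp (-ν * u)) := by rw [powers, exponentials]; ring
    _ ≤ Real.exp (μ₂ * (u + w)) * (2 ^ (1 - β) * (u + w) ^ (β - 1)) *
          (timeWeight β (-ν) u + timeWeight β (-ν) w) := by
        gcongr
        · exact max_rpow_le hβ hu hw
        · exact min_rpow_mul_exp_neg_mul_le (sub_nonneg.2 hμ) hu hw
    _ = _ := by rw [timeWeight_of_pos (add_pos hu hw)]; ring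

end TimeWeight

/-! ### Volterra kernels -/

/-- The time density that remains when two time weights of order `β` with rates differing by `ν` are
convolved over `τ < σ < t` and the weight at `t - τ` is factored out. -/
noncomputable def timeProfile (β ν t τ σ : ℝ) : ℝ :=
  2 ^ (1 - β) * (timeWeight β (-ν) (t - σ) + timeWeight β (-ν) (σ - τ))

/-- The integral of `timeProfile β ν t τ`: the factor by which a kernel of rate `μ + ν` shrinks when
it is convolved with a kernel of rate `μ`. -/
noncomputable def convConst (β ν : ℝ) : ℝ :=
  2 ^ (1 - β) * (2 * ((1 / ν) ^ β * Real.Gamma β))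

section TimeProfile

variable {β ν : ℝ}

lemma timeProfile_nonneg (β ν t τ σ : ℝ) : 0 ≤ timeProfile β ν t τ σ :=
  mul_nonneg (by positivity) (add_nonneg (timeWeight_nonneg _ _ _) (timeWeight_nonneg _ _ _))

lemma integrable_timeProfile (hβ : 0 < β) (hν : 0 < ν) (t τ : ℝ) :
    Integrable (timeProfile β ν t τ) :=
  (((integrable_timeWeight hβ hν).comp_sub_left t).add
    ((integrable_timeWeight hβ hν).comp_sub_right τ)).const_mul _

lemma integral_timeProfile (hβ : 0 < β) (hν : 0 < ν) (t τ : ℝ) :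
    ∫ σ, timeProfile β ν t τ σ = convConst β ν := by
  have hint := integrable_timeWeight hβ hν
  simp only [timeProfile]
  rw [integral_const_mul, integral_add (hint.comp_sub_left t) (hint.comp_sub_right τ),
    integral_sub_left_eq_self (timeWeight β (-ν)) volume t,
    integral_sub_right_eq_self (timeWeight β (-ν)) τ, integral_timeWeight hβ hν, ← two_mul,
    convConst]

lemma tendsto_convConst (hβ : 0 < β) : Tendsto (convConst β) atTop (𝓝 0) := by
  have hpow : Tendsto (fun ν : ℝ => (1 / ν) ^ β) atTop (𝓝 0) := by
    refine (tendsto_rpow_neg_atTop hβ).congr' ?_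
    filter_upwards [eventually_ge_atTop 0] with ν hν
    rw [one_div, Real.inv_rpow hν, Real.rpow_neg hν]
  have hmul := ((hpow.mul_const (Real.Gamma β)).const_mul 2).const_mul (2 ^ (1 - β))
  rwa [zero_mul, mul_zero, mul_zero] at hmul

lemma exists_rate_mul_convConst_le_half (hβ : 0 < β) (C μ₀ : ℝ) :
    ∃ μ > μ₀, C * convConst β (μ - μ₀) ≤ 1 / 2 := by
  have hlim : Tendsto (fun ν => C * convConst β ν) atTop (𝓝 0) := by
    simpa only [mul_zero] using (tendsto_convConst hβ).const_mul C
  obtain ⟨ν, hν, hν0⟩ :=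
    ((hlim.eventually_le_const (u := 1 / 2) (by norm_num)).and (eventually_gt_atTop 0)).exists
  exact ⟨μ₀ + ν, lt_add_of_pos_right _ hν0, by rwa [add_sub_cancel_left]⟩

end TimeProfile

/-- A kernel `F x t ξ τ` from the source point `(ξ, τ)` to the target point `(x, t)`. -/
abbrev SpaceTimeKernel : Type := ℝ → ℝ → ℝ → ℝ → ℝ

/-- The model Volterra kernel: the Gaussian density with variance `κ (t - τ)` times the time weight
of order `β` and rate `μ`. It is `0` unless `τ < t`. -/
noncomputable def majorant (β μ κ : ℝ) : SpaceTimeKernel := fun x t ξ τ =>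
  timeWeight β μ (t - τ) * gaussianPDFReal ξ (κ * (t - τ)).toNNReal x

section Majorant

variable {β μ μ₁ μ₂ κ x t ξ τ : ℝ}

lemma majorant_nonneg (β μ κ x t ξ τ : ℝ) : 0 ≤ majorant β μ κ x t ξ τ :=
  mul_nonneg (timeWeight_nonneg _ _ _) (gaussianPDFReal_nonneg _ _ _)

lemma majorant_eq_zero_of_le (h : t ≤ τ) : majorant β μ κ x t ξ τ = 0 := by
  rw [majorant, timeWeight_of_nonpos (sub_nonpos.2 h), zero_mul]

lemma majorant_mono_rate (h : μ₁ ≤ μ₂) (x t ξ τ : ℝ) :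
    majorant β μ₁ κ x t ξ τ ≤ majorant β μ₂ κ x t ξ τ :=
  mul_le_mul_of_nonneg_right (timeWeight_mono_rate h _) (gaussianPDFReal_nonneg _ _ _)

lemma majorant_mul_majorant (y σ : ℝ) :
    majorant β μ₁ κ x t y σ * majorant β μ₂ κ y σ ξ τ =
      (timeWeight β μ₁ (t - σ) * timeWeight β μ₂ (σ - τ)) *
        (gaussianPDFReal x (κ * (t - σ)).toNNReal y *
          gaussianPDFReal ξ (κ * (σ - τ)).toNNReal y) := by
  simp only [majorant, gaussianPDFReal_comm _ y x]
  ring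

lemma integrable_majorant_mul_majorant (hκ : 0 < κ) (x t ξ τ σ : ℝ) :
    Integrable fun y => majorant β μ₁ κ x t y σ * majorant β μ₂ κ y σ ξ τ := by
  rcases le_or_gt t σ with h₁ | h₁
  · simp [majorant_eq_zero_of_le h₁]
  rcases le_or_gt σ τ with h₂ | h₂
  · simp [majorant_eq_zero_of_le h₂]
  simp only [majorant_mul_majorant]
  exact (integrable_gaussianPDFReal_mul_gaussianPDFReal
    (Real.toNNReal_pos.2 (mul_pos hκ (sub_pos.2 h₁))).ne'
    (Real.toNNReal_pos.2 (mul_pos hκ (sub_pos.2 h₂))).ne' x ξ).const_mul _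

lemma integral_majorant_mul_majorant_le (hκ : 0 < κ) (hβ : β ≤ 1) (hμ : μ₁ ≤ μ₂)
    (x t ξ τ σ : ℝ) :
    ∫ y, majorant β μ₁ κ x t y σ * majorant β μ₂ κ y σ ξ τ ≤
      majorant β μ₂ κ x t ξ τ * timeProfile β (μ₂ - μ₁) t τ σ := by
  have rhs_nonneg : 0 ≤ majorant β μ₂ κ x t ξ τ * timeProfile β (μ₂ - μ₁) t τ σ :=
    mul_nonneg (majorant_nonneg _ _ _ _ _ _ _) (timeProfile_nonneg _ _ _ _ _)
  rcases le_or_gt t σ with h₁ | h₁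
  · simpa only [majorant_eq_zero_of_le h₁, zero_mul, integral_zero] using rhs_nonneg
  rcases le_or_gt σ τ with h₂ | h₂
  · simpa only [majorant_eq_zero_of_le h₂, mul_zero, integral_zero] using rhs_nonneg
  have hu : 0 < κ * (t - σ) := mul_pos hκ (sub_pos.2 h₁)
  have hw : 0 < κ * (σ - τ) := mul_pos hκ (sub_pos.2 h₂)
  have hvar : (κ * (t - σ)).toNNReal + (κ * (σ - τ)).toNNReal = (κ * (t - τ)).toNNReal := by
    rw [← Real.toNNReal_add hu.le hw.le, ← mul_add, sub_add_sub_cancel]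
  simp only [majorant_mul_majorant]
  rw [integral_const_mul, integral_gaussianPDFReal_mul_gaussianPDFReal
    (Real.toNNReal_pos.2 hu).ne' (Real.toNNReal_pos.2 hw).ne', hvar]
  calc timeWeight β μ₁ (t - σ) * timeWeight β μ₂ (σ - τ) *
        gaussianPDFReal ξ (κ * (t - τ)).toNNReal x
      ≤ timeWeight β μ₂ (t - σ + (σ - τ)) * timeProfile β (μ₂ - μ₁) t τ σ *
        gaussianPDFReal ξ (κ * (t - τ)).toNNReal x :=
        mul_le_mul_of_nonneg_right (timeWeight_mul_timeWeight_le hβ hμ _ _)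
          (gaussianPDFReal_nonneg _ _ _)
    _ = majorant β μ₂ κ x t ξ τ * timeProfile β (μ₂ - μ₁) t τ σ := by
        rw [sub_add_sub_cancel, majorant]; ring

end Majorant

/-- Measurable kernels dominated by `C * majorant β μ κ`; in particular they vanish unless
`τ < t`. -/
structure IsVolterraKernel (β μ κ C : ℝ) (F : SpaceTimeKernel) : Prop where
  const_nonneg : 0 ≤ C
  measurable : Measurable fun z : (ℝ × ℝ) × ℝ × ℝ => F z.1.1 z.1.2 z.2.1 z.2.2
  abs_le : ∀ x t ξ τ, |F x t ξ τ| ≤ C * majorant β μ κ x t ξ τ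

/-- The space-time convolution `∫_τ^t ∫_ℝ A(x,t,y,σ) F(y,σ,ξ,τ) dy dσ`. -/
noncomputable def stConv (A F : SpaceTimeKernel) : SpaceTimeKernel := fun x t ξ τ =>
  ∫ σ in τ..t, ∫ y, A x t y σ * F y σ ξ τ

section Convolution

variable {β μ μ₁ μ₂ κ C C' D : ℝ} {A F : SpaceTimeKernel}

namespace IsVolterraKernel

lemma mono (hF : IsVolterraKernel β μ₁ κ C F) (hμ : μ₁ ≤ μ₂) (hC : C ≤ C') :
    IsVolterraKernel β μ₂ κ C' F where
  const_nonneg := hF.const_nonneg.trans hC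
  measurable := hF.measurable
  abs_le x t ξ τ := (hF.abs_le x t ξ τ).trans <|
    mul_le_mul hC (majorant_mono_rate hμ _ _ _ _) (majorant_nonneg _ _ _ _ _ _ _)
      (hF.const_nonneg.trans hC)

lemma eq_zero_of_le (hF : IsVolterraKernel β μ κ C F) {x t ξ τ : ℝ} (h : t ≤ τ) :
    F x t ξ τ = 0 :=
  abs_nonpos_iff.1 <| (hF.abs_le x t ξ τ).trans_eq <| by rw [majorant_eq_zero_of_le h, mul_zero]

lemma abs_mul_le (hA : IsVolterraKernel β μ₁ κ C A) (hF : IsVolterraKernel β μ₂ κ D F)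
    (x t ξ τ y σ : ℝ) :
    |A x t y σ * F y σ ξ τ| ≤ C * D * (majorant β μ₁ κ x t y σ * majorant β μ₂ κ y σ ξ τ) := by
  rw [abs_mul, mul_mul_mul_comm]
  exact mul_le_mul (hA.abs_le _ _ _ _) (hF.abs_le _ _ _ _) (abs_nonneg _)
    ((abs_nonneg _).trans (hA.abs_le _ _ _ _))

lemma abs_integral_mul_le (hA : IsVolterraKernel β μ₁ κ C A) (hF : IsVolterraKernel β μ₂ κ D F)
    (hκ : 0 < κ) (hβ : β ≤ 1) (hμ : μ₁ ≤ μ₂) (x t ξ τ σ : ℝ) :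
    |∫ y, A x t y σ * F y σ ξ τ| ≤
      C * D * (majorant β μ₂ κ x t ξ τ * timeProfile β (μ₂ - μ₁) t τ σ) := by
  calc |∫ y, A x t y σ * F y σ ξ τ|
      ≤ ∫ y, C * D * (majorant β μ₁ κ x t y σ * majorant β μ₂ κ y σ ξ τ) :=
        norm_integral_le_of_norm_le (f := fun y => A x t y σ * F y σ ξ τ)
          ((integrable_majorant_mul_majorant hκ x t ξ τ σ).const_mul (C * D))
          (Eventually.of_forall fun y => abs_mul_le hA hF x t ξ τ y σ)
    _ ≤ _ := by
        rw [integral_const_mul]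
        exact mul_le_mul_of_nonneg_left (integral_majorant_mul_majorant_le hκ hβ hμ x t ξ τ σ)
          (mul_nonneg hA.const_nonneg hF.const_nonneg)

lemma stConv_eq_integral (hA : IsVolterraKernel β μ₁ κ C A) (hF : IsVolterraKernel β μ₂ κ D F)
    (x t ξ τ : ℝ) : stConv A F x t ξ τ = ∫ σ, ∫ y, A x t y σ * F y σ ξ τ := by
  refine intervalIntegral.integral_eq_integral_of_support_subset fun σ hσ => ?_
  by_contra hmem
  refine hσ ?_
  rcases le_or_gt σ τ with h | h
  · simp only [hF.eq_zero_of_le h, mul_zero, integral_zero]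
  · have htσ : t ≤ σ := le_of_not_ge fun hσt => hmem ⟨h, hσt⟩
    simp only [hA.eq_zero_of_le htσ, zero_mul, integral_zero]

lemma stronglyMeasurable_integral_mul (hA : IsVolterraKernel β μ₁ κ C A)
    (hF : IsVolterraKernel β μ₂ κ D F) :
    StronglyMeasurable fun w : ((ℝ × ℝ) × ℝ × ℝ) × ℝ =>
      ∫ y, A w.1.1.1 w.1.1.2 y w.2 * F y w.2 w.1.2.1 w.1.2.2 := by
  have hargsA : Measurable fun p : (((ℝ × ℝ) × ℝ × ℝ) × ℝ) × ℝ => (p.1.1.1, (p.2, p.1.2)) := by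
    fun_prop
  have hargsF : Measurable fun p : (((ℝ × ℝ) × ℝ × ℝ) × ℝ) × ℝ => ((p.2, p.1.2), p.1.1.2) := by
    fun_prop
  exact ((hA.measurable.comp hargsA).mul
    (hF.measurable.comp hargsF)).stronglyMeasurable.integral_prod_right'

protected lemma stConv (hA : IsVolterraKernel β μ₁ κ C A) (hF : IsVolterraKernel β μ₂ κ D F)
    (hκ : 0 < κ) (hβ0 : 0 < β) (hβ1 : β ≤ 1) (hμ : μ₁ < μ₂) :
    IsVolterraKernel β μ₂ κ (C * D * convConst β (μ₂ - μ₁)) (stConv A F) where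
  const_nonneg := mul_nonneg (mul_nonneg hA.const_nonneg hF.const_nonneg) <|
    integral_timeProfile hβ0 (sub_pos.2 hμ) 0 0 ▸ integral_nonneg (timeProfile_nonneg _ _ _ _)
  measurable := by
    simp only [stConv_eq_integral hA hF]
    exact (stronglyMeasurable_integral_mul hA hF).integral_prod_right'.measurable
  abs_le x t ξ τ := by
    rw [stConv_eq_integral hA hF]
    calc |∫ σ, ∫ y, A x t y σ * F y σ ξ τ|
        ≤ ∫ σ, C * D * (majorant β μ₂ κ x t ξ τ * timeProfile β (μ₂ - μ₁) t τ σ) :=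
          norm_integral_le_of_norm_le (f := fun σ => ∫ y, A x t y σ * F y σ ξ τ)
            (((integrable_timeProfile hβ0 (sub_pos.2 hμ) t τ).const_mul _).const_mul _)
            (Eventually.of_forall (abs_integral_mul_le hA hF hκ hβ1 hμ.le x t ξ τ))
      _ = C * D * convConst β (μ₂ - μ₁) * majorant β μ₂ κ x t ξ τ := by
          rw [integral_const_mul, integral_const_mul, integral_timeProfile hβ0 (sub_pos.2 hμ)]
          ring

end IsVolterraKernel

lemma tendsto_stConv {ι : Type*} {l : Filter ι} [l.IsCountablyGenerated]
    {A F : ι → SpaceTimeKernel} {A₀ F₀ : SpaceTimeKernel} (hκ : 0 < κ) (hβ0 : 0 < β) (hβ1 : β ≤ 1)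
    (hμ : μ₁ < μ₂) (hA : ∀ i, IsVolterraKernel β μ₁ κ C (A i))
    (hF : ∀ i, IsVolterraKernel β μ₂ κ D (F i))
    (hA₀ : ∀ x t ξ τ, Tendsto (fun i => A i x t ξ τ) l (𝓝 (A₀ x t ξ τ)))
    (hF₀ : ∀ x t ξ τ, Tendsto (fun i => F i x t ξ τ) l (𝓝 (F₀ x t ξ τ))) (x t ξ τ : ℝ) :
    Tendsto (fun i => stConv (A i) (F i) x t ξ τ) l (𝓝 (stConv A₀ F₀ x t ξ τ)) := by
  have inner (σ : ℝ) : Tendsto (fun i => ∫ y, A i x t y σ * F i y σ ξ τ) l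
      (𝓝 (∫ y, A₀ x t y σ * F₀ y σ ξ τ)) :=
    tendsto_integral_filter_of_dominated_convergence
      (fun y => C * D * (majorant β μ₁ κ x t y σ * majorant β μ₂ κ y σ ξ τ))
      (Eventually.of_forall fun i => by
        have hA' := (hA i).measurable.comp (measurable_prodMk_left (x := (x, t)))
        have hF' := (hF i).measurable.comp (measurable_prodMk_right (y := (ξ, τ)))
        exact ((hA'.comp measurable_prodMk_right).mul
          (hF'.comp measurable_prodMk_right)).aestronglyMeasurable)
      (Eventually.of_forall fun i => Eventually.of_forall fun y =>
        (hA i).abs_mul_le (hF i) x t ξ τ y σ)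
      ((integrable_majorant_mul_majorant hκ x t ξ τ σ).const_mul _)
      (Eventually.of_forall fun y => (hA₀ x t y σ).mul (hF₀ y σ ξ τ))
  exact intervalIntegral.tendsto_integral_filter_of_dominated_convergence
    (fun σ => C * D * (majorant β μ₂ κ x t ξ τ * timeProfile β (μ₂ - μ₁) t τ σ))
    (Eventually.of_forall fun i =>
      (((hA i).stronglyMeasurable_integral_mul (hF i)).measurable.comp
        (measurable_prodMk_left (x := ((x, t), (ξ, τ))))).aestronglyMeasurable)
    (Eventually.of_forall fun i => Eventually.of_forall fun σ _ =>
      (hA i).abs_integral_mul_le (hF i) hκ hβ1 hμ.le x t ξ τ σ)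
    (((integrable_timeProfile hβ0 (sub_pos.2 hμ) t τ).const_mul _).const_mul _).intervalIntegrable
    (Eventually.of_forall fun σ _ => inner σ)

end Convolution

/-! ### The resolvent series -/

/-- The iterates `iteratedKernel L m = L * ⋯ * L` with `m + 1` factors for space-time
convolution. -/
noncomputable def iteratedKernel (L : SpaceTimeKernel) : ℕ → SpaceTimeKernel
  | 0 => L
  | m + 1 => stConv L (iteratedKernel L m)

/-- The alternating Neumann series of `L`, the solution `φ` of the Volterra equation
`φ = -L - L * φ`. -/
noncomputable def resolventKernel (L : SpaceTimeKernel) : SpaceTimeKernel := fun x t ξ τ =>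
  ∑' m : ℕ, (-1) ^ (m + 1) * iteratedKernel L m x t ξ τ

section Resolvent

variable {β μ₀ μ κ C : ℝ} {L : SpaceTimeKernel}

lemma IsVolterraKernel.iteratedKernel (hL : IsVolterraKernel β μ₀ κ C L) (hκ : 0 < κ)
    (hβ0 : 0 < β) (hβ1 : β ≤ 1) (hμ : μ₀ < μ) (hC : C * convConst β (μ - μ₀) ≤ 1 / 2) (m : ℕ) :
    IsVolterraKernel β μ κ (C * (1 / 2) ^ m) (iteratedKernel L m) := by
  induction m with
  | zero => exact hL.mono hμ.le (by rw [pow_zero, mul_one])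
  | succ m ih =>
    refine (hL.stConv ih hκ hβ0 hβ1 hμ).mono le_rfl ?_
    calc C * (C * (1 / 2) ^ m) * convConst β (μ - μ₀)
        = C * (1 / 2) ^ m * (C * convConst β (μ - μ₀)) := by ring
      _ ≤ C * (1 / 2) ^ m * (1 / 2) := mul_le_mul_of_nonneg_left hC ih.const_nonneg
      _ = C * (1 / 2) ^ (m + 1) := by rw [pow_succ, mul_assoc]

lemma norm_resolventKernel_term_le {x t ξ τ : ℝ} {m : ℕ}
    (h : IsVolterraKernel β μ κ (C * (1 / 2) ^ m) (iteratedKernel L m)) :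
    ‖(-1) ^ (m + 1) * iteratedKernel L m x t ξ τ‖ ≤
      (1 / 2) ^ m * (C * majorant β μ κ x t ξ τ) := by
  rw [norm_mul, norm_pow, norm_neg, norm_one, one_pow, one_mul, mul_left_comm, ← mul_assoc]
  exact h.abs_le x t ξ τ

lemma hasSum_resolventKernel
    (hL : ∀ m, IsVolterraKernel β μ κ (C * (1 / 2) ^ m) (iteratedKernel L m)) (x t ξ τ : ℝ) :
    HasSum (fun m : ℕ => (-1) ^ (m + 1) * iteratedKernel L m x t ξ τ)
      (resolventKernel L x t ξ τ) :=
  (Summable.of_norm_bounded (summable_geometric_two.mul_right _)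
    fun m => norm_resolventKernel_term_le (hL m)).hasSum

lemma isVolterraKernel_resolventKernel
    (hL : ∀ m, IsVolterraKernel β μ κ (C * (1 / 2) ^ m) (iteratedKernel L m)) :
    IsVolterraKernel β μ κ (2 * C) (resolventKernel L) where
  const_nonneg := mul_nonneg two_pos.le <| by simpa only [pow_zero, mul_one] using
    (hL 0).const_nonneg
  measurable := measurable_of_tendsto_metrizable
    (fun n => Finset.measurable_sum (Finset.range n) fun m _ => (hL m).measurable.const_mul _)
    (tendsto_pi_nhds.2 fun z => by
      simpa only [Finset.sum_apply] using
        (hasSum_resolventKernel hL z.1.1 z.1.2 z.2.1 z.2.2).tendsto_sum_nat)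
  abs_le x t ξ τ := by
    rw [mul_assoc]
    exact tsum_of_norm_bounded (hasSum_geometric_two.mul_right _)
      fun m => norm_resolventKernel_term_le (hL m)

variable {ι : Type*} {l : Filter ι} [l.IsCountablyGenerated] {L : ι → SpaceTimeKernel}
  {L₀ : SpaceTimeKernel}

lemma tendsto_iteratedKernel (hκ : 0 < κ) (hβ0 : 0 < β) (hβ1 : β ≤ 1) (hμ : μ₀ < μ)
    (hC : C * convConst β (μ - μ₀) ≤ 1 / 2) (hL : ∀ i, IsVolterraKernel β μ₀ κ C (L i))
    (hL₀ : ∀ x t ξ τ, Tendsto (fun i => L i x t ξ τ) l (𝓝 (L₀ x t ξ τ))) (m : ℕ) (x t ξ τ : ℝ) :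
    Tendsto (fun i => iteratedKernel (L i) m x t ξ τ) l (𝓝 (iteratedKernel L₀ m x t ξ τ)) := by
  induction m generalizing x t ξ τ with
  | zero => exact hL₀ x t ξ τ
  | succ m ih =>
    exact tendsto_stConv hκ hβ0 hβ1 hμ hL
      (fun i => (hL i).iteratedKernel hκ hβ0 hβ1 hμ hC m) hL₀ ih x t ξ τ

lemma tendsto_resolventKernel (hκ : 0 < κ) (hβ0 : 0 < β) (hβ1 : β ≤ 1) (hμ : μ₀ < μ)
    (hC : C * convConst β (μ - μ₀) ≤ 1 / 2) (hL : ∀ i, IsVolterraKernel β μ₀ κ C (L i))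
    (hL₀ : ∀ x t ξ τ, Tendsto (fun i => L i x t ξ τ) l (𝓝 (L₀ x t ξ τ))) (x t ξ τ : ℝ) :
    Tendsto (fun i => resolventKernel (L i) x t ξ τ) l (𝓝 (resolventKernel L₀ x t ξ τ)) :=
  tendsto_tsum_of_dominated_convergence (summable_geometric_two.mul_right _)
    (fun m => (tendsto_iteratedKernel hκ hβ0 hβ1 hμ hC hL hL₀ m x t ξ τ).const_mul _)
    (Eventually.of_forall fun i m =>
      norm_resolventKernel_term_le ((hL i).iteratedKernel hκ hβ0 hβ1 hμ hC m))

/-- The common shape of the parametrix formula `Γ = Z + Z * φ`. -/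
lemma tendsto_add_stConv_resolventKernel {Z : ι → SpaceTimeKernel} {Z₀ : SpaceTimeKernel}
    (hκ : 0 < κ) (hβ0 : 0 < β) (hβ1 : β ≤ 1)
    (hZ : ∀ i, IsVolterraKernel β μ₀ κ C (Z i)) (hL : ∀ i, IsVolterraKernel β μ₀ κ C (L i))
    (hZ₀ : ∀ x t ξ τ, Tendsto (fun i => Z i x t ξ τ) l (𝓝 (Z₀ x t ξ τ)))
    (hL₀ : ∀ x t ξ τ, Tendsto (fun i => L i x t ξ τ) l (𝓝 (L₀ x t ξ τ))) (x t ξ τ : ℝ) :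
    Tendsto (fun i => Z i x t ξ τ + stConv (Z i) (resolventKernel (L i)) x t ξ τ) l
      (𝓝 (Z₀ x t ξ τ + stConv Z₀ (resolventKernel L₀) x t ξ τ)) := by
  obtain ⟨μ, hμ, hC⟩ := exists_rate_mul_convConst_le_half hβ0 C μ₀
  exact (hZ₀ x t ξ τ).add <| tendsto_stConv hκ hβ0 hβ1 hμ hZ
    (fun i => isVolterraKernel_resolventKernel fun m => (hL i).iteratedKernel hκ hβ0 hβ1 hμ hC m)
    hZ₀ (tendsto_resolventKernel hκ hβ0 hβ1 hμ hC hL hL₀) x t ξ τ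

end Resolvent

/-! ### The parametrix kernels -/

/-- The variance `2 a(ξ,τ) (t - τ)` of the Gaussian `Zf a x t ξ τ`, truncated at `0`. -/
noncomputable def frozenVariance (a : ℝ → ℝ → ℝ) (t ξ τ : ℝ) : ℝ≥0 :=
  (2 * a ξ τ * (t - τ)).toNNReal

/-- The multiplier that turns the centred Gaussian density of variance `v` at `z` into
`d ∂ₓₓ + B ∂ₓ + C` applied to it. -/
noncomputable def parametrixFactor (d B C v z : ℝ) : ℝ :=
  d * ((z / v) ^ 2 - v⁻¹) + B * -(z / v) + C

section ParametrixKernels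

variable {a b c : ℝ → ℝ → ℝ} {x t ξ τ : ℝ}

lemma frozenVariance_of_le (ha : 0 ≤ a ξ τ) (h : t ≤ τ) : frozenVariance a t ξ τ = 0 :=
  Real.toNNReal_of_nonpos (mul_nonpos_of_nonneg_of_nonpos (by positivity) (sub_nonpos.2 h))

lemma coe_frozenVariance (ha : 0 ≤ a ξ τ) (h : τ ≤ t) :
    (frozenVariance a t ξ τ : ℝ) = 2 * a ξ τ * (t - τ) :=
  Real.coe_toNNReal _ (mul_nonneg (by positivity) (sub_nonneg.2 h))

lemma frozenVariance_pos (ha : 0 < a ξ τ) (h : τ < t) : 0 < frozenVariance a t ξ τ :=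
  Real.toNNReal_pos.2 (mul_pos (by positivity) (sub_pos.2 h))

lemma Zf_eq_gaussianPDFReal (ha : 0 ≤ a ξ τ) (x t : ℝ) :
    Zf a x t ξ τ = gaussianPDFReal ξ (frozenVariance a t ξ τ) x := by
  rcases le_or_gt t τ with h | h
  · have hnonpos : 4 * Real.pi * a ξ τ * (t - τ) ≤ 0 :=
      mul_nonpos_of_nonneg_of_nonpos (by positivity) (sub_nonpos.2 h)
    rw [frozenVariance_of_le ha h, gaussianPDFReal_zero_var, Zf,
      Real.sqrt_eq_zero_of_nonpos hnonpos, inv_zero, zero_mul, Pi.zero_apply]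
  · rw [Zf, gaussianPDFReal, coe_frozenVariance ha h.le]
    ring_nf

lemma Zf_of_le (ha : 0 ≤ a ξ τ) (h : t ≤ τ) : Zf a x t ξ τ = 0 := by
  rw [Zf_eq_gaussianPDFReal ha, frozenVariance_of_le ha h, gaussianPDFReal_zero_var, Pi.zero_apply]

lemma LZ1_eq_parametrixFactor_mul (ha : 0 ≤ a ξ τ) (b c : ℝ → ℝ → ℝ) (x t : ℝ) :
    LZ1 a b c x t ξ τ =
      parametrixFactor (a ξ τ - a x t) (b x t) (c x t) (frozenVariance a t ξ τ) (x - ξ) *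
        Zf a x t ξ τ := by
  simp only [LZ1, Zf_eq_gaussianPDFReal ha]
  rw [iteratedDeriv_two_gaussianPDFReal, (hasDerivAt_gaussianPDFReal _ _ _).deriv,
    parametrixFactor]
  ring

lemma measurable_frozenVariance (ha : Measurable fun z : ℝ × ℝ => a z.1 z.2) :
    Measurable fun z : (ℝ × ℝ) × ℝ × ℝ => frozenVariance a z.1.2 z.2.1 z.2.2 :=
  (((ha.comp measurable_snd).const_mul 2).mul (by fun_prop)).real_toNNReal

lemma measurable_Zf (ha : Measurable fun z : ℝ × ℝ => a z.1 z.2) :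
    Measurable fun z : (ℝ × ℝ) × ℝ × ℝ => Zf a z.1.1 z.1.2 z.2.1 z.2.2 := by
  have : Measurable fun z : (ℝ × ℝ) × ℝ × ℝ => a z.2.1 z.2.2 := ha.comp measurable_snd
  unfold Zf
  fun_prop

lemma measurable_LZ1 (ha : Measurable fun z : ℝ × ℝ => a z.1 z.2)
    (hb : Measurable fun z : ℝ × ℝ => b z.1 z.2) (hc : Measurable fun z : ℝ × ℝ => c z.1 z.2)
    (hnonneg : ∀ x t, 0 ≤ a x t) :
    Measurable fun z : (ℝ × ℝ) × ℝ × ℝ => LZ1 a b c z.1.1 z.1.2 z.2.1 z.2.2 := by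
  have hv := (measurable_frozenVariance ha).coe_nnreal_real
  have hz : Measurable fun z : (ℝ × ℝ) × ℝ × ℝ =>
      (z.1.1 - z.2.1) / (frozenVariance a z.1.2 z.2.1 z.2.2 : ℝ) :=
    Measurable.div (by fun_prop) hv
  simp only [LZ1_eq_parametrixFactor_mul (hnonneg _ _), parametrixFactor]
  exact (((((ha.comp measurable_snd).sub (ha.comp measurable_fst)).mul
    ((hz.pow_const 2).sub hv.inv)).add ((hb.comp measurable_fst).mul hz.neg)).add
      (hc.comp measurable_fst)).mul (measurable_Zf ha)

section Tendsto

variable {ι : Type*} {l : Filter ι} {aseq bseq cseq : ι → ℝ → ℝ → ℝ}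

lemma tendsto_frozenVariance (ha : Tendsto (fun i => aseq i ξ τ) l (𝓝 (a ξ τ))) (t : ℝ) :
    Tendsto (fun i => frozenVariance (aseq i) t ξ τ) l (𝓝 (frozenVariance a t ξ τ)) :=
  (continuous_real_toNNReal.tendsto _).comp ((ha.const_mul 2).mul_const _)

lemma tendsto_Zf (hseq : ∀ i, 0 ≤ aseq i ξ τ) (hpos : 0 < a ξ τ)
    (ha : Tendsto (fun i => aseq i ξ τ) l (𝓝 (a ξ τ))) (x t : ℝ) :
    Tendsto (fun i => Zf (aseq i) x t ξ τ) l (𝓝 (Zf a x t ξ τ)) := by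
  rcases le_or_gt t τ with h | h
  · simp only [Zf_of_le (hseq _) h, Zf_of_le hpos.le h]
    exact tendsto_const_nhds
  · simp only [Zf_eq_gaussianPDFReal (hseq _), Zf_eq_gaussianPDFReal hpos.le]
    exact tendsto_gaussianPDFReal (frozenVariance_pos hpos h).ne' (tendsto_frozenVariance ha t) _ _

lemma tendsto_LZ1 (hseq : ∀ i, 0 ≤ aseq i ξ τ) (hpos : 0 < a ξ τ)
    (ha₁ : Tendsto (fun i => aseq i x t) l (𝓝 (a x t)))
    (ha₂ : Tendsto (fun i => aseq i ξ τ) l (𝓝 (a ξ τ)))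
    (hb : Tendsto (fun i => bseq i x t) l (𝓝 (b x t)))
    (hc : Tendsto (fun i => cseq i x t) l (𝓝 (c x t))) :
    Tendsto (fun i => LZ1 (aseq i) (bseq i) (cseq i) x t ξ τ) l (𝓝 (LZ1 a b c x t ξ τ)) := by
  simp only [LZ1_eq_parametrixFactor_mul (hseq _), LZ1_eq_parametrixFactor_mul hpos.le]
  rcases le_or_gt t τ with h | h
  · simp only [Zf_of_le (hseq _) h, Zf_of_le hpos.le h, mul_zero]
    exact tendsto_const_nhds
  · have hv₀ : (frozenVariance a t ξ τ : ℝ) ≠ 0 :=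
      NNReal.coe_ne_zero.2 (frozenVariance_pos hpos h).ne'
    have hv := NNReal.tendsto_coe.2 (tendsto_frozenVariance ha₂ t)
    have hz := (tendsto_const_nhds (x := x - ξ)).div hv hv₀
    exact ((((ha₂.sub ha₁).mul ((hz.pow 2).sub (hv.inv₀ hv₀))).add (hb.mul hz.neg)).add hc).mul
      (tendsto_Zf hseq hpos ha₂ x t)

end Tendsto

end ParametrixKernels

/-! ### Gaussian bounds for the parametrix -/

section Bounds

variable {R k c₀ s v z α θ : ℝ}

lemma abs_rpow_two_mul_le (hk : 0 < k) (hθ0 : 0 ≤ θ) (hθ1 : θ ≤ 1) (z : ℝ) :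
    |z| ^ (2 * θ) ≤ k ^ θ * (1 + z ^ 2 / k) := by
  calc |z| ^ (2 * θ) = (k * (z ^ 2 / k)) ^ θ := by
        rw [mul_div_cancel₀ _ hk.ne', Real.rpow_mul (abs_nonneg z), Real.rpow_two, sq_abs]
    _ = k ^ θ * (z ^ 2 / k) ^ θ := Real.mul_rpow hk.le (by positivity)
    _ ≤ k ^ θ * (1 + z ^ 2 / k) ^ θ := by gcongr; linarith
    _ ≤ k ^ θ * (1 + z ^ 2 / k) ^ (1 : ℝ) := by
        gcongr
        exact le_add_of_nonneg_right (by positivity)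
    _ = k ^ θ * (1 + z ^ 2 / k) := by rw [Real.rpow_one]

lemma abs_rpow_add_rpow_half_le (hk : 0 < k) (hs : 0 < s) (hα0 : 0 ≤ α) (hα1 : α ≤ 2) (z : ℝ) :
    |z| ^ α + s ^ (α / 2) ≤ (k ^ (α / 2) + 1) * s ^ (α / 2) * (1 + z ^ 2 / (k * s)) := by
  have hz := abs_rpow_two_mul_le (mul_pos hk hs) (θ := α / 2) (by linarith) (by linarith) z
  rw [mul_div_cancel₀ _ two_ne_zero, Real.mul_rpow hk.le hs.le] at hz
  have hw : 0 ≤ s ^ (α / 2) * (z ^ 2 / (k * s)) := by positivity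
  linarith

lemma abs_div_le (hk : 0 < k) (hs : 0 < s) (hc₀ : 0 < c₀) (hv : c₀ * s ≤ v) (z : ℝ) :
    |z / v| ≤ k ^ (1 / 2 : ℝ) / c₀ * s ^ (-(1 / 2) : ℝ) * (1 + z ^ 2 / (k * s)) := by
  have hz := abs_rpow_two_mul_le (mul_pos hk hs) (θ := 1 / 2) (by norm_num) (by norm_num) z
  rw [mul_one_div_cancel two_ne_zero, Real.rpow_one, Real.mul_rpow hk.le hs.le] at hz
  have hpow : s ^ (1 / 2 : ℝ) * s⁻¹ = s ^ (-(1 / 2) : ℝ) := by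
    rw [← Real.rpow_neg_one, ← Real.rpow_add hs]
    norm_num
  have hv0 : 0 < v := (mul_pos hc₀ hs).trans_le hv
  calc |z / v| = |z| / v := by rw [abs_div, abs_of_pos hv0]
    _ ≤ k ^ (1 / 2 : ℝ) * s ^ (1 / 2 : ℝ) * (1 + z ^ 2 / (k * s)) / (c₀ * s) := by gcongr
    _ = k ^ (1 / 2 : ℝ) / c₀ * (s ^ (1 / 2 : ℝ) * s⁻¹) * (1 + z ^ 2 / (k * s)) := by
        rw [div_mul_eq_div_div]; ring
    _ = _ := by rw [hpow]

lemma abs_sq_div_sub_inv_le (hk : 0 < k) (hs : 0 < s) (hc₀ : 0 < c₀) (hv : c₀ * s ≤ v) (z : ℝ) :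
    |(z / v) ^ 2 - v⁻¹| ≤ (k / c₀ ^ 2 + c₀⁻¹) * s⁻¹ * (1 + z ^ 2 / (k * s)) := by
  have hv0 : 0 < v := (mul_pos hc₀ hs).trans_le hv
  have hquad : (z / v) ^ 2 ≤ k / c₀ ^ 2 * s⁻¹ * (z ^ 2 / (k * s)) := by
    calc (z / v) ^ 2 = z ^ 2 / v ^ 2 := div_pow _ _ _
      _ ≤ z ^ 2 / (c₀ * s) ^ 2 := by gcongr
      _ = k / c₀ ^ 2 * s⁻¹ * (z ^ 2 / (k * s)) := by field_simp
  have hinv : v⁻¹ ≤ c₀⁻¹ * s⁻¹ := by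
    rw [← mul_inv]
    gcongr
  have hk' : 0 ≤ k / c₀ ^ 2 * s⁻¹ := by positivity
  have hc' : 0 ≤ c₀⁻¹ * s⁻¹ * (z ^ 2 / (k * s)) := by positivity
  calc |(z / v) ^ 2 - v⁻¹| ≤ (z / v) ^ 2 + v⁻¹ := by
        rw [abs_le]
        constructor <;> linarith [sq_nonneg (z / v), inv_pos.2 hv0]
    _ ≤ _ := by linarith

lemma one_add_sq_le_two_mul_exp {w : ℝ} (hw : 0 ≤ w) : (1 + w) ^ 2 ≤ 2 * Real.exp w := by
  linarith [Real.quadratic_le_exp_of_nonneg hw]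

/-- The Hölder bound on `d` lowers the singularity `s⁻¹` of the second derivative to
`s ^ (α / 2 - 1)`. -/
lemma abs_mul_sq_div_sub_inv_le {d : ℝ} (hR : 0 ≤ R) (hk : 0 < k) (hs : 0 < s) (hc₀ : 0 < c₀)
    (hα0 : 0 ≤ α) (hα1 : α ≤ 2) (hv : c₀ * s ≤ v) (hd : |d| ≤ R * (|z| ^ α + s ^ (α / 2))) :
    |d * ((z / v) ^ 2 - v⁻¹)| ≤
      R * (k ^ (α / 2) + 1) * (k / c₀ ^ 2 + c₀⁻¹) * 2 *
        (timeWeight (α / 2) 1 s * Real.exp (z ^ 2 / (k * s))) := by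
  set w := z ^ 2 / (k * s)
  have hw : 0 ≤ w := by positivity
  have hweight : s ^ (α / 2) * s⁻¹ ≤ timeWeight (α / 2) 1 s := by
    rw [← div_eq_mul_inv, ← Real.rpow_sub_one hs.ne']
    exact rpow_le_timeWeight hs le_rfl (by linarith)
  calc |d * ((z / v) ^ 2 - v⁻¹)|
      ≤ R * ((k ^ (α / 2) + 1) * s ^ (α / 2) * (1 + w)) *
          ((k / c₀ ^ 2 + c₀⁻¹) * s⁻¹ * (1 + w)) := by
        rw [abs_mul]
        gcongr
        · exact hd.trans (by gcongr; exact abs_rpow_add_rpow_half_le hk hs hα0 hα1 z)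
        · exact abs_sq_div_sub_inv_le hk hs hc₀ hv z
    _ = R * (k ^ (α / 2) + 1) * (k / c₀ ^ 2 + c₀⁻¹) *
          (s ^ (α / 2) * s⁻¹ * (1 + w) ^ 2) := by ring
    _ ≤ R * (k ^ (α / 2) + 1) * (k / c₀ ^ 2 + c₀⁻¹) *
          (timeWeight (α / 2) 1 s * (2 * Real.exp w)) := by
        gcongr
        · exact timeWeight_nonneg _ _ _
        · exact one_add_sq_le_two_mul_exp hw
    _ = _ := by ring

lemma abs_mul_neg_div_le {B : ℝ} (hR : 0 ≤ R) (hk : 0 < k) (hs : 0 < s) (hc₀ : 0 < c₀)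
    (hα0 : 0 ≤ α) (hα1 : α ≤ 1) (hv : c₀ * s ≤ v) (hB : |B| ≤ R) :
    |B * -(z / v)| ≤ R * (k ^ (1 / 2 : ℝ) / c₀) *
      (timeWeight (α / 2) 1 s * Real.exp (z ^ 2 / (k * s))) := by
  have hweight : s ^ (-(1 / 2) : ℝ) ≤ timeWeight (α / 2) 1 s :=
    rpow_le_timeWeight hs (by linarith) (by linarith)
  have hexp : 1 + z ^ 2 / (k * s) ≤ Real.exp (z ^ 2 / (k * s)) := by
    linarith [Real.add_one_le_exp (z ^ 2 / (k * s))]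
  have hweight0 := timeWeight_nonneg (α / 2) 1 s
  calc |B * -(z / v)|
      ≤ R * (k ^ (1 / 2 : ℝ) / c₀ * s ^ (-(1 / 2) : ℝ) * (1 + z ^ 2 / (k * s))) := by
        rw [abs_mul, abs_neg]
        gcongr
        exact abs_div_le hk hs hc₀ hv z
    _ = R * (k ^ (1 / 2 : ℝ) / c₀) * (s ^ (-(1 / 2) : ℝ) * (1 + z ^ 2 / (k * s))) := by ring
    _ ≤ _ := by gcongr

lemma one_le_timeWeight_mul_exp (hs : 0 < s) (hk : 0 < k) (hα0 : 0 ≤ α) (hα1 : α ≤ 2) (z : ℝ) :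
    1 ≤ timeWeight (α / 2) 1 s * Real.exp (z ^ 2 / (k * s)) := by
  have hweight : 1 ≤ timeWeight (α / 2) 1 s := by
    simpa only [Real.rpow_zero] using
      rpow_le_timeWeight (γ := 0) hs (by linarith : α / 2 - 1 ≤ 0) (by linarith)
  exact one_le_mul_of_one_le_of_one_le hweight (Real.one_le_exp (by positivity))

lemma exists_abs_parametrixFactor_le (hR : 0 ≤ R) (hk : 0 < k) (hc₀ : 0 < c₀) (hα0 : 0 ≤ α)
    (hα1 : α ≤ 1) :
    ∃ K, 0 ≤ K ∧ ∀ s v z d B C : ℝ, 0 < s → c₀ * s ≤ v →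
      |d| ≤ R * (|z| ^ α + s ^ (α / 2)) → |B| ≤ R → |C| ≤ R →
        |parametrixFactor d B C v z| ≤
          K * (timeWeight (α / 2) 1 s * Real.exp (z ^ 2 / (k * s))) := by
  refine ⟨R * (k ^ (α / 2) + 1) * (k / c₀ ^ 2 + c₀⁻¹) * 2 + R * (k ^ (1 / 2 : ℝ) / c₀) + R,
    by positivity, fun s v z d B C hs hv hd hB hC => ?_⟩
  have second_order := abs_mul_sq_div_sub_inv_le hR hk hs hc₀ hα0 (by linarith) hv hd
  have first_order := abs_mul_neg_div_le (z := z) hR hk hs hc₀ hα0 hα1 hv hB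
  have zeroth_order := hC.trans <|
    le_mul_of_one_le_right hR (one_le_timeWeight_mul_exp hs hk hα0 (by linarith) z)
  rw [add_mul, add_mul]
  exact (abs_add_three _ _ _).trans (add_le_add_three second_order first_order zeroth_order)

end Bounds

/-! ### Admissible coefficients -/

section Holder

/-- The seminorm bound of `C^{α,α/2}` over `ℝ × I`: `u` is Hölder continuous with constant `C`,
exponent `α` in space and `α / 2` in time. -/
def ParabolicHolderOn (I : Set ℝ) (α C : ℝ) (u : ℝ → ℝ → ℝ) : Prop :=
  ∀ x, ∀ t ∈ I, ∀ x', ∀ t' ∈ I, |u x t - u x' t'| ≤ C * (|x - x'| ^ α + |t - t'| ^ (α / 2))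

lemma ParabolicHolderOn.continuous {I : Set ℝ} {α C : ℝ} {u : ℝ → ℝ → ℝ}
    (hu : ParabolicHolderOn I α C u) (hα : 0 < α) : Continuous fun z : ℝ × I => u z.1 z.2 := by
  refine continuous_iff_continuousAt.2 fun z₀ => tendsto_iff_dist_tendsto_zero.2 <|
    squeeze_zero (fun _ => dist_nonneg) (fun z => hu z.1 z.2 z.2.2 z₀.1 z₀.2 z₀.2.2) ?_
  have hmodulus : Continuous fun z : ℝ × I =>
      C * (|z.1 - z₀.1| ^ α + |(z.2 : ℝ) - z₀.2| ^ (α / 2)) := by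
    have := hα.le
    have := (half_pos hα).le
    fun_prop (disch := assumption)
  simpa only [sub_self, abs_zero, Real.zero_rpow hα.ne', Real.zero_rpow (half_pos hα).ne',
    add_zero, mul_zero] using hmodulus.tendsto z₀

/-- Coefficients of a uniformly parabolic operator over `ℝ × I` to which the parametrix bounds
apply uniformly: only the leading coefficient has to be Hölder continuous. -/
structure AdmissibleCoeff (I : Set ℝ) (R lam α : ℝ) (a b c : ℝ → ℝ → ℝ) : Prop where
  le_a : ∀ x, ∀ t ∈ I, lam ≤ a x t
  a_le : ∀ x, ∀ t ∈ I, a x t ≤ R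
  holder_a : ParabolicHolderOn I α R a
  abs_b_le : ∀ x, ∀ t ∈ I, |b x t| ≤ R
  abs_c_le : ∀ x, ∀ t ∈ I, |c x t| ≤ R
  measurable_b : Measurable fun z : ℝ × I => b z.1 z.2
  measurable_c : Measurable fun z : ℝ × I => c z.1 z.2

lemma measurable_of_prod_univ {u : ℝ → ℝ → ℝ}
    (hu : Measurable fun z : ℝ × (univ : Set ℝ) => u z.1 z.2) :
    Measurable fun z : ℝ × ℝ => u z.1 z.2 :=
  hu.comp (measurable_fst.prodMk (measurable_snd.subtype_mk (h := fun _ => mem_univ _)))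

lemma AdmissibleCoeff.measurable_a {R lam α : ℝ} {a b c : ℝ → ℝ → ℝ}
    (h : AdmissibleCoeff univ R lam α a b c) (hα : 0 < α) :
    Measurable fun z : ℝ × ℝ => a z.1 z.2 :=
  measurable_of_prod_univ (h.holder_a.continuous hα).measurable

lemma admissibleCoeff_of_memB {T R lam α : ℝ} {a b c : ℝ → ℝ → ℝ} (hα : 0 < α)
    (h : memB T R lam α a b c) : AdmissibleCoeff (Icc 0 T) R lam α a b c := by
  have of_inC {u : ℝ → ℝ → ℝ}
      (hu : ∃ C₁ C₂ : ℝ, 0 ≤ C₁ ∧ 0 ≤ C₂ ∧ C₁ + C₂ < R ∧ inC T α C₁ C₂ u) :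
      (∀ x, ∀ t ∈ Icc 0 T, |u x t| ≤ R) ∧ ParabolicHolderOn (Icc 0 T) α R u := by
    obtain ⟨C₁, C₂, hC₁, hC₂, hR, hbound, hholder⟩ := hu
    refine ⟨fun x t ht => (hbound x t ht.1 ht.2).trans (by linarith), fun x t ht x' t' ht' =>
      (hholder x t x' t' ht.1 ht.2 ht'.1 ht'.2).trans ?_⟩
    gcongr
    linarith
  obtain ⟨hlam, ha, hb, hc⟩ := h
  exact
    { le_a := fun x t ht => hlam x t ht.1 ht.2
      a_le := fun x t ht => (le_abs_self _).trans ((of_inC ha).1 x t ht)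
      holder_a := (of_inC ha).2
      abs_b_le := (of_inC hb).1
      abs_c_le := (of_inC hc).1
      measurable_b := ((of_inC hb).2.continuous hα).measurable
      measurable_c := ((of_inC hc).2.continuous hα).measurable }

end Holder

section KernelBounds

variable {R lam α : ℝ} {a b c : ℝ → ℝ → ℝ} {x t ξ τ : ℝ}

lemma Zf_le_mul_exp_mul_gaussianPDFReal (hlam : 0 < lam) (hla : lam ≤ a ξ τ) (haR : a ξ τ ≤ R)
    (h : τ < t) (x : ℝ) :
    Zf a x t ξ τ ≤ √(2 * R / lam) * Real.exp (-((x - ξ) ^ 2 / (8 * R * (t - τ)))) *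
      gaussianPDFReal ξ (4 * R * (t - τ)).toNNReal x := by
  have ha : 0 < a ξ τ := hlam.trans_le hla
  have hR : 0 < R := ha.trans_le haR
  have hs : 0 < t - τ := sub_pos.2 h
  have hV : ((4 * R * (t - τ)).toNNReal : ℝ) = 4 * R * (t - τ) :=
    Real.coe_toNNReal _ (by positivity)
  have hv := coe_frozenVariance ha.le h.le
  have hvV : 2 * frozenVariance a t ξ τ ≤ (4 * R * (t - τ)).toNNReal := by
    rw [← NNReal.coe_le_coe, NNReal.coe_mul, hV, hv, NNReal.coe_ofNat]
    nlinarith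
  have hratio : 4 * R * (t - τ) / (2 * a ξ τ * (t - τ)) ≤ 2 * R / lam := by
    rw [mul_div_mul_right _ _ hs.ne', show 4 * R = 2 * (2 * R) by ring,
      mul_div_mul_left _ _ two_ne_zero]
    gcongr
  rw [Zf_eq_gaussianPDFReal ha.le]
  refine (gaussianPDFReal_le_mul_exp_mul (frozenVariance_pos ha h).ne' hvV ξ x).trans ?_
  rw [hV, hv, show 2 * (4 * R * (t - τ)) = 8 * R * (t - τ) by ring]
  gcongr
  exact gaussianPDFReal_nonneg _ _ _

/-- The surplus Gaussian decay of `Zf` over the wider Gaussian of the majorant absorbs the growth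
of `P`. -/
lemma abs_mul_Zf_le_majorant {β M P : ℝ} (hlam : 0 < lam) (hla : lam ≤ a ξ τ) (haR : a ξ τ ≤ R)
    (h : τ < t)
    (hP : |P| ≤ M * (timeWeight β 1 (t - τ) * Real.exp ((x - ξ) ^ 2 / (8 * R * (t - τ))))) :
    |P * Zf a x t ξ τ| ≤ M * √(2 * R / lam) * majorant β 1 (4 * R) x t ξ τ := by
  have hZ0 : 0 ≤ Zf a x t ξ τ := by
    rw [Zf_eq_gaussianPDFReal (hlam.le.trans hla)]
    exact gaussianPDFReal_nonneg _ _ _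
  set e := (x - ξ) ^ 2 / (8 * R * (t - τ))
  calc |P * Zf a x t ξ τ|
      ≤ M * (timeWeight β 1 (t - τ) * Real.exp e) * (√(2 * R / lam) * Real.exp (-e) *
          gaussianPDFReal ξ (4 * R * (t - τ)).toNNReal x) := by
        rw [abs_mul, abs_of_nonneg hZ0]
        exact mul_le_mul hP (Zf_le_mul_exp_mul_gaussianPDFReal hlam hla haR h x) hZ0
          ((abs_nonneg _).trans hP)
    _ = M * √(2 * R / lam) * majorant β 1 (4 * R) x t ξ τ * (Real.exp e * Real.exp (-e)) := by
        rw [majorant]; ring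
    _ = _ := by rw [← Real.exp_add, add_neg_cancel, Real.exp_zero, mul_one]

lemma AdmissibleCoeff.isVolterraKernel_Zf (h : AdmissibleCoeff univ R lam α a b c) (hlam : 0 < lam)
    (hα : 0 < α) (hα2 : α ≤ 2) :
    IsVolterraKernel (α / 2) 1 (4 * R) √(2 * R / lam) (Zf a) where
  const_nonneg := Real.sqrt_nonneg _
  measurable := measurable_Zf (h.measurable_a hα)
  abs_le x t ξ τ := by
    have hla := h.le_a ξ τ (mem_univ τ)
    have haR := h.a_le ξ τ (mem_univ τ)
    rcases le_or_gt t τ with htτ | htτ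
    · rw [Zf_of_le (hlam.le.trans hla) htτ, majorant_eq_zero_of_le htτ, abs_zero, mul_zero]
    have hR : 0 < R := hlam.trans_le (hla.trans haR)
    have hone : |(1 : ℝ)| ≤ 1 * (timeWeight (α / 2) 1 (t - τ) *
        Real.exp ((x - ξ) ^ 2 / (8 * R * (t - τ)))) := by
      rw [abs_one, one_mul]
      exact one_le_timeWeight_mul_exp (sub_pos.2 htτ) (by positivity) hα.le hα2 _
    simpa only [one_mul] using abs_mul_Zf_le_majorant hlam hla haR htτ hone

lemma exists_isVolterraKernel_LZ1 (hR : 0 < R) (hlam : 0 < lam) (hα : 0 < α) (hα1 : α ≤ 1) :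
    ∃ K, ∀ a b c, AdmissibleCoeff univ R lam α a b c →
      IsVolterraKernel (α / 2) 1 (4 * R) K (LZ1 a b c) := by
  obtain ⟨K, hK, hfactor⟩ := exists_abs_parametrixFactor_le hR.le (k := 8 * R) (c₀ := 2 * lam)
    (by positivity) (by positivity) hα.le hα1
  refine ⟨K * √(2 * R / lam), fun a b c h => ?_⟩
  have ha0 (x t : ℝ) : 0 ≤ a x t := hlam.le.trans (h.le_a x t (mem_univ t))
  refine ⟨by positivity, measurable_LZ1 (h.measurable_a hα) (measurable_of_prod_univ h.measurable_b)
    (measurable_of_prod_univ h.measurable_c) ha0, fun x t ξ τ => ?_⟩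
  rw [LZ1_eq_parametrixFactor_mul (ha0 ξ τ)]
  rcases le_or_gt t τ with htτ | htτ
  · rw [Zf_of_le (ha0 ξ τ) htτ, majorant_eq_zero_of_le htτ, mul_zero, mul_zero, abs_zero]
  have hs : 0 < t - τ := sub_pos.2 htτ
  refine abs_mul_Zf_le_majorant hlam (h.le_a ξ τ (mem_univ τ)) (h.a_le ξ τ (mem_univ τ)) htτ <|
    hfactor _ _ _ _ _ _ hs ?_ ?_ (h.abs_b_le x t (mem_univ t)) (h.abs_c_le x t (mem_univ t))
  · rw [coe_frozenVariance (ha0 ξ τ) htτ.le]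
    gcongr
    exact h.le_a ξ τ (mem_univ τ)
  · rw [abs_sub_comm, ← abs_of_pos hs]
    exact h.holder_a x t (mem_univ t) ξ τ (mem_univ τ)

end KernelBounds

/-! ### The fundamental solution -/

section Fundamental

variable {a b c a' b' c' : ℝ → ℝ → ℝ}

lemma LZm_eq_iteratedKernel (a b c : ℝ → ℝ → ℝ) (m : ℕ) :
    LZm a b c m = iteratedKernel (LZ1 a b c) m := by
  induction m with
  | zero => rfl
  | succ m ih => rw [LZm, ih]; rfl

lemma GammaP_eq_add_stConv (a b c : ℝ → ℝ → ℝ) (x t ξ τ : ℝ) :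
    GammaP a b c x t ξ τ =
      Zf a x t ξ τ + stConv (Zf a) (resolventKernel (LZ1 a b c)) x t ξ τ := by
  simp only [GammaP, phiP, LZm_eq_iteratedKernel, stConv, resolventKernel]

section TimeLocality

variable {I : Set ℝ}

/-- Equality of two kernels as long as both times lie in `I`. -/
def TimeEqOn (I : Set ℝ) (A A' : SpaceTimeKernel) : Prop :=
  ∀ x, ∀ t ∈ I, ∀ ξ, ∀ τ ∈ I, A x t ξ τ = A' x t ξ τ

lemma TimeEqOn.stConv [I.OrdConnected] {A A' F F' : SpaceTimeKernel} (hA : TimeEqOn I A A')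
    (hF : TimeEqOn I F F') : TimeEqOn I (stConv A F) (stConv A' F') :=
  fun x t ht ξ τ hτ => intervalIntegral.integral_congr fun σ hσ =>
    have hσI : σ ∈ I := OrdConnected.uIcc_subset ‹_› hτ ht hσ
    integral_congr_ae <| Eventually.of_forall fun y =>
      congrArg₂ (· * ·) (hA x t ht y σ hσI) (hF y σ hσI ξ τ hτ)

lemma TimeEqOn.iteratedKernel [I.OrdConnected] {L L' : SpaceTimeKernel} (hL : TimeEqOn I L L') :
    ∀ m, TimeEqOn I (iteratedKernel L m) (iteratedKernel L' m)
  | 0 => hL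
  | m + 1 => hL.stConv (hL.iteratedKernel m)

lemma TimeEqOn.resolventKernel [I.OrdConnected] {L L' : SpaceTimeKernel} (hL : TimeEqOn I L L') :
    TimeEqOn I (resolventKernel L) (resolventKernel L') := fun x t ht ξ τ hτ =>
  tsum_congr fun m => congrArg _ (hL.iteratedKernel m x t ht ξ τ hτ)

lemma timeEqOn_Zf (ha : ∀ x, ∀ t ∈ I, a x t = a' x t) : TimeEqOn I (Zf a) (Zf a') :=
  fun x t _ ξ τ hτ => by rw [Zf, ha ξ τ hτ, Zf]

lemma timeEqOn_LZ1 (ha : ∀ x, ∀ t ∈ I, a x t = a' x t) (hb : ∀ x, ∀ t ∈ I, b x t = b' x t)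
    (hc : ∀ x, ∀ t ∈ I, c x t = c' x t) : TimeEqOn I (LZ1 a b c) (LZ1 a' b' c') :=
  fun x t ht ξ τ hτ => by
    have hZ (y : ℝ) : Zf a y t ξ τ = Zf a' y t ξ τ := timeEqOn_Zf ha y t ht ξ τ hτ
    simp only [LZ1, hZ, ha x t ht, ha ξ τ hτ, hb x t ht, hc x t ht]

lemma timeEqOn_GammaP [I.OrdConnected] (ha : ∀ x, ∀ t ∈ I, a x t = a' x t)
    (hb : ∀ x, ∀ t ∈ I, b x t = b' x t) (hc : ∀ x, ∀ t ∈ I, c x t = c' x t) :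
    TimeEqOn I (GammaP a b c) (GammaP a' b' c') := fun x t ht ξ τ hτ => by
  have hφ := (timeEqOn_LZ1 ha hb hc).resolventKernel
  rw [GammaP_eq_add_stConv, GammaP_eq_add_stConv, timeEqOn_Zf ha x t ht ξ τ hτ,
    (timeEqOn_Zf ha).stConv hφ x t ht ξ τ hτ]

end TimeLocality

section TimeExtend

variable {S T : ℝ} {u : ℝ → ℝ → ℝ}

/-- The function that agrees with `u` on `ℝ × [S, T]` and is constant in time on either side of
it. -/
noncomputable def timeExtend (h : S ≤ T) (u : ℝ → ℝ → ℝ) : ℝ → ℝ → ℝ := fun x t =>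
  u x (projIcc S T h t)

lemma timeExtend_of_mem (h : S ≤ T) (u : ℝ → ℝ → ℝ) (x : ℝ) {t : ℝ} (ht : t ∈ Icc S T) :
    timeExtend h u x t = u x t := by
  rw [timeExtend, projIcc_of_mem h ht]

lemma measurable_timeExtend (h : S ≤ T)
    (hu : Measurable fun z : ℝ × Icc S T => u z.1 z.2) :
    Measurable fun z : ℝ × (univ : Set ℝ) => timeExtend h u z.1 z.2 :=
  hu.comp <| measurable_fst.prodMk <|
    ((continuous_projIcc (h := h)).measurable.comp measurable_subtype_coe).comp measurable_snd

lemma ParabolicHolderOn.timeExtend {α C : ℝ} (hu : ParabolicHolderOn (Icc S T) α C u)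
    (h : S ≤ T) (hC : 0 ≤ C) (hα : 0 ≤ α) : ParabolicHolderOn univ α C (timeExtend h u) := by
  intro x t _ x' t' _
  refine (hu x _ (projIcc S T h t).2 x' _ (projIcc S T h t').2).trans ?_
  gcongr C * (_ + ?_ ^ _)
  exact abs_projIcc_sub_projIcc h

lemma AdmissibleCoeff.timeExtend {R lam α : ℝ} {a b c : ℝ → ℝ → ℝ}
    (hcoeff : AdmissibleCoeff (Icc S T) R lam α a b c) (h : S ≤ T) (hR : 0 ≤ R) (hα : 0 ≤ α) :
    AdmissibleCoeff univ R lam α (timeExtend h a) (timeExtend h b) (timeExtend h c) where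
  le_a x t _ := hcoeff.le_a x _ (projIcc S T h t).2
  a_le x t _ := hcoeff.a_le x _ (projIcc S T h t).2
  holder_a := hcoeff.holder_a.timeExtend h hR hα
  abs_b_le x t _ := hcoeff.abs_b_le x _ (projIcc S T h t).2
  abs_c_le x t _ := hcoeff.abs_c_le x _ (projIcc S T h t).2
  measurable_b := measurable_timeExtend h hcoeff.measurable_b
  measurable_c := measurable_timeExtend h hcoeff.measurable_c

lemma timeEqOn_GammaP_timeExtend (h : S ≤ T) (a b c : ℝ → ℝ → ℝ) :
    TimeEqOn (Icc S T) (GammaP (timeExtend h a) (timeExtend h b) (timeExtend h c))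
      (GammaP a b c) :=
  timeEqOn_GammaP (fun x _ => timeExtend_of_mem h a x) (fun x _ => timeExtend_of_mem h b x)
    (fun x _ => timeExtend_of_mem h c x)

end TimeExtend

lemma tendsto_GammaP_of_admissibleCoeff_univ {ι : Type*} {l : Filter ι} [l.IsCountablyGenerated]
    {R lam α : ℝ} {aseq bseq cseq : ι → ℝ → ℝ → ℝ} (hR : 0 < R) (hlam : 0 < lam)
    (hα : 0 < α) (hα1 : α ≤ 1)
    (hseq : ∀ i, AdmissibleCoeff univ R lam α (aseq i) (bseq i) (cseq i))
    (hpos : ∀ x t, 0 < a x t)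
    (ha : ∀ x t, Tendsto (fun i => aseq i x t) l (𝓝 (a x t)))
    (hb : ∀ x t, Tendsto (fun i => bseq i x t) l (𝓝 (b x t)))
    (hc : ∀ x t, Tendsto (fun i => cseq i x t) l (𝓝 (c x t))) (x t ξ τ : ℝ) :
    Tendsto (fun i => GammaP (aseq i) (bseq i) (cseq i) x t ξ τ) l
      (𝓝 (GammaP a b c x t ξ τ)) := by
  obtain ⟨K, hL⟩ := exists_isVolterraKernel_LZ1 hR hlam hα hα1
  have hnonneg (ξ τ : ℝ) (i : ι) : 0 ≤ aseq i ξ τ :=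
    hlam.le.trans ((hseq i).le_a ξ τ (mem_univ τ))
  simp only [GammaP_eq_add_stConv]
  exact tendsto_add_stConv_resolventKernel (by positivity) (half_pos hα) (by linarith)
    (fun i => ((hseq i).isVolterraKernel_Zf hlam hα (by linarith)).mono le_rfl (le_max_left _ K))
    (fun i => (hL _ _ _ (hseq i)).mono le_rfl (le_max_right _ _))
    (fun x t ξ τ => tendsto_Zf (hnonneg ξ τ) (hpos ξ τ) (ha ξ τ) x t)
    (fun x t ξ τ => tendsto_LZ1 (hnonneg ξ τ) (hpos ξ τ) (ha x t) (ha ξ τ) (hb x t) (hc x t))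
    x t ξ τ

end Fundamental

end Parametrix

open Parametrix Set in
theorem Gamma_pointwise_convergence_general {ι : Type*} {l : Filter ι} [l.IsCountablyGenerated]
    {S T R lam α : ℝ} (hlam : 0 < lam) (hα : 0 < α) (hα1 : α ≤ 1)
    {aseq bseq cseq : ι → ℝ → ℝ → ℝ} {a b c : ℝ → ℝ → ℝ}
    (hseq : ∀ i, AdmissibleCoeff (Icc S T) R lam α (aseq i) (bseq i) (cseq i))
    (ha : ∀ x, ∀ t ∈ Icc S T, Tendsto (fun i => aseq i x t) l (nhds (a x t)))
    (hb : ∀ x, ∀ t ∈ Icc S T, Tendsto (fun i => bseq i x t) l (nhds (b x t)))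
    (hc : ∀ x, ∀ t ∈ Icc S T, Tendsto (fun i => cseq i x t) l (nhds (c x t)))
    (x ξ : ℝ) : ∀ t ∈ Icc S T, ∀ τ ∈ Icc S T, τ < t →
      Tendsto (fun i => GammaP (aseq i) (bseq i) (cseq i) x t ξ τ) l
        (nhds (GammaP a b c x t ξ τ)) := by
  intro t ht τ hτ _
  rcases l.eq_or_neBot with rfl | _
  · exact tendsto_bot
  have hST : S ≤ T := ht.1.trans ht.2
  have le_limit (y : ℝ) {s : ℝ} (hs : s ∈ Icc S T) : lam ≤ a y s :=
    ge_of_tendsto' (ha y s hs) fun i => (hseq i).le_a y s hs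
  have limit_le : a ξ τ ≤ R := le_of_tendsto' (ha ξ τ hτ) fun i => (hseq i).a_le ξ τ hτ
  have hR : 0 < R := hlam.trans_le ((le_limit ξ hτ).trans limit_le)
  have projIcc_mem (s : ℝ) : (projIcc S T hST s : ℝ) ∈ Icc S T := (projIcc S T hST s).2
  have hext : Tendsto (fun i => GammaP (timeExtend hST (aseq i)) (timeExtend hST (bseq i))
      (timeExtend hST (cseq i)) x t ξ τ) l
      (nhds (GammaP (timeExtend hST a) (timeExtend hST b) (timeExtend hST c) x t ξ τ)) :=
    tendsto_GammaP_of_admissibleCoeff_univ hR hlam hα hα1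
      (fun i => (hseq i).timeExtend hST hR.le hα.le)
      (fun y s => hlam.trans_le (le_limit y (projIcc_mem s)))
      (fun y s => ha y _ (projIcc_mem s)) (fun y s => hb y _ (projIcc_mem s))
      (fun y s => hc y _ (projIcc_mem s)) x t ξ τ
  simpa only [timeEqOn_GammaP_timeExtend hST _ _ _ x t ht ξ τ hτ] using hext

/-- Lemma 5: pointwise convergence of the fundamental solutions under
pointwise convergence of the coefficients. -/
theorem Gamma_pointwise_convergence
    (T R lam α : ℝ) (hT : 0 < T) (hR : 0 < R) (hlam : 0 < lam)
    (hα : 0 < α) (hα1 : α ≤ 1) (hlR : lam < R)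
    (aseq bseq cseq : ℕ → ℝ → ℝ → ℝ) (a b c : ℝ → ℝ → ℝ)
    (hseq : ∀ n, memB T R lam α (aseq n) (bseq n) (cseq n))
    (hv : memB T R lam α a b c)
    (hconv : ∀ x t, 0 ≤ t → t ≤ T →
      Tendsto (fun n => aseq n x t) atTop (nhds (a x t)) ∧
      Tendsto (fun n => bseq n x t) atTop (nhds (b x t)) ∧
      Tendsto (fun n => cseq n x t) atTop (nhds (c x t))) :
    ∀ x t ξ τ : ℝ, 0 ≤ τ → τ < t → 0 ≤ t → t ≤ T → τ ≤ T →
      Tendsto (fun n => GammaP (aseq n) (bseq n) (cseq n) x t ξ τ) atTop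
        (nhds (GammaP a b c x t ξ τ)) := by
  intro x t ξ τ hτ hτt ht htT hτT
  exact Gamma_pointwise_convergence_general hlam hα hα1
    (fun n => Parametrix.admissibleCoeff_of_memB hα (hseq n))
    (fun y s hs => (hconv y s hs.1 hs.2).1) (fun y s hs => (hconv y s hs.1 hs.2).2.1)
    (fun y s hs => (hconv y s hs.1 hs.2).2.2) x ξ t ⟨ht, htT⟩ τ ⟨hτ, hτT⟩ hτt
end
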